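/- Let 0 < θ_1 < π and let f : ℝ → ℝ be the even, 2π-periodic function equal to +1 on [0, θ_1) and −1 on (θ_1, π], with Fourier coefficients f_n = (1/2π)∫_0^{2π} f(θ)e^{−inθ}dθ. Then as N → ∞, det (f_{j−k})_{j,k=0}^{N−1} = (−1)^N · N^{−1/2} · 2^{1/6} e^{6ζ′(−1)} · (2 sin θ_1)^{−1/2} · 2cos(N θ_1) + o(N^{−1/2}). (This is the σ^z-string expectation of the XX model with Fermi momentum θ_1.) -/

import Mathlib

/-!
The `σ^z`-string expectation of the XX model with Fermi momentum `θ_1`: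
`det(f_{j−k}) = (−1)^N N^{−1/2} 2^{1/6} e^{6ζ′(−1)} (2 sin θ_1)^{−1/2} · 2cos(Nθ_1)
  + o(N^{−1/2})`.
-/

noncomputable section

/-- The `n`-th Fourier coefficient `f_n = (1/2π) ∫_0^{2π} f(θ) e^{−inθ} dθ`. -/
def fourierCoef (f : ℝ → ℝ) (n : ℤ) : ℂ :=
  (1 / (2 * Real.pi) : ℂ) *
    ∫ t in (0 : ℝ)..(2 * Real.pi), (f t : ℂ) * Complex.exp (-Complex.I * (n : ℂ) * (t : ℂ))

/-!
Multiplying the symbol by `e^{iθ}` turns its Toeplitz matrix into the matrix `S` with entries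
`c(j - k - 1)`, whose determinants `E n` do not oscillate to leading order. The kernel
`e^{i(a - b - 1)θ}` has rank one; its real part is the derivative of `S` in the angle of the jump
and its imaginary part is the displacement of `S`. Hence the entries of `S⁻¹` at the boundary and
the solutions of `S x = v`, `y S = v` with `v k = e^{ikθ}` satisfy Christoffel–Darboux identities
and a closed system of differential equations in the angle.

At the angle `π / 2` the matrix splits, along the parity of the indices, into Cauchy matrices, and
all quantities are explicit Wallis products. The differential equations carry the information to
any angle in `[π / 2, π)`: the small parameter of the system stays `O(1 / n)` by a continuation
argument, and the remaining terms either are integrable or oscillate like `e^{-2inθ}` and are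
averaged out by integration by parts. Reflection `θ ↦ π - θ` gives the remaining angles. The
original determinant is recovered as `(-1)ⁿ` times a corner entry of `S⁻¹` times `E (n + 1)`; its
oscillation `cos (n θ)` comes from the phase of the boundary values.

The constant is the regularized value of an alternating sum of `(-1)ⁿ (n + 1) log (n + 1)`. This is
the derivative at `-1` of the Dirichlet eta function, continued by Euler's transformation of its
series, and is therefore expressed by `ζ'(-1)`.
-/

namespace StepToeplitz

open Complex ComplexConjugate Filter Matrix Topology
open scoped Real

section MatrixCalculus

variable {ι : Type*} [Fintype ι] [DecidableEq ι] {𝕜 : Type*} [NontriviallyNormedField 𝕜]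

lemma trace_adjugate_mul {R : Type*} [CommRing R] (A B : Matrix ι ι R) :
    (A.adjugate * B).trace = ∑ i, (A.updateCol i (B.col i)).det := by
  refine Finset.sum_congr rfl fun i _ => ?_
  rw [← cramer_apply, cramer_eq_adjugate_mulVec]
  rfl

lemma hasDerivAt_matrix_det {M : 𝕜 → Matrix ι ι 𝕜} {M' : Matrix ι ι 𝕜} {x : 𝕜}
    (hM : ∀ j k, HasDerivAt (fun t => M t j k) (M' j k) x) :
    HasDerivAt (fun t => (M t).det) ((M x).adjugate * M').trace x := by
  have leibniz : HasDerivAt (fun t => (M t).det) (∑ σ : Equiv.Perm ι, ((σ.sign : ℤ) : 𝕜) *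
      ∑ i, (∏ l ∈ Finset.univ.erase i, M x (σ l) l) * M' (σ i) i) x := by
    simp only [det_apply']
    refine HasDerivAt.fun_sum fun σ _ => HasDerivAt.const_mul _ ?_
    simpa [smul_eq_mul] using
      HasDerivAt.fun_finsetProd (u := Finset.univ) fun i _ => hM (σ i) i
  refine leibniz.congr_deriv ?_
  simp only [trace_adjugate_mul, det_apply', Finset.mul_sum]
  rw [Finset.sum_comm]
  refine Finset.sum_congr rfl fun i _ => Finset.sum_congr rfl fun σ _ => ?_
  rw [← Finset.prod_erase_mul _ _ (Finset.mem_univ i), updateCol_self]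
  congr 2
  exact Finset.prod_congr rfl fun l hl => by rw [updateCol_ne (Finset.ne_of_mem_erase hl)]

attribute [local instance] Matrix.linftyOpNormedRing Matrix.linftyOpNormedAlgebra

lemma hasDerivAt_matrix_inv [CompleteSpace 𝕜] {M : 𝕜 → Matrix ι ι 𝕜} {M' : Matrix ι ι 𝕜} {x : 𝕜}
    (hM : ∀ j k, HasDerivAt (fun t => M t j k) (M' j k) x) (hdet : (M x).det ≠ 0) (j k : ι) :
    HasDerivAt (fun t => (M t)⁻¹ j k) (-((M x)⁻¹ * M' * (M x)⁻¹) j k) x := by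
  have hM' : HasDerivAt M M' x :=
    (hasDerivAt_pi (E' := fun _ : ι => ι → 𝕜)).mpr fun a => hasDerivAt_pi.mpr fun b => hM a b
  obtain ⟨u, hu⟩ := (isUnit_iff_isUnit_det (M x)).mpr hdet.isUnit
  have : @CompleteSpace (Matrix ι ι 𝕜) PseudoMetricSpace.toUniformSpace :=
    inferInstanceAs (CompleteSpace (ι → ι → 𝕜))
  have hinv := hasFDerivAt_ringInverse (𝕜 := 𝕜) u
  rw [hu] at hinv
  have hcomp : HasDerivAt (fun t => (M t)⁻¹) (-((M x)⁻¹ * M' * (M x)⁻¹)) x := by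
    have hfun : (fun t => (M t)⁻¹) = Ring.inverse ∘ M := by
      funext t
      simp [nonsing_inv_eq_ringInverse]
    rw [hfun]
    refine (hinv.comp_hasDerivAt x hM').congr_deriv ?_
    simp [← hu, coe_units_inv]
  exact hasDerivAt_pi.mp (hasDerivAt_pi.mp hcomp j) k

end MatrixCalculus

section InverseOfMinor

variable {K : Type*} [Field K] {n : ℕ}

lemma inv_submatrix_succAbove {A : Matrix (Fin (n + 1)) (Fin (n + 1)) K} (hA : A.det ≠ 0)
    (p q : Fin (n + 1)) (hx : A⁻¹ q p ≠ 0) (j k : Fin n) :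
    (A.submatrix p.succAbove q.succAbove)⁻¹ j k =
      A⁻¹ (q.succAbove j) (p.succAbove k) -
        A⁻¹ (q.succAbove j) p * A⁻¹ q (p.succAbove k) / A⁻¹ q p := by
  suffices h : (of fun j k => A⁻¹ (q.succAbove j) (p.succAbove k) -
      A⁻¹ (q.succAbove j) p * A⁻¹ q (p.succAbove k) / A⁻¹ q p) *
        A.submatrix p.succAbove q.succAbove = 1 by
    rw [inv_eq_left_inv h, of_apply]
  have hmul (a b) : ∑ i, A⁻¹ a (p.succAbove i) * A (p.succAbove i) b =
      (1 : Matrix _ _ K) a b - A⁻¹ a p * A p b := by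
    rw [← nonsing_inv_mul A hA.isUnit, mul_apply, Fin.sum_univ_succAbove _ p]
    ring
  ext j k
  simp only [mul_apply, of_apply, submatrix_apply, sub_mul, Finset.sum_sub_distrib, hmul]
  have hcorr : ∑ i, A⁻¹ (q.succAbove j) p * A⁻¹ q (p.succAbove i) / A⁻¹ q p *
      A (p.succAbove i) (q.succAbove k) = -(A⁻¹ (q.succAbove j) p * A p (q.succAbove k)) := by
    calc _ = A⁻¹ (q.succAbove j) p / A⁻¹ q p *
          ∑ i, A⁻¹ q (p.succAbove i) * A (p.succAbove i) (q.succAbove k) := by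
            rw [Finset.mul_sum]
            exact Finset.sum_congr rfl fun i _ => by ring
      _ = _ := by
        rw [hmul, one_apply_ne (Fin.succAbove_ne q k).symm]
        field_simp
        ring
  rw [hcorr, one_apply, one_apply]
  simp

lemma sum_mul_inv_submatrix_mul {L : Type*} [Field L] [Algebra K L]
    {A : Matrix (Fin (n + 1)) (Fin (n + 1)) K} (hA : A.det ≠ 0) (p q : Fin (n + 1))
    (hx : A⁻¹ q p ≠ 0) (a b : Fin (n + 1) → L) :
    ∑ j, a (q.succAbove j) * ∑ k,
        algebraMap K L ((A.submatrix p.succAbove q.succAbove)⁻¹ j k) * b (p.succAbove k) =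
      ∑ j, a j * ∑ k, algebraMap K L (A⁻¹ j k) * b k -
        (∑ j, a j * algebraMap K L (A⁻¹ j p)) * (∑ k, algebraMap K L (A⁻¹ q k) * b k) /
          algebraMap K L (A⁻¹ q p) := by
  have hx' : algebraMap K L (A⁻¹ q p) ≠ 0 := (map_ne_zero _).mpr hx
  calc _ = ∑ j, a j * ∑ k, (algebraMap K L (A⁻¹ j k) -
        algebraMap K L (A⁻¹ j p) * algebraMap K L (A⁻¹ q k) / algebraMap K L (A⁻¹ q p)) * b k := by
        rw [Fin.sum_univ_succAbove _ q]
        simp only [Fin.sum_univ_succAbove _ p, inv_submatrix_succAbove hA p q hx]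
        simp [hx']
    _ = _ := by
        simp only [sub_mul, Finset.sum_sub_distrib, mul_sub, sub_right_inj]
        rw [Finset.sum_mul, Finset.sum_div]
        refine Finset.sum_congr rfl fun j _ => ?_
        simp only [Finset.mul_sum, Finset.sum_div]
        exact Finset.sum_congr rfl fun k _ => by ring

lemma det_submatrix_succAbove {A : Matrix (Fin (n + 1)) (Fin (n + 1)) K} (hA : A.det ≠ 0)
    (p q : Fin (n + 1)) :
    (A.submatrix p.succAbove q.succAbove).det = (-1) ^ (p + q : ℕ) * (A⁻¹ q p * A.det) := by
  have h : A.adjugate q p = A⁻¹ q p * A.det := by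
    rw [Matrix.inv_def, Ring.inverse_eq_inv', Matrix.smul_apply, smul_eq_mul]
    field_simp
  rw [← h, adjugate_fin_succ_eq_det_submatrix, ← mul_assoc, ← pow_add]
  simp [← two_mul]

end InverseOfMinor

section StepCoefficients

/-- The `m`-th Fourier coefficient of the even step symbol equal to `1` on `[0, θ)` and to `-1` on
`(θ, π]`, in closed form. -/
def stepCoeff (θ : ℝ) (m : ℤ) : ℝ :=
  if m = 0 then 2 * θ / π - 1 else 2 / (π * m) * Real.sin (m * θ)

/-- The unimodular number `e^{iθ}` at which the symbol jumps. -/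
def phase (θ : ℝ) : ℂ := exp (θ * I)

lemma phase_ne_zero (θ : ℝ) : phase θ ≠ 0 := exp_ne_zero _

lemma norm_phase (θ : ℝ) : ‖phase θ‖ = 1 := norm_exp_ofReal_mul_I θ

lemma phase_re (θ : ℝ) : (phase θ).re = Real.cos θ := exp_ofReal_mul_I_re θ

lemma phase_im (θ : ℝ) : (phase θ).im = Real.sin θ := exp_ofReal_mul_I_im θ

lemma conj_phase (θ : ℝ) : conj (phase θ) = (phase θ)⁻¹ :=
  (inv_eq_conj (norm_phase θ)).symm

lemma phase_mul_conj (θ : ℝ) : phase θ * conj (phase θ) = 1 := by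
  rw [conj_phase, mul_inv_cancel₀ (phase_ne_zero θ)]

lemma phase_pow_mul_conj (θ : ℝ) (n : ℕ) : phase θ ^ n * conj (phase θ) ^ n = 1 := by
  rw [← mul_pow, phase_mul_conj, one_pow]

lemma conj_phase_pow (θ : ℝ) (n : ℕ) : conj (phase θ) ^ n = phase θ ^ (-(n : ℤ)) := by
  rw [conj_phase, _root_.zpow_neg, zpow_natCast, inv_pow]

lemma phase_zpow (θ : ℝ) (m : ℤ) : phase θ ^ m = exp ((m * θ : ℝ) * I) := by
  rw [phase, ← exp_int_mul]
  push_cast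
  ring_nf

lemma phase_zpow_re (θ : ℝ) (m : ℤ) : (phase θ ^ m).re = Real.cos (m * θ) := by
  rw [phase_zpow, exp_ofReal_mul_I_re]

lemma phase_zpow_im (θ : ℝ) (m : ℤ) : (phase θ ^ m).im = Real.sin (m * θ) := by
  rw [phase_zpow, exp_ofReal_mul_I_im]

lemma conj_phase_mul_pow_mul_conj_pow (θ : ℝ) (a b : ℕ) :
    conj (phase θ) * phase θ ^ a * conj (phase θ ^ b) = phase θ ^ ((a : ℤ) - b - 1) := by
  rw [map_pow, conj_phase, zpow_sub₀ (phase_ne_zero θ), zpow_sub₀ (phase_ne_zero θ), zpow_natCast,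
    zpow_natCast, zpow_one, inv_pow]
  field_simp [phase_ne_zero θ]

lemma hasDerivAt_phase_zpow (m : ℤ) (θ : ℝ) :
    HasDerivAt (fun t => phase t ^ m) (I * m * phase θ ^ m) θ := by
  simp only [phase_zpow]
  have h := ((((hasDerivAt_id θ).const_mul (m : ℝ)).ofReal_comp).mul_const I).cexp
  refine h.congr_deriv ?_
  simp
  ring

lemma continuous_phase : Continuous phase := by
  unfold phase
  fun_prop

lemma mul_stepCoeff (θ : ℝ) (m : ℤ) : m * stepCoeff θ m = 2 / π * Real.sin (m * θ) := by
  unfold stepCoeff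
  split_ifs with h
  · simp [h]
  · have : (m : ℝ) ≠ 0 := mod_cast h
    field_simp

lemma hasDerivAt_stepCoeff (m : ℤ) (θ : ℝ) :
    HasDerivAt (fun t => stepCoeff t m) (2 / π * Real.cos (m * θ)) θ := by
  unfold stepCoeff
  split_ifs with h
  · simpa [h] using (((hasDerivAt_id θ).const_mul 2).div_const π).sub_const 1
  · have hm : (m : ℝ) ≠ 0 := mod_cast h
    refine ((((hasDerivAt_id θ).const_mul (m : ℝ)).sin).const_mul (2 / (π * m))).congr_deriv ?_
    simp only [id, mul_one]
    field_simp

end StepCoefficients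

section ShiftedToeplitz

/-- The Toeplitz matrix of the step symbol multiplied by `e^{iθ}`: the shift of the index gives the
symbol a winding number for which the determinant has a single Fisher–Hartwig term, hence no
oscillations. -/
def shiftedToeplitz (θ : ℝ) (N : ℕ) : Matrix (Fin N) (Fin N) ℝ :=
  of fun j k => stepCoeff θ ((j : ℤ) - k - 1)

/-- The determinant of the shifted Toeplitz matrix. -/
def shiftedDet (θ : ℝ) (N : ℕ) : ℝ := (shiftedToeplitz θ N).det

/-- The inverse of the shifted Toeplitz matrix, meaningful when `shiftedDet θ N ≠ 0`. -/
def shiftedInv (θ : ℝ) (N : ℕ) : Matrix (Fin N) (Fin N) ℝ := (shiftedToeplitz θ N)⁻¹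

/-- The solution `x` of `shiftedToeplitz θ N *ᵥ x = v`, where `v k = e^{ikθ}`. -/
def rightSol (θ : ℝ) (N : ℕ) (j : Fin N) : ℂ :=
  ∑ k : Fin N, (shiftedInv θ N j k : ℂ) * phase θ ^ (k : ℕ)

/-- The solution `y` of `y ᵥ* shiftedToeplitz θ N = v`, where `v k = e^{ikθ}`. -/
def leftSol (θ : ℝ) (N : ℕ) (k : Fin N) : ℂ :=
  ∑ j : Fin N, phase θ ^ (j : ℕ) * (shiftedInv θ N j k : ℂ)

/-- The sesquilinear pairing of `v k = e^{ikθ}` with `rightSol θ N`. -/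
def sesqForm (θ : ℝ) (N : ℕ) : ℂ := ∑ j : Fin N, phase θ ^ (j : ℕ) * conj (rightSol θ N j)

/-- The bilinear pairing of `v k = e^{ikθ}` with `rightSol θ N`. -/
def bilinForm (θ : ℝ) (N : ℕ) : ℂ := ∑ j : Fin N, phase θ ^ (j : ℕ) * rightSol θ N j

/-- The logarithmic derivative of `shiftedDet` in `θ`, up to the factor `2 / π`. -/
def logDerivDet (θ : ℝ) (N : ℕ) : ℝ := (phase θ * sesqForm θ N).re

variable {θ : ℝ} {N : ℕ}

lemma shiftedToeplitz_mul_shiftedInv (h : shiftedDet θ N ≠ 0) :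
    shiftedToeplitz θ N * shiftedInv θ N = 1 :=
  mul_nonsing_inv _ h.isUnit

lemma shiftedInv_mul_shiftedToeplitz (h : shiftedDet θ N ≠ 0) :
    shiftedInv θ N * shiftedToeplitz θ N = 1 :=
  nonsing_inv_mul _ h.isUnit

/- Both the displacement and the derivative of the shifted Toeplitz matrix are real-linear images of
the rank one kernel `e^{i(a-b-1)θ}`: its imaginary and its real part. -/
lemma shiftedInv_mul_kernel_mul_shiftedInv (φ : ℂ →ₗ[ℝ] ℝ) (θ : ℝ) (N : ℕ) (j k : Fin N) :
    (shiftedInv θ N * of (fun a b : Fin N => φ (phase θ ^ ((a : ℤ) - b - 1))) *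
        shiftedInv θ N) j k =
      φ (conj (phase θ) * rightSol θ N j * conj (leftSol θ N k)) := by
  have hsum : conj (phase θ) * rightSol θ N j * conj (leftSol θ N k) =
      ∑ b : Fin N, ∑ a : Fin N,
        (shiftedInv θ N j a * shiftedInv θ N b k) • phase θ ^ ((a : ℤ) - b - 1) := by
    simp only [rightSol, leftSol, map_sum, map_mul, conj_ofReal]
    rw [Finset.sum_comm, mul_assoc, Finset.sum_mul_sum, Finset.mul_sum]
    refine Finset.sum_congr rfl fun a _ => ?_
    rw [Finset.mul_sum]
    refine Finset.sum_congr rfl fun b _ => ?_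
    rw [← conj_phase_mul_pow_mul_conj_pow, real_smul]
    push_cast
    ring
  rw [hsum]
  simp only [map_sum, map_smul, mul_apply, of_apply, Finset.sum_mul, smul_eq_mul]
  exact Finset.sum_congr rfl fun b _ => Finset.sum_congr rfl fun a _ => by ring

lemma displacement_shiftedInv (h : shiftedDet θ N ≠ 0) (j k : Fin N) :
    ((j : ℝ) - k + 1) * shiftedInv θ N j k =
      -(2 / π) * (conj (phase θ) * rightSol θ N j * conj (leftSol θ N k)).im := by
  set Λ : Matrix (Fin N) (Fin N) ℝ := diagonal fun i => (i : ℝ)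
  set K : Matrix (Fin N) (Fin N) ℝ := of fun a b => imLm (phase θ ^ ((a : ℤ) - b - 1))
  have displacement : shiftedToeplitz θ N * Λ - Λ * shiftedToeplitz θ N =
      -shiftedToeplitz θ N - (2 / π) • K := by
    ext a b
    have hab := mul_stepCoeff θ ((a : ℤ) - b - 1)
    simp only [Λ, K, Matrix.sub_apply, mul_diagonal, diagonal_mul, Matrix.neg_apply,
      Matrix.smul_apply, of_apply, smul_eq_mul, shiftedToeplitz, imLm_coe, phase_zpow_im, ← hab]
    push_cast
    ring
  have conjugated : Λ * shiftedInv θ N - shiftedInv θ N * Λ =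
      -shiftedInv θ N - (2 / π) • (shiftedInv θ N * K * shiftedInv θ N) := by
    calc _ = shiftedInv θ N * (shiftedToeplitz θ N * Λ - Λ * shiftedToeplitz θ N) *
          shiftedInv θ N := by
          rw [Matrix.mul_sub, Matrix.sub_mul, ← Matrix.mul_assoc, shiftedInv_mul_shiftedToeplitz h,
            Matrix.one_mul, Matrix.mul_assoc, Matrix.mul_assoc Λ, shiftedToeplitz_mul_shiftedInv h,
            Matrix.mul_one]
      _ = _ := by
          rw [displacement, Matrix.mul_sub, Matrix.sub_mul, Matrix.mul_neg,
            shiftedInv_mul_shiftedToeplitz h, Matrix.neg_mul, Matrix.one_mul, Matrix.mul_smul,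
            Matrix.smul_mul]
  have entry := congrFun₂ conjugated j k
  simp only [Matrix.sub_apply, Λ, mul_diagonal, diagonal_mul, Matrix.neg_apply, Matrix.smul_apply,
    smul_eq_mul, K, shiftedInv_mul_kernel_mul_shiftedInv] at entry
  rw [imLm_coe] at entry
  linarith

lemma hasDerivAt_shiftedToeplitz (θ : ℝ) (N : ℕ) (j k : Fin N) :
    HasDerivAt (fun t => shiftedToeplitz t N j k)
      (of (fun a b : Fin N => 2 / π * reLm (phase θ ^ ((a : ℤ) - b - 1))) j k) θ := by
  simpa only [shiftedToeplitz, of_apply, reLm_coe, phase_zpow_re] using hasDerivAt_stepCoeff _ θ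

lemma hasDerivAt_shiftedInv (h : shiftedDet θ N ≠ 0) (j k : Fin N) :
    HasDerivAt (fun t => shiftedInv t N j k)
      (-(2 / π) * (conj (phase θ) * rightSol θ N j * conj (leftSol θ N k)).re) θ := by
  refine (hasDerivAt_matrix_inv (hasDerivAt_shiftedToeplitz θ N) h j k).congr_deriv ?_
  simpa [shiftedInv] using
    shiftedInv_mul_kernel_mul_shiftedInv ((2 / π) • reLm) θ N j k

/- The displacement equation and the derivative are the imaginary and real parts of this one. -/
lemma hasDerivAt_phase_zpow_mul_shiftedInv (h : shiftedDet θ N ≠ 0) (j k : Fin N) :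
    HasDerivAt (fun t => phase t ^ ((j : ℤ) - k + 1) * (shiftedInv t N j k : ℂ))
      (-(2 / π) * (phase θ ^ ((j : ℤ) - k + 1) *
        (conj (phase θ) * rightSol θ N j * conj (leftSol θ N k)))) θ := by
  refine ((hasDerivAt_phase_zpow _ θ).mul (hasDerivAt_shiftedInv h j k).ofReal_comp).congr_deriv ?_
  have him := congrArg ofReal (displacement_shiftedInv h j k)
  push_cast at him ⊢
  linear_combination (phase θ ^ ((j : ℤ) - k + 1)) * (I * him - (2 / π) *
    re_add_im (conj (phase θ) * rightSol θ N j * conj (leftSol θ N k)))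

lemma continuous_shiftedDet (N : ℕ) : Continuous fun t => shiftedDet t N :=
  continuous_iff_continuousAt.mpr fun θ =>
    (hasDerivAt_matrix_det (hasDerivAt_shiftedToeplitz θ N)).continuousAt

lemma hasDerivAt_shiftedDet (h : shiftedDet θ N ≠ 0) :
    HasDerivAt (fun t => shiftedDet t N) (2 / π * logDerivDet θ N * shiftedDet θ N) θ := by
  refine (hasDerivAt_matrix_det (hasDerivAt_shiftedToeplitz θ N)).congr_deriv ?_
  have hadj : (shiftedToeplitz θ N).adjugate = shiftedDet θ N • shiftedInv θ N := by
    rw [shiftedDet] at h ⊢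
    rw [shiftedInv, Matrix.inv_def, smul_smul, Ring.inverse_eq_inv', mul_inv_cancel₀ h, one_smul]
  have hform : phase θ * sesqForm θ N =
      ∑ i : Fin N, ∑ k : Fin N, (shiftedInv θ N i k : ℂ) * conj (phase θ ^ ((k : ℤ) - i - 1)) := by
    simp only [sesqForm, rightSol, map_sum, Finset.mul_sum, map_mul, conj_ofReal]
    refine Finset.sum_congr rfl fun i _ => Finset.sum_congr rfl fun k _ => ?_
    rw [← conj_phase_mul_pow_mul_conj_pow]
    simp only [map_mul, conj_conj, map_pow]
    ring
  rw [hadj, Matrix.smul_mul, trace_smul, smul_eq_mul, mul_comm, logDerivDet, hform]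
  congr 1
  simp only [trace, diag_apply, mul_apply, re_sum, Finset.mul_sum]
  refine Finset.sum_congr rfl fun i _ => Finset.sum_congr rfl fun k _ => ?_
  rw [re_ofReal_mul, conj_re, of_apply, reLm_coe]
  ring

end ShiftedToeplitz

section Boundary

/-- The bilinear form of `shiftedInv θ N` on sequences truncated to their first `N` terms. -/
def invForm (θ : ℝ) (N : ℕ) (a b : ℕ → ℂ) : ℂ :=
  ∑ j : Fin N, a j * ∑ k : Fin N, (shiftedInv θ N j k : ℂ) * b k

/-- The corner entry of `shiftedInv θ (n + 1)`, which is the ratio of consecutive determinants. It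
vanishes exactly when one of `shiftedDet θ n` and `shiftedDet θ (n + 1)` does. -/
def cornerInv (θ : ℝ) (n : ℕ) : ℝ := shiftedInv θ (n + 1) 0 0

/-- The lower left entry of `shiftedInv θ (n + 1)`. -/
def lowerCorner (θ : ℝ) (n : ℕ) : ℝ := shiftedInv θ (n + 1) (Fin.last n) 0

/-- The upper right entry of `shiftedInv θ (n + 1)`. -/
def upperCorner (θ : ℝ) (n : ℕ) : ℝ := shiftedInv θ (n + 1) 0 (Fin.last n)

/-- The first entry of `leftSol θ (n + 1)`. -/
def leftBoundary (θ : ℝ) (n : ℕ) : ℂ := leftSol θ (n + 1) 0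

/-- The first entry of `rightSol θ (n + 1)`. -/
def rightBoundary (θ : ℝ) (n : ℕ) : ℂ := rightSol θ (n + 1) 0

/-- The step Toeplitz determinant without shift. -/
def stepDet (θ : ℝ) (N : ℕ) : ℝ := (of fun j k : Fin N => stepCoeff θ ((j : ℤ) - k)).det

variable {θ : ℝ} {n : ℕ}

lemma shiftedDet_succ_ne_zero (hx : cornerInv θ n ≠ 0) : shiftedDet θ (n + 1) ≠ 0 := by
  intro h
  rw [shiftedDet] at h
  simp [cornerInv, shiftedInv, Matrix.inv_def, h] at hx

lemma shiftedToeplitz_submatrix_succ (θ : ℝ) (n : ℕ) :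
    (shiftedToeplitz θ (n + 1)).submatrix (Fin.succAbove 0) (Fin.succAbove 0) =
      shiftedToeplitz θ n := by
  ext j k
  simp [shiftedToeplitz]

lemma shiftedToeplitz_submatrix_castSucc (θ : ℝ) (n : ℕ) :
    (shiftedToeplitz θ (n + 1)).submatrix (Fin.last n).succAbove (Fin.last n).succAbove =
      shiftedToeplitz θ n := by
  ext j k
  simp [shiftedToeplitz]

lemma shiftedDet_eq_cornerInv_mul (h : shiftedDet θ (n + 1) ≠ 0) :
    shiftedDet θ n = cornerInv θ n * shiftedDet θ (n + 1) := by
  have hdet := det_submatrix_succAbove h 0 0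
  rw [shiftedToeplitz_submatrix_succ] at hdet
  simpa [cornerInv, shiftedInv, shiftedDet] using hdet

lemma stepDet_eq_lowerCorner_mul (h : shiftedDet θ (n + 1) ≠ 0) :
    stepDet θ n = (-1) ^ n * (lowerCorner θ n * shiftedDet θ (n + 1)) := by
  have hsub : (shiftedToeplitz θ (n + 1)).submatrix (Fin.succAbove 0) (Fin.last n).succAbove =
      of fun j k : Fin n => stepCoeff θ ((j : ℤ) - k) := by
    ext j k
    simp only [shiftedToeplitz, submatrix_apply, of_apply, Fin.succAbove_zero, Fin.val_succ,
      Fin.succAbove_last, Fin.val_castSucc]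
    congr 1
    push_cast
    ring
  have hdet := det_submatrix_succAbove h 0 (Fin.last n)
  rw [hsub] at hdet
  simpa [stepDet, lowerCorner, shiftedInv, shiftedDet] using hdet

lemma shiftedInv_rev (θ : ℝ) (N : ℕ) (j k : Fin N) :
    shiftedInv θ N j.rev k.rev = shiftedInv θ N k j := by
  have persymmetric :
      (shiftedToeplitz θ N).submatrix Fin.revPerm Fin.revPerm = (shiftedToeplitz θ N)ᵀ := by
    ext a b
    simp only [submatrix_apply, transpose_apply, shiftedToeplitz, of_apply, Fin.revPerm_apply,
      Fin.val_rev]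
    congr 1
    omega
  have hinv := inv_submatrix_equiv (shiftedToeplitz θ N) Fin.revPerm Fin.revPerm
  rw [persymmetric, ← transpose_nonsing_inv] at hinv
  exact (congrFun₂ hinv j k).symm

lemma shiftedInv_last_left (θ : ℝ) (n : ℕ) (k : Fin (n + 1)) :
    shiftedInv θ (n + 1) (Fin.last n) k = shiftedInv θ (n + 1) k.rev 0 := by
  simpa using (shiftedInv_rev θ (n + 1) k (Fin.last n)).symm

lemma shiftedInv_last_right (θ : ℝ) (n : ℕ) (k : Fin (n + 1)) :
    shiftedInv θ (n + 1) k (Fin.last n) = shiftedInv θ (n + 1) 0 k.rev := by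
  simpa using (shiftedInv_rev θ (n + 1) (Fin.last n) k).symm

lemma shiftedInv_last_last (θ : ℝ) (n : ℕ) :
    shiftedInv θ (n + 1) (Fin.last n) (Fin.last n) = cornerInv θ n := by
  simp [shiftedInv_last_left, cornerInv]

lemma invForm_castSucc (hx : cornerInv θ n ≠ 0) (a b : ℕ → ℂ) :
    invForm θ n a b = invForm θ (n + 1) a b -
      (∑ j : Fin (n + 1), a j * (shiftedInv θ (n + 1) j (Fin.last n) : ℂ)) *
        (∑ k : Fin (n + 1), (shiftedInv θ (n + 1) (Fin.last n) k : ℂ) * b k) / cornerInv θ n := by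
  rw [← shiftedInv_last_last] at hx ⊢
  have h := sum_mul_inv_submatrix_mul (L := ℂ) (shiftedDet_succ_ne_zero
    (by rwa [← shiftedInv_last_last])) (Fin.last n) (Fin.last n) hx (fun j => a j) (fun k => b k)
  rw [shiftedToeplitz_submatrix_castSucc] at h
  simpa [invForm, shiftedInv] using h

lemma invForm_succ (hx : cornerInv θ n ≠ 0) (a b : ℕ → ℂ) :
    invForm θ n (fun j => a (j + 1)) (fun k => b (k + 1)) = invForm θ (n + 1) a b -
      (∑ j : Fin (n + 1), a j * (shiftedInv θ (n + 1) j 0 : ℂ)) *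
        (∑ k : Fin (n + 1), (shiftedInv θ (n + 1) 0 k : ℂ) * b k) / cornerInv θ n := by
  have h := sum_mul_inv_submatrix_mul (L := ℂ) (shiftedDet_succ_ne_zero hx) 0 0 hx
    (fun j => a j) (fun k => b k)
  rw [shiftedToeplitz_submatrix_succ] at h
  simpa [invForm, shiftedInv, cornerInv] using h

lemma invForm_add_left (θ : ℝ) (N : ℕ) (a a' b : ℕ → ℂ) :
    invForm θ N (fun j => a j + a' j) b = invForm θ N a b + invForm θ N a' b := by
  simp only [invForm, add_mul, Finset.sum_add_distrib]

lemma invForm_mul_mul (θ : ℝ) (N : ℕ) (a b : ℕ → ℂ) (c d : ℂ) :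
    invForm θ N (fun j => c * a j) (fun k => d * b k) = c * d * invForm θ N a b := by
  simp only [invForm, Finset.mul_sum]
  exact Finset.sum_congr rfl fun j _ => Finset.sum_congr rfl fun k _ => by ring

lemma conj_rightSol (θ : ℝ) (N : ℕ) (j : Fin N) :
    conj (rightSol θ N j) = ∑ k : Fin N, (shiftedInv θ N j k : ℂ) * conj (phase θ) ^ (k : ℕ) := by
  simp [rightSol]

lemma phase_pow_rev (θ : ℝ) (k : Fin (n + 1)) :
    phase θ ^ (k.rev : ℕ) = phase θ ^ n * conj (phase θ) ^ (k : ℕ) := by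
  have hn : phase θ ^ n = phase θ ^ (k.rev : ℕ) * phase θ ^ (k : ℕ) := by
    rw [← pow_add, Fin.val_rev]
    congr 1
    omega
  rw [hn, mul_assoc, phase_pow_mul_conj, mul_one]

lemma rightSol_last (θ : ℝ) (n : ℕ) :
    rightSol θ (n + 1) (Fin.last n) = phase θ ^ n * conj (leftBoundary θ n) := by
  simp only [rightSol, leftBoundary, leftSol, map_sum, map_mul, conj_ofReal, Finset.mul_sum]
  rw [← Equiv.sum_comp Fin.revPerm]
  refine Finset.sum_congr rfl fun k _ => ?_
  rw [Fin.revPerm_apply, phase_pow_rev, shiftedInv_last_left, Fin.rev_rev, map_pow]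
  ring

lemma leftSol_last (θ : ℝ) (n : ℕ) :
    leftSol θ (n + 1) (Fin.last n) = phase θ ^ n * conj (rightBoundary θ n) := by
  simp only [leftSol, rightBoundary, rightSol, map_sum, map_mul, conj_ofReal, Finset.mul_sum]
  rw [← Equiv.sum_comp Fin.revPerm]
  refine Finset.sum_congr rfl fun k _ => ?_
  rw [Fin.revPerm_apply, phase_pow_rev, shiftedInv_last_right, Fin.rev_rev, map_pow]
  ring

lemma bilinForm_eq_sum_leftSol (θ : ℝ) (N : ℕ) :
    bilinForm θ N = ∑ k : Fin N, phase θ ^ (k : ℕ) * leftSol θ N k := by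
  simp only [bilinForm, rightSol, leftSol, Finset.mul_sum]
  rw [Finset.sum_comm]
  exact Finset.sum_congr rfl fun k _ => Finset.sum_congr rfl fun j _ => by ring

lemma bilinForm_conj (θ : ℝ) (n : ℕ) :
    phase θ ^ n * conj (bilinForm θ (n + 1)) = conj (phase θ) ^ n * bilinForm θ (n + 1) := by
  have hrev : bilinForm θ (n + 1) = ∑ j : Fin (n + 1), ∑ k : Fin (n + 1),
      phase θ ^ (j.rev : ℕ) *
        ((shiftedInv θ (n + 1) j.rev k.rev : ℂ) * phase θ ^ (k.rev : ℕ)) := by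
    simp only [bilinForm, rightSol, Finset.mul_sum]
    rw [← Equiv.sum_comp Fin.revPerm]
    exact Finset.sum_congr rfl fun j _ => (Equiv.sum_comp Fin.revPerm _).symm
  conv_rhs => rw [hrev]
  rw [bilinForm_eq_sum_leftSol]
  simp only [leftSol, map_sum, map_mul, map_pow, conj_ofReal, Finset.mul_sum]
  refine Finset.sum_congr rfl fun k _ => Finset.sum_congr rfl fun j _ => ?_
  rw [phase_pow_rev, phase_pow_rev, shiftedInv_rev]
  linear_combination -(phase θ ^ n * (conj (phase θ) ^ (k : ℕ) * (conj (phase θ) ^ (j : ℕ) *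
    (shiftedInv θ (n + 1) j k : ℂ)))) * phase_pow_mul_conj θ n

/-- The bilinear form `bilinForm θ (n + 1)` with its phase `e^{inθ}` removed, a real number. -/
def realForm (θ : ℝ) (n : ℕ) : ℝ := (conj (phase θ) ^ n * bilinForm θ (n + 1)).re

lemma bilinForm_eq_phase_pow_mul_realForm (θ : ℝ) (n : ℕ) :
    bilinForm θ (n + 1) = phase θ ^ n * (realForm θ n : ℂ) := by
  have hreal : conj (conj (phase θ) ^ n * bilinForm θ (n + 1)) =
      conj (phase θ) ^ n * bilinForm θ (n + 1) := by
    rw [map_mul, map_pow, conj_conj, bilinForm_conj]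
  rw [realForm, conj_eq_iff_re.mp hreal]
  linear_combination -bilinForm θ (n + 1) * phase_pow_mul_conj θ n

end Boundary

section ChristoffelDarboux

/-- The normalised product of the boundary values of the two solutions. -/
def bilinRatio (θ : ℝ) (n : ℕ) : ℂ :=
  conj (phase θ) ^ n * (leftBoundary θ n * rightBoundary θ n) / (cornerInv θ n : ℂ)

/-- The normalised sesquilinear product of the boundary values of the two solutions. -/
def sesqRatio (θ : ℝ) (n : ℕ) : ℂ :=
  phase θ * (leftBoundary θ n * conj (rightBoundary θ n)) / (cornerInv θ n : ℂ)

/-- The real part of `sesqRatio`, the small parameter of the asymptotic analysis. -/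
def sesqRatioRe (θ : ℝ) (n : ℕ) : ℝ := (sesqRatio θ n).re

variable {θ : ℝ} {n : ℕ}

lemma sesqRatio_im (hx : cornerInv θ n ≠ 0) : (sesqRatio θ n).im = π / 2 := by
  have h := displacement_shiftedInv (shiftedDet_succ_ne_zero hx) 0 0
  have hconj : conj (phase θ) * rightSol θ (n + 1) 0 * conj (leftSol θ (n + 1) 0) =
      conj (phase θ * (leftBoundary θ n * conj (rightBoundary θ n))) := by
    simp only [leftBoundary, rightBoundary, map_mul, conj_conj]
    ring
  rw [hconj, conj_im] at h
  simp only [Fin.val_zero, Nat.cast_zero, sub_zero, zero_add, one_mul, ← cornerInv.eq_1] at h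
  rw [sesqRatio, div_ofReal_im]
  field_simp at h ⊢
  linarith

lemma sesqRatio_eq (hx : cornerInv θ n ≠ 0) :
    sesqRatio θ n = (sesqRatioRe θ n : ℂ) + (π / 2 : ℝ) * I := by
  rw [← sesqRatio_im hx, sesqRatioRe, re_add_im]

lemma norm_bilinRatio (θ : ℝ) (n : ℕ) : ‖bilinRatio θ n‖ = ‖sesqRatio θ n‖ := by
  simp [bilinRatio, sesqRatio, norm_phase]

lemma norm_bilinRatio_sq (hx : cornerInv θ n ≠ 0) :
    ‖bilinRatio θ n‖ ^ 2 = sesqRatioRe θ n ^ 2 + (π / 2) ^ 2 := by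
  rw [norm_bilinRatio, ← normSq_eq_norm_sq, normSq_apply, sesqRatio_im hx, ← sesqRatioRe]
  ring

lemma bilinForm_mul_one_sub_phase_sq (hx : cornerInv θ n ≠ 0) :
    bilinForm θ (n + 1) * (1 - phase θ ^ 2) * (cornerInv θ n : ℂ) =
      leftBoundary θ n * rightBoundary θ n -
        phase θ ^ (2 * n + 2) * conj (leftBoundary θ n * rightBoundary θ n) := by
  have hx' : (cornerInv θ n : ℂ) ≠ 0 := mod_cast hx
  have hlast : invForm θ n (phase θ ^ ·) (phase θ ^ ·) = bilinForm θ (n + 1) -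
      leftSol θ (n + 1) (Fin.last n) * rightSol θ (n + 1) (Fin.last n) / (cornerInv θ n : ℂ) :=
    invForm_castSucc hx _ _
  have hzero : invForm θ n (fun j => phase θ ^ (j + 1)) (fun k => phase θ ^ (k + 1)) =
      bilinForm θ (n + 1) - leftBoundary θ n * rightBoundary θ n / (cornerInv θ n : ℂ) :=
    invForm_succ hx _ _
  simp only [pow_succ', invForm_mul_mul] at hzero
  rw [hlast, leftSol_last, rightSol_last] at hzero
  field_simp at hzero
  rw [map_mul]
  linear_combination -hzero

lemma realForm_mul_sin (hx : cornerInv θ n ≠ 0) :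
    realForm θ n * Real.sin θ = -(conj (phase θ) * bilinRatio θ n).im := by
  have hx' : (cornerInv θ n : ℂ) ≠ 0 := mod_cast hx
  have hCD := bilinForm_mul_one_sub_phase_sq hx
  rw [bilinForm_eq_phase_pow_mul_realForm] at hCD
  have h : (realForm θ n : ℂ) * (conj (phase θ) - phase θ) =
      conj (phase θ) * bilinRatio θ n - conj (conj (phase θ) * bilinRatio θ n) := by
    have hu := phase_pow_mul_conj θ n
    have hz := phase_mul_conj θ
    simp only [bilinRatio, map_mul, map_div₀, map_pow, conj_conj, conj_ofReal] at hCD ⊢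
    field_simp
    rw [show phase θ ^ (2 * n + 2) = phase θ ^ n * phase θ ^ n * phase θ ^ 2 by ring] at hCD
    linear_combination (conj (phase θ) ^ n * conj (phase θ)) * hCD
      - (realForm θ n : ℂ) * cornerInv θ n * (conj (phase θ) - phase θ) * hu
      + (realForm θ n : ℂ) * cornerInv θ n * phase θ * phase θ ^ n * conj (phase θ) ^ n * hz
      - phase θ * conj (phase θ) * phase θ * phase θ ^ n * conj (leftBoundary θ n) *
        conj (rightBoundary θ n) * hu
      - phase θ * phase θ ^ n * conj (leftBoundary θ n) * conj (rightBoundary θ n) * hz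
  have him := congrArg im h
  rw [im_ofReal_mul, sub_im, sub_im, conj_im, conj_im, phase_im] at him
  linarith

/-- The pairing of `leftSol` with the weight `j + 1`, that is, with the derivative in the spectral
variable: it produces the confluent Christoffel–Darboux formula. -/
def weightedLeftSol (θ : ℝ) (N : ℕ) (k : Fin N) : ℂ :=
  ∑ j : Fin N, ((j : ℕ) + 1) * phase θ ^ (j : ℕ) * (shiftedInv θ N j k : ℂ)

lemma two_div_pi_mul_im (u : ℂ) : -(2 / (π : ℂ)) * (u.im : ℂ) = I / π * (u - conj u) := by
  rw [sub_conj]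
  push_cast
  linear_combination -(2 * (u.im : ℂ)) / π * I_sq

lemma weightedLeftSol_eq {N : ℕ} (h : shiftedDet θ N ≠ 0) (k : Fin N) :
    weightedLeftSol θ N k = (k : ℕ) * leftSol θ N k + I / π *
      (conj (phase θ) * bilinForm θ N * conj (leftSol θ N k) -
        phase θ * sesqForm θ N * leftSol θ N k) := by
  have hterm (j : Fin N) : ((j : ℕ) + 1) * phase θ ^ (j : ℕ) * (shiftedInv θ N j k : ℂ) =
      (k : ℕ) * (phase θ ^ (j : ℕ) * (shiftedInv θ N j k : ℂ)) + I / π *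
        (conj (phase θ) * (phase θ ^ (j : ℕ) * rightSol θ N j) * conj (leftSol θ N k) -
          phase θ * (phase θ ^ (j : ℕ) * conj (rightSol θ N j)) * leftSol θ N k) := by
    have hdisp := congrArg ofReal (displacement_shiftedInv h j k)
    push_cast at hdisp
    rw [two_div_pi_mul_im] at hdisp
    simp only [map_mul, conj_conj] at hdisp
    linear_combination phase θ ^ (j : ℕ) * hdisp
  simp only [weightedLeftSol, hterm, Finset.sum_add_distrib, ← Finset.mul_sum,
    Finset.sum_sub_distrib, ← Finset.sum_mul]
  rfl

lemma cornerInv_mul_sesqForm (hx : cornerInv θ n ≠ 0) :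
    (cornerInv θ n : ℂ) * sesqForm θ (n + 1) =
      (weightedLeftSol θ (n + 1) (Fin.last n) + leftSol θ (n + 1) (Fin.last n)) *
        conj (rightSol θ (n + 1) (Fin.last n)) -
      weightedLeftSol θ (n + 1) 0 * conj (rightBoundary θ n) := by
  have hx' : (cornerInv θ n : ℂ) ≠ 0 := mod_cast hx
  set w : ℕ → ℂ := fun j => ((j : ℂ) + 1) * phase θ ^ j
  set u : ℕ → ℂ := fun j => phase θ ^ j
  set v : ℕ → ℂ := fun k => conj (phase θ) ^ k
  have hshift : invForm θ n (fun j => w (j + 1)) (fun k => v (k + 1)) =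
      invForm θ n w v + invForm θ n u v := by
    have hw (j : ℕ) : w (j + 1) = phase θ * (w j + u j) := by
      simp only [w, u]
      push_cast
      ring
    have hv (k : ℕ) : v (k + 1) = conj (phase θ) * v k := pow_succ' _ _
    simp only [hw, hv]
    rw [invForm_mul_mul, phase_mul_conj, one_mul, invForm_add_left]
  rw [invForm_succ hx, invForm_castSucc hx w, invForm_castSucc hx u] at hshift
  have hsesq : invForm θ (n + 1) u v = sesqForm θ (n + 1) := by
    simp only [invForm, sesqForm, conj_rightSol, u, v]
  simp only [w, u, v, ← conj_rightSol] at hshift hsesq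
  simp only [← weightedLeftSol.eq_1, ← leftSol.eq_1] at hshift
  rw [hsesq] at hshift
  simp only [← rightBoundary.eq_1] at hshift
  field_simp at hshift
  linear_combination -hshift

lemma phase_mul_sesqForm (hx : cornerInv θ n ≠ 0) :
    phase θ * sesqForm θ (n + 1) = ((n : ℂ) + 1) * sesqRatio θ n -
      ((2 / π * realForm θ n * (bilinRatio θ n).im : ℝ) : ℂ) := by
  have hx' : (cornerInv θ n : ℂ) ≠ 0 := mod_cast hx
  have hform := cornerInv_mul_sesqForm hx
  rw [weightedLeftSol_eq (shiftedDet_succ_ne_zero hx),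
    weightedLeftSol_eq (shiftedDet_succ_ne_zero hx), leftSol_last, rightSol_last,
    ← leftBoundary, bilinForm_eq_phase_pow_mul_realForm] at hform
  have him := two_div_pi_mul_im (bilinRatio θ n)
  have hu := phase_pow_mul_conj θ n
  have hz := phase_mul_conj θ
  push_cast
  suffices h : phase θ * sesqForm θ (n + 1) = ((n : ℂ) + 1) * sesqRatio θ n +
      realForm θ n * (I / π * (bilinRatio θ n - conj (bilinRatio θ n))) by
    linear_combination h - (realForm θ n : ℂ) * him
  simp only [bilinRatio, sesqRatio, map_mul, map_div₀, map_pow, conj_conj, conj_ofReal,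
    Fin.val_last, Fin.val_zero, Nat.cast_zero, zero_mul, zero_add] at hform ⊢
  generalize I / (π : ℂ) = ι at *
  field_simp
  linear_combination phase θ * hform
    + ((n + 1) * phase θ * leftBoundary θ n * conj (rightBoundary θ n)
      + ι * realForm θ n * leftBoundary θ n * rightBoundary θ n * conj (phase θ) ^ n
      - ι * phase θ ^ 2 * sesqForm θ (n + 1) * leftBoundary θ n * conj (rightBoundary θ n)) * hu
    + (ι * realForm θ n * leftBoundary θ n * rightBoundary θ n * phase θ ^ n *
        conj (phase θ) ^ (2 * n)
      - ι * realForm θ n * phase θ ^ n * conj (leftBoundary θ n) * conj (rightBoundary θ n)) * hz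

lemma logDerivDet_eq (hx : cornerInv θ n ≠ 0) :
    logDerivDet θ (n + 1) =
      (n + 1) * sesqRatioRe θ n - 2 / π * realForm θ n * (bilinRatio θ n).im := by
  rw [logDerivDet, phase_mul_sesqForm hx, sub_re, ofReal_re, sesqRatioRe]
  rw [show (n : ℂ) + 1 = ((n + 1 : ℝ) : ℂ) by push_cast; rfl, re_ofReal_mul]

end ChristoffelDarboux

section DifferentialEquations

/-- The square of `leftBoundary`, with phase normalised so that its argument moves slowly
in `n`. -/
def leftSquare (θ : ℝ) (n : ℕ) : ℂ := conj (phase θ) ^ n * phase θ * leftBoundary θ n ^ 2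

/-- The square of `rightBoundary`, with phase normalised so that its argument moves slowly
in `n`. -/
def rightSquare (θ : ℝ) (n : ℕ) : ℂ := conj (phase θ) ^ (n + 1) * rightBoundary θ n ^ 2

variable {θ : ℝ} {n N : ℕ}

lemma norm_leftSquare (θ : ℝ) (n : ℕ) : ‖leftSquare θ n‖ = ‖leftBoundary θ n‖ ^ 2 := by
  simp [leftSquare, norm_phase]

lemma norm_rightSquare (θ : ℝ) (n : ℕ) : ‖rightSquare θ n‖ = ‖rightBoundary θ n‖ ^ 2 := by
  simp [rightSquare, norm_phase]

lemma ofReal_norm_leftSquare (θ : ℝ) (n : ℕ) :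
    (‖leftSquare θ n‖ : ℂ) = leftBoundary θ n * conj (leftBoundary θ n) := by
  rw [mul_conj, normSq_eq_norm_sq, norm_leftSquare]

lemma ofReal_norm_rightSquare (θ : ℝ) (n : ℕ) :
    (‖rightSquare θ n‖ : ℂ) = rightBoundary θ n * conj (rightBoundary θ n) := by
  rw [mul_conj, normSq_eq_norm_sq, norm_rightSquare]

lemma norm_leftSquare_mul_norm_rightSquare (hx : cornerInv θ n ≠ 0) :
    ‖leftSquare θ n‖ * ‖rightSquare θ n‖ = cornerInv θ n ^ 2 * ‖bilinRatio θ n‖ ^ 2 := by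
  rw [norm_leftSquare, norm_rightSquare, bilinRatio]
  simp only [norm_div, norm_mul, norm_pow, RCLike.norm_conj, norm_phase, norm_real, one_pow,
    one_mul, Real.norm_eq_abs, div_pow, sq_abs]
  field_simp

lemma leftSquare_mul_norm_rightSquare (hx : cornerInv θ n ≠ 0) :
    leftSquare θ n * (‖rightSquare θ n‖ : ℂ) =
      (cornerInv θ n : ℂ) ^ 2 * (bilinRatio θ n * sesqRatio θ n) := by
  have hx' : (cornerInv θ n : ℂ) ≠ 0 := mod_cast hx
  rw [ofReal_norm_rightSquare, leftSquare, bilinRatio, sesqRatio]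
  field_simp

lemma hasDerivAt_phase_mul_leftBoundary (h : shiftedDet θ (n + 1) ≠ 0) :
    HasDerivAt (fun t => phase t * leftBoundary t n)
      (-(2 / π) * (bilinForm θ (n + 1) * conj (leftBoundary θ n))) θ := by
  have hphase (t : ℝ) (j : Fin (n + 1)) :
      phase t ^ ((j : ℤ) - ((0 : Fin (n + 1)) : ℕ) + 1) = phase t ^ (j : ℕ) * phase t := by
    simp [zpow_add₀ (phase_ne_zero t)]
  have hsum (t : ℝ) : phase t * leftBoundary t n = ∑ j : Fin (n + 1),
      phase t ^ ((j : ℤ) - ((0 : Fin (n + 1)) : ℕ) + 1) * (shiftedInv t (n + 1) j 0 : ℂ) := by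
    rw [leftBoundary, leftSol, Finset.mul_sum]
    refine Finset.sum_congr rfl fun j _ => ?_
    rw [hphase]
    ring
  simp only [hsum]
  refine (HasDerivAt.fun_sum fun j _ =>
    hasDerivAt_phase_zpow_mul_shiftedInv h j 0).congr_deriv ?_
  rw [bilinForm, Finset.sum_mul, Finset.mul_sum]
  refine Finset.sum_congr rfl fun j _ => ?_
  rw [hphase, ← leftBoundary]
  linear_combination (-(2 / (π : ℂ)) * phase θ ^ (j : ℕ) * rightSol θ (n + 1) j *
    conj (leftBoundary θ n)) * phase_mul_conj θ

lemma hasDerivAt_conj_phase_mul_rightBoundary (h : shiftedDet θ (n + 1) ≠ 0) :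
    HasDerivAt (fun t => conj (phase t) * rightBoundary t n)
      (-(2 / π) * (bilinForm θ (n + 1) * conj (rightBoundary θ n))) θ := by
  have hphase (t : ℝ) (k : Fin (n + 1)) :
      conj (phase t ^ ((((0 : Fin (n + 1)) : ℕ) : ℤ) - k + 1)) =
        phase t ^ (k : ℕ) * conj (phase t) := by
    rw [map_zpow₀, conj_phase]
    simp [zpow_add₀ (inv_ne_zero (phase_ne_zero t))]
  have hsum (t : ℝ) : conj (phase t) * rightBoundary t n = ∑ k : Fin (n + 1),
      conj (phase t ^ ((((0 : Fin (n + 1)) : ℕ) : ℤ) - k + 1) *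
        (shiftedInv t (n + 1) 0 k : ℂ)) := by
    rw [rightBoundary, rightSol, Finset.mul_sum]
    refine Finset.sum_congr rfl fun k _ => ?_
    rw [map_mul, hphase, conj_ofReal]
    ring
  simp only [hsum]
  refine (HasDerivAt.fun_sum fun k _ =>
    (hasDerivAt_phase_zpow_mul_shiftedInv h 0 k).star).congr_deriv ?_
  rw [bilinForm_eq_sum_leftSol, Finset.sum_mul, Finset.mul_sum]
  refine Finset.sum_congr rfl fun k _ => ?_
  rw [star_def, ← rightBoundary]
  simp only [map_mul, map_neg, map_div₀, conj_conj, conj_ofReal, map_ofNat, hphase]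
  linear_combination (-(2 / (π : ℂ)) * phase θ ^ (k : ℕ) * leftSol θ (n + 1) k *
    conj (rightBoundary θ n)) * phase_mul_conj θ

lemma hasDerivAt_phase_mul_sesqForm (h : shiftedDet θ N ≠ 0) :
    HasDerivAt (fun t => phase t * sesqForm t N)
      (-(2 / π) * (bilinForm θ N * conj (bilinForm θ N))) θ := by
  have hphase (t : ℝ) (j k : Fin N) :
      phase t ^ ((j : ℤ) - k + 1) = phase t * phase t ^ (j : ℕ) * conj (phase t) ^ (k : ℕ) := by
    rw [conj_phase, zpow_add₀ (phase_ne_zero t), zpow_sub₀ (phase_ne_zero t), zpow_natCast,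
      zpow_natCast, zpow_one, inv_pow]
    ring
  have hsum (t : ℝ) : phase t * sesqForm t N = ∑ j : Fin N, ∑ k : Fin N,
      phase t ^ ((j : ℤ) - k + 1) * (shiftedInv t N j k : ℂ) := by
    simp only [sesqForm, Finset.mul_sum, conj_rightSol, hphase]
    exact Finset.sum_congr rfl fun j _ => Finset.sum_congr rfl fun k _ => by ring
  simp only [hsum]
  refine (HasDerivAt.fun_sum fun j _ => HasDerivAt.fun_sum fun k _ =>
    hasDerivAt_phase_zpow_mul_shiftedInv h j k).congr_deriv ?_
  have hconj : conj (bilinForm θ N) =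
      ∑ k : Fin N, conj (phase θ) ^ (k : ℕ) * conj (leftSol θ N k) := by
    simp [bilinForm_eq_sum_leftSol]
  rw [hconj, bilinForm, Finset.sum_mul_sum]
  simp only [Finset.mul_sum]
  refine Finset.sum_congr rfl fun j _ => Finset.sum_congr rfl fun k _ => ?_
  rw [hphase]
  linear_combination (-(2 / (π : ℂ)) * phase θ ^ (j : ℕ) * conj (phase θ) ^ (k : ℕ) *
    rightSol θ N j * conj (leftSol θ N k)) * phase_mul_conj θ

lemma hasDerivAt_logDerivDet (h : shiftedDet θ (n + 1) ≠ 0) :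
    HasDerivAt (fun t => logDerivDet t (n + 1)) (-(2 / π) * realForm θ n ^ 2) θ := by
  refine (reCLM.hasFDerivAt.comp_hasDerivAt θ (hasDerivAt_phase_mul_sesqForm h)).congr_deriv ?_
  have hreal : -(2 / (π : ℂ)) * (bilinForm θ (n + 1) * conj (bilinForm θ (n + 1))) =
      ((-(2 / π) * realForm θ n ^ 2 : ℝ) : ℂ) := by
    rw [bilinForm_eq_phase_pow_mul_realForm, map_mul, map_pow, conj_ofReal]
    push_cast
    linear_combination (-(2 / (π : ℂ)) * (realForm θ n : ℂ) ^ 2) * phase_pow_mul_conj θ n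
  rw [hreal, reCLM_apply, ofReal_re]

lemma hasDerivAt_cornerInv (hx : cornerInv θ n ≠ 0) :
    HasDerivAt (fun t => cornerInv t n) (-(2 / π) * sesqRatioRe θ n * cornerInv θ n) θ := by
  refine (hasDerivAt_shiftedInv (shiftedDet_succ_ne_zero hx) 0 0).congr_deriv ?_
  have hconj : conj (phase θ) * rightBoundary θ n * conj (leftBoundary θ n) =
      conj (phase θ * (leftBoundary θ n * conj (rightBoundary θ n))) := by
    simp only [map_mul, conj_conj]
    ring
  rw [← rightBoundary, ← leftBoundary, hconj, conj_re, sesqRatioRe, sesqRatio, div_ofReal_re]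
  field_simp

lemma bilinRatio_eq (t : ℝ) (n : ℕ) :
    bilinRatio t n = phase t ^ (-(n : ℤ)) *
      ((phase t * leftBoundary t n) * (conj (phase t) * rightBoundary t n)) /
        (cornerInv t n : ℂ) := by
  rw [bilinRatio, conj_phase_pow]
  congr 1
  linear_combination
    (-phase t ^ (-(n : ℤ)) * leftBoundary t n * rightBoundary t n) * phase_mul_conj t

lemma hasDerivAt_bilinRatio (hx : cornerInv θ n ≠ 0) :
    HasDerivAt (fun t => bilinRatio t n)
      (-(I * n * bilinRatio θ n) - ((4 / π * realForm θ n * sesqRatioRe θ n : ℝ) : ℂ) +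
        ((2 / π * sesqRatioRe θ n : ℝ) : ℂ) * bilinRatio θ n) θ := by
  have hx' : (cornerInv θ n : ℂ) ≠ 0 := mod_cast hx
  have h := shiftedDet_succ_ne_zero hx
  simp only [bilinRatio_eq]
  refine (((hasDerivAt_phase_zpow (-(n : ℤ)) θ).mul ((hasDerivAt_phase_mul_leftBoundary h).mul
    (hasDerivAt_conj_phase_mul_rightBoundary h))).div
      (hasDerivAt_cornerInv hx).ofReal_comp hx').congr_deriv ?_
  have hre : sesqRatio θ n + conj (sesqRatio θ n) = ((2 * sesqRatioRe θ n : ℝ) : ℂ) := add_conj _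
  have hu := phase_pow_mul_conj θ n
  simp only [sesqRatio, map_mul, map_div₀, conj_conj, conj_ofReal] at hre
  simp only [Pi.mul_apply, ← conj_phase_pow, bilinForm_eq_phase_pow_mul_realForm]
  push_cast at hre ⊢
  generalize (sesqRatioRe θ n : ℂ) = ρ at *
  field_simp at hre ⊢
  linear_combination (-(2 * (realForm θ n : ℂ)) * (phase θ ^ n * conj (phase θ) ^ n)) * hre -
    4 * realForm θ n * cornerInv θ n * ρ * hu

lemma leftSquare_eq (t : ℝ) (n : ℕ) :
    leftSquare t n = phase t ^ (-((n + 1 : ℕ) : ℤ)) * (phase t * leftBoundary t n) ^ 2 := by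
  rw [leftSquare, ← conj_phase_pow]
  linear_combination -(conj (phase t) ^ n * phase t * leftBoundary t n ^ 2) * phase_mul_conj t

lemma hasDerivAt_leftSquare (h : shiftedDet θ (n + 1) ≠ 0) :
    HasDerivAt (fun t => leftSquare t n)
      (-(I * (n + 1) * leftSquare θ n) -
        ((4 / π * realForm θ n * ‖leftSquare θ n‖ : ℝ) : ℂ)) θ := by
  push_cast
  rw [ofReal_norm_leftSquare]
  simp only [leftSquare_eq]
  refine ((hasDerivAt_phase_zpow (-((n + 1 : ℕ) : ℤ)) θ).mul
    ((hasDerivAt_phase_mul_leftBoundary h).pow 2)).congr_deriv ?_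
  simp only [Pi.pow_apply, ← conj_phase_pow, bilinForm_eq_phase_pow_mul_realForm]
  push_cast
  rw [pow_succ (conj (phase θ))]
  linear_combination
    (-(4 / (π : ℂ)) * realForm θ n * leftBoundary θ n * conj (leftBoundary θ n)) *
      (phase θ * conj (phase θ) * phase_pow_mul_conj θ n + phase_mul_conj θ)

end DifferentialEquations

section Recurrences

variable {θ : ℝ} {n : ℕ}

lemma succ_mul_lowerCorner (h : shiftedDet θ (n + 1) ≠ 0) :
    (n + 1) * lowerCorner θ n = 2 / π * (leftSquare θ n).im := by
  have hdisp := displacement_shiftedInv h (Fin.last n) 0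
  have hconj : conj (phase θ) * (phase θ ^ n * conj (leftBoundary θ n)) *
      conj (leftBoundary θ n) = conj (leftSquare θ n) := by
    simp only [leftSquare, map_mul, map_pow, conj_conj]
    ring
  rw [rightSol_last, ← leftBoundary, hconj, conj_im, ← lowerCorner] at hdisp
  simp only [Fin.val_zero, Nat.cast_zero, sub_zero, Fin.val_last] at hdisp
  linarith

lemma pred_mul_upperCorner (h : shiftedDet θ (n + 1) ≠ 0) :
    (n - 1) * upperCorner θ n = 2 / π * (rightSquare θ n).im := by
  have hdisp := displacement_shiftedInv h 0 (Fin.last n)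
  have hsquare : conj (phase θ) * rightBoundary θ n *
      conj (phase θ ^ n * conj (rightBoundary θ n)) = rightSquare θ n := by
    simp only [rightSquare, map_mul, map_pow, conj_conj]
    ring
  rw [leftSol_last, ← rightBoundary, hsquare, ← upperCorner] at hdisp
  simp only [Fin.val_zero, Nat.cast_zero, zero_sub, Fin.val_last] at hdisp
  linarith

lemma sum_mul_single_zero {M : ℕ} (f : Fin (M + 1) → ℂ) :
    ∑ k : Fin (M + 1), f k * (Pi.single 0 1 : ℕ → ℂ) k = f 0 := by
  simp [Fin.sum_univ_succ]

lemma sum_single_zero_mul {M : ℕ} (f : Fin (M + 1) → ℂ) :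
    ∑ k : Fin (M + 1), (Pi.single 0 1 : ℕ → ℂ) k * f k = f 0 := by
  simp [Fin.sum_univ_succ]

lemma leftBoundary_eq_sub (hx : cornerInv θ (n + 1) ≠ 0) :
    leftBoundary θ n = leftBoundary θ (n + 1) -
      (lowerCorner θ (n + 1) / cornerInv θ (n + 1) : ℝ) *
        (phase θ ^ (n + 1) * conj (rightBoundary θ (n + 1))) := by
  have h := invForm_castSucc hx (phase θ ^ ·) (Pi.single 0 1)
  simp only [invForm, sum_mul_single_zero] at h
  rw [leftBoundary, leftSol, h, ← leftSol_last, leftBoundary, leftSol, leftSol, lowerCorner]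
  push_cast
  ring

lemma cornerInv_eq_sub (hx : cornerInv θ (n + 1) ≠ 0) :
    cornerInv θ n = cornerInv θ (n + 1) -
      lowerCorner θ (n + 1) * upperCorner θ (n + 1) / cornerInv θ (n + 1) := by
  have h := invForm_castSucc hx (Pi.single 0 1) (Pi.single 0 1)
  simp only [invForm, sum_single_zero_mul, sum_mul_single_zero] at h
  norm_cast at h
  rw [mul_comm (lowerCorner _ _)]
  exact h

end Recurrences

section CauchyMatrix

lemma eq_zero_of_sum_div_sub_eq_zero {ι K : Type*} [Field K] {s : Finset ι}
    {x y w : ι → K} (hx : Set.InjOn x s) (hy : Set.InjOn y s)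
    (hxy : ∀ i ∈ s, ∀ j ∈ s, x i ≠ y j) (h : ∀ i ∈ s, ∑ j ∈ s, w j / (y j - x i) = 0)
    {k : ι} (hk : k ∈ s) : w k = 0 := by
  classical
  set r : ι → K := fun j => w j / Lagrange.nodalWeight s y j with hr
  have hweight : ∀ j ∈ s, Lagrange.nodalWeight s y j ≠ 0 := fun j hj =>
    Lagrange.nodalWeight_ne_zero hy hj
  have heval : ∀ i ∈ s, (Lagrange.interpolate s y r).eval (x i) = 0 := by
    intro i hi
    rw [Lagrange.eval_interpolate_not_at_node r (hxy i hi)]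
    have hterm : ∀ j ∈ s, Lagrange.nodalWeight s y j * (x i - y j)⁻¹ * r j =
        -(w j / (y j - x i)) := by
      intro j hj
      have := hweight j hj
      rw [← neg_sub (y j) (x i), inv_neg, hr]
      field_simp
    rw [Finset.sum_congr rfl hterm, Finset.sum_neg_distrib, h i hi, neg_zero, mul_zero]
  have hzero : Lagrange.interpolate s y r = 0 :=
    Polynomial.eq_zero_of_degree_lt_of_eval_index_eq_zero s hx
      (Lagrange.degree_interpolate_lt r hy) heval
  have hnode := Lagrange.eval_interpolate_at_node r hy hk
  rw [hzero, Polynomial.eval_zero] at hnode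
  exact (div_eq_zero_iff.mp hnode.symm).resolve_right (hweight k hk)

end CauchyMatrix

lemma inv_apply_eq_zero_of_odd {K : Type*} [Field K] [CharZero K] {N : ℕ}
    {A : Matrix (Fin N) (Fin N) K} (hA : ∀ j k : Fin N, Odd (j + k : ℕ) → A j k = 0)
    {j k : Fin N} (hjk : Odd (j + k : ℕ)) : A⁻¹ j k = 0 := by
  set D : Matrix (Fin N) (Fin N) K := diagonal fun j => (-1) ^ (j : ℕ) with hD
  have hDD : D * D = 1 := by simp [hD, diagonal_mul_diagonal, ← mul_pow]
  have hconj : D * A * D = A := by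
    ext a b
    rw [hD, mul_diagonal, diagonal_mul, mul_right_comm, ← pow_add]
    rcases Nat.even_or_odd (a + b : ℕ) with hab | hab
    · rw [hab.neg_one_pow, one_mul]
    · rw [hA a b hab, mul_zero]
  have hinv : D * A⁻¹ * D = A⁻¹ := by
    conv_rhs =>
      rw [← hconj, Matrix.mul_inv_rev, Matrix.mul_inv_rev, inv_eq_left_inv hDD, ← mul_assoc]
  have hentry := congrFun (congrFun hinv j) k
  rw [hD, mul_diagonal, diagonal_mul, mul_right_comm, ← pow_add, hjk.neg_one_pow, neg_one_mul]
    at hentry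
  exact self_eq_neg.mp hentry.symm

section RightAngle

lemma stepCoeff_pi_div_two_of_even {m : ℤ} (hm : Even m) : stepCoeff (π / 2) m = 0 := by
  obtain ⟨d, rfl⟩ := hm
  rcases eq_or_ne (d + d) 0 with h | h
  · rw [h, stepCoeff, if_pos rfl]
    field_simp
    ring
  · have hangle : ((d + d : ℤ) : ℝ) * (π / 2) = d * π := by push_cast; ring
    rw [stepCoeff, if_neg h, hangle, Real.sin_int_mul_pi, mul_zero]

lemma stepCoeff_pi_div_two_two_mul_sub (i k : ℤ) :
    stepCoeff (π / 2) (2 * (i - k) - 1) =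
      2 / π * ((-1) ^ i * (-1) ^ k) / (2 * k + 1 - 2 * i) := by
  have hne : (2 * (i - k) - 1 : ℤ) ≠ 0 := by omega
  have hne' : (2 * k + 1 - 2 * i : ℝ) ≠ 0 := by
    have : (2 * k + 1 - 2 * i : ℤ) ≠ 0 := by omega
    exact_mod_cast this
  have hangle : ((2 * (i - k) - 1 : ℤ) : ℝ) * (π / 2) = ((i - k : ℤ) : ℝ) * π - π / 2 := by
    push_cast
    ring
  have hsign : (-1 : ℝ) ^ (i - k) = (-1) ^ i * (-1) ^ k := by
    rw [zpow_sub₀ (by norm_num), div_eq_mul_inv, ← _root_.inv_zpow]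
    norm_num
  rw [stepCoeff, if_neg hne, hangle, Real.sin_sub_pi_div_two, Real.cos_int_mul_pi, hsign]
  push_cast
  rw [show (2 * ((i : ℝ) - k) - 1) = -(2 * k + 1 - 2 * i) by ring]
  field_simp

lemma shiftedToeplitz_pi_div_two_of_odd {N : ℕ} (j k : Fin N) (hjk : Odd (j + k : ℕ)) :
    shiftedToeplitz (π / 2) N j k = 0 := by
  refine stepCoeff_pi_div_two_of_even ?_
  rw [Int.even_iff]
  have := Nat.odd_iff.mp hjk
  omega

lemma shiftedToeplitz_pi_div_two_of_even {N : ℕ} (j k : Fin N) (hjk : (j : ℕ) % 2 = k % 2) :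
    shiftedToeplitz (π / 2) N j k =
      2 / π * (-1) ^ ((j : ℕ) / 2) * ((-1) ^ ((k : ℕ) / 2) / ((k : ℝ) + 1 - j)) := by
  have hindex : (j : ℤ) - k - 1 = 2 * (((j / 2 : ℕ) : ℤ) - ((k / 2 : ℕ) : ℤ)) - 1 := by omega
  have hdiff : (k : ℝ) + 1 - j = 2 * ((k / 2 : ℕ) : ℝ) + 1 - 2 * ((j / 2 : ℕ) : ℝ) := by
    have : (k : ℤ) + 1 - j = 2 * ((k / 2 : ℕ) : ℤ) + 1 - 2 * ((j / 2 : ℕ) : ℤ) := by omega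
    exact_mod_cast this
  rw [shiftedToeplitz, of_apply, hindex, stepCoeff_pi_div_two_two_mul_sub, hdiff]
  simp only [zpow_natCast, Int.cast_natCast]
  ring

-- On each parity class of indices the matrix is, up to signs, the Cauchy matrix `1 / (k + 1 - j)`.
lemma shiftedDet_pi_div_two_ne_zero (N : ℕ) : shiftedDet (π / 2) N ≠ 0 := by
  intro hdet
  obtain ⟨v, hv, hSv⟩ := exists_mulVec_eq_zero_iff.mpr hdet
  refine hv (funext fun k => ?_)
  set s : Finset (Fin N) := Finset.univ.filter fun j => (j : ℕ) % 2 = k % 2 with hs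
  have hmem : ∀ {j}, j ∈ s ↔ (j : ℕ) % 2 = k % 2 := by simp [hs]
  have hrow : ∀ i ∈ s, ∑ j ∈ s, (-1) ^ ((j : ℕ) / 2) * v j / ((j : ℝ) + 1 - i) = 0 := by
    intro i hi
    have hsum : ∑ j ∈ s, shiftedToeplitz (π / 2) N i j * v j = 0 := by
      rw [← Pi.zero_apply (M := fun _ => ℝ) i, ← hSv, mulVec, dotProduct]
      refine Finset.sum_subset s.subset_univ fun j _ hj => ?_
      have hij : Odd (i + j : ℕ) := by
        rw [hmem] at hi hj
        rw [Nat.odd_iff]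
        omega
      rw [shiftedToeplitz_pi_div_two_of_odd i j hij, zero_mul]
    have hfactor : ∀ j ∈ s, shiftedToeplitz (π / 2) N i j * v j = 2 / π * (-1) ^ ((i : ℕ) / 2) *
        ((-1) ^ ((j : ℕ) / 2) * v j / ((j : ℝ) + 1 - i)) := fun j hj => by
      rw [shiftedToeplitz_pi_div_two_of_even i j ((hmem.mp hi).trans (hmem.mp hj).symm)]
      ring
    rw [Finset.sum_congr rfl hfactor, ← Finset.mul_sum] at hsum
    exact (mul_eq_zero.mp hsum).resolve_left (by positivity)
  have hne : ∀ i ∈ s, ∀ j ∈ s, (i : ℝ) ≠ (j : ℝ) + 1 := by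
    intro i hi j hj hij
    have hij' : (i : ℕ) = j + 1 := mod_cast hij
    rw [hmem] at hi hj
    omega
  have hinj : Function.Injective fun i : Fin N => (i : ℝ) := fun i j h => by ext; simpa using h
  have hk := eq_zero_of_sum_div_sub_eq_zero (hinj.injOn)
    ((add_left_injective (1 : ℝ)).comp hinj).injOn hne hrow (hmem.mpr rfl)
  exact (mul_eq_zero.mp hk).resolve_left (by positivity)

lemma shiftedInv_pi_div_two_of_odd {N : ℕ} {j k : Fin N} (hjk : Odd (j + k : ℕ)) :
    shiftedInv (π / 2) N j k = 0 :=
  inv_apply_eq_zero_of_odd shiftedToeplitz_pi_div_two_of_odd hjk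

lemma cornerInv_pi_div_two_ne_zero (n : ℕ) : cornerInv (π / 2) n ≠ 0 := by
  refine left_ne_zero_of_mul (b := shiftedDet (π / 2) (n + 1)) ?_
  rw [← shiftedDet_eq_cornerInv_mul (shiftedDet_pi_div_two_ne_zero _)]
  exact shiftedDet_pi_div_two_ne_zero n

lemma phase_pi_div_two : phase (π / 2) = I := by
  rw [phase]
  push_cast
  exact exp_pi_div_two_mul_I

lemma conj_I_pow_of_even {n : ℕ} (hn : Even n) : conj (I ^ n) = I ^ n := by
  rw [map_pow, conj_I, hn.neg_pow]

lemma conj_leftBoundary_pi_div_two (n : ℕ) :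
    conj (leftBoundary (π / 2) n) = leftBoundary (π / 2) n := by
  rw [leftBoundary, leftSol, map_sum, phase_pi_div_two]
  refine Finset.sum_congr rfl fun j _ => ?_
  rcases Nat.even_or_odd (j : ℕ) with hj | hj
  · rw [map_mul, conj_I_pow_of_even hj, conj_ofReal]
  · simp [shiftedInv_pi_div_two_of_odd (j := j) (k := 0) (by simpa using hj)]

lemma conj_rightBoundary_pi_div_two (n : ℕ) :
    conj (rightBoundary (π / 2) n) = rightBoundary (π / 2) n := by
  rw [rightBoundary, rightSol, map_sum, phase_pi_div_two]
  refine Finset.sum_congr rfl fun j _ => ?_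
  rcases Nat.even_or_odd (j : ℕ) with hj | hj
  · rw [map_mul, conj_I_pow_of_even hj, conj_ofReal]
  · simp [shiftedInv_pi_div_two_of_odd (j := 0) (k := j) (by simpa using hj)]

lemma leftBoundary_mul_rightBoundary_pi_div_two (n : ℕ) :
    leftBoundary (π / 2) n * rightBoundary (π / 2) n = (π / 2 * cornerInv (π / 2) n : ℝ) := by
  have hx := cornerInv_pi_div_two_ne_zero n
  have him := sesqRatio_im hx
  have hreal : ((leftBoundary (π / 2) n * rightBoundary (π / 2) n).re : ℂ) =
      leftBoundary (π / 2) n * rightBoundary (π / 2) n := by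
    rw [← conj_eq_iff_re, map_mul, conj_leftBoundary_pi_div_two, conj_rightBoundary_pi_div_two]
  rw [sesqRatio, phase_pi_div_two, conj_rightBoundary_pi_div_two, div_ofReal_im, I_mul_im,
    div_eq_iff hx] at him
  rw [← hreal, him]

lemma sesqRatioRe_pi_div_two (n : ℕ) : sesqRatioRe (π / 2) n = 0 := by
  rw [sesqRatioRe, sesqRatio, phase_pi_div_two, conj_rightBoundary_pi_div_two,
    leftBoundary_mul_rightBoundary_pi_div_two, div_ofReal_re, I_mul_re, ofReal_im, neg_zero,
    zero_div]

lemma bilinRatio_pi_div_two (n : ℕ) : bilinRatio (π / 2) n = conj I ^ n * (π / 2 : ℝ) := by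
  have hx : (cornerInv (π / 2) n : ℂ) ≠ 0 := mod_cast cornerInv_pi_div_two_ne_zero n
  rw [bilinRatio, leftBoundary_mul_rightBoundary_pi_div_two, phase_pi_div_two, ofReal_mul]
  field_simp

lemma logDerivDet_pi_div_two (n : ℕ) : logDerivDet (π / 2) (n + 1) = 0 := by
  have hx := cornerInv_pi_div_two_ne_zero n
  rw [logDerivDet_eq hx, sesqRatioRe_pi_div_two, mul_zero, zero_sub, neg_eq_zero]
  rcases Nat.even_or_odd n with hn | hn
  · rw [bilinRatio_pi_div_two, im_mul_ofReal, ← map_pow, conj_I_pow_of_even hn,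
      conj_eq_iff_im.mp (conj_I_pow_of_even hn), zero_mul, mul_zero]
  · have hg := realForm_mul_sin hx
    rw [Real.sin_pi_div_two, mul_one, bilinRatio_pi_div_two, phase_pi_div_two, ← mul_assoc,
      ← pow_succ', im_mul_ofReal, ← map_pow, conj_I_pow_of_even hn.add_one,
      conj_eq_iff_im.mp (conj_I_pow_of_even hn.add_one), zero_mul, neg_zero] at hg
    rw [hg, mul_zero, zero_mul]

lemma leftSquare_pi_div_two_im {n : ℕ} (hn : Even n) :
    ((leftSquare (π / 2) n).im : ℂ) = I ^ n * leftBoundary (π / 2) n ^ 2 := by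
  have hreal : conj (I ^ n * leftBoundary (π / 2) n ^ 2) = I ^ n * leftBoundary (π / 2) n ^ 2 := by
    rw [map_mul, map_pow conj (leftBoundary _ _), conj_leftBoundary_pi_div_two,
      conj_I_pow_of_even hn]
  rw [leftSquare, phase_pi_div_two, ← map_pow, conj_I_pow_of_even hn, mul_right_comm, mul_I_im,
    conj_eq_iff_re.mp hreal]

lemma rightSquare_pi_div_two_im {n : ℕ} (hn : Even n) :
    ((rightSquare (π / 2) n).im : ℂ) = -(I ^ n * rightBoundary (π / 2) n ^ 2) := by
  have hreal : conj (I ^ n * rightBoundary (π / 2) n ^ 2) =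
      I ^ n * rightBoundary (π / 2) n ^ 2 := by
    rw [map_mul, map_pow conj (rightBoundary _ _), conj_rightBoundary_pi_div_two,
      conj_I_pow_of_even hn]
  rw [rightSquare, phase_pi_div_two, pow_succ, ← map_pow, conj_I_pow_of_even hn, conj_I,
    mul_right_comm, mul_neg, neg_im, mul_I_im, ofReal_neg, conj_eq_iff_re.mp hreal]

lemma lowerCorner_pi_div_two_of_odd {n : ℕ} (hn : Odd n) : lowerCorner (π / 2) n = 0 :=
  shiftedInv_pi_div_two_of_odd (by simpa using hn)

lemma leftBoundary_pi_div_two_succ_of_even {n : ℕ} (hn : Even n) :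
    leftBoundary (π / 2) (n + 1) = leftBoundary (π / 2) n := by
  simp [leftBoundary_eq_sub (cornerInv_pi_div_two_ne_zero (n + 1)),
    lowerCorner_pi_div_two_of_odd hn.add_one]

lemma cornerInv_pi_div_two_succ_of_even {n : ℕ} (hn : Even n) :
    cornerInv (π / 2) (n + 1) = cornerInv (π / 2) n := by
  simp [cornerInv_eq_sub (cornerInv_pi_div_two_ne_zero (n + 1)),
    lowerCorner_pi_div_two_of_odd hn.add_one]

lemma leftBoundary_pi_div_two_of_odd {n : ℕ} (hn : Odd n) :
    (n + 2) * leftBoundary (π / 2) n = (n + 1) * leftBoundary (π / 2) (n + 1) := by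
  have hx : (cornerInv (π / 2) (n + 1) : ℂ) ≠ 0 := mod_cast cornerInv_pi_div_two_ne_zero (n + 1)
  have hpi : (π : ℂ) ≠ 0 := mod_cast Real.pi_ne_zero
  have hI : I ^ (n + 1) * I ^ (n + 1) = 1 := by
    rw [← mul_pow, I_mul_I, hn.add_one.neg_one_pow]
  have hlower := congrArg ((↑) : ℝ → ℂ)
    (succ_mul_lowerCorner (shiftedDet_pi_div_two_ne_zero (n + 1 + 1)))
  have hprod := leftBoundary_mul_rightBoundary_pi_div_two (n + 1)
  rw [leftBoundary_eq_sub (cornerInv_pi_div_two_ne_zero (n + 1)), phase_pi_div_two,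
    conj_rightBoundary_pi_div_two]
  push_cast [leftSquare_pi_div_two_im hn.add_one] at hlower hprod ⊢
  field_simp at hlower hprod ⊢
  refine mul_left_cancel₀ hpi ?_
  linear_combination -I ^ (n + 1) * rightBoundary (π / 2) (n + 1) * hlower -
    2 * leftBoundary (π / 2) (n + 1) ^ 2 * rightBoundary (π / 2) (n + 1) * hI -
    leftBoundary (π / 2) (n + 1) * hprod

lemma norm_leftSquare_pi_div_two_of_odd {n : ℕ} (hn : Odd n) :
    (n + 2) ^ 2 * ‖leftSquare (π / 2) n‖ = (n + 1) ^ 2 * ‖leftSquare (π / 2) (n + 1)‖ := by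
  have hnorm := congrArg (‖·‖) (leftBoundary_pi_div_two_of_odd hn)
  have hcast : ((n : ℂ) + 2 = (n + 2 : ℕ)) ∧ ((n : ℂ) + 1 = (n + 1 : ℕ)) := by
    constructor <;> push_cast <;> rfl
  simp only [norm_mul, hcast.1, hcast.2, Complex.norm_natCast] at hnorm
  rw [norm_leftSquare, norm_leftSquare, ← mul_pow, ← mul_pow]
  push_cast at hnorm
  rw [hnorm]

lemma cornerInv_pi_div_two_of_odd {n : ℕ} (hn : Odd n) :
    n * (n + 2) * cornerInv (π / 2) n = (n + 1) ^ 2 * cornerInv (π / 2) (n + 1) := by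
  have hx := cornerInv_pi_div_two_ne_zero (n + 1)
  have hI : I ^ (n + 1) * I ^ (n + 1) = 1 := by
    rw [← mul_pow, I_mul_I, hn.add_one.neg_one_pow]
  have hdet := shiftedDet_pi_div_two_ne_zero (n + 1 + 1)
  have hprod := leftBoundary_mul_rightBoundary_pi_div_two (n + 1)
  have hcorners : (n * (n + 2)) * (lowerCorner (π / 2) (n + 1) * upperCorner (π / 2) (n + 1)) =
      -cornerInv (π / 2) (n + 1) ^ 2 := by
    have hlower := succ_mul_lowerCorner hdet
    have hupper := pred_mul_upperCorner hdet
    have hsquares : (leftSquare (π / 2) (n + 1)).im * (rightSquare (π / 2) (n + 1)).im =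
        -(π / 2 * cornerInv (π / 2) (n + 1)) ^ 2 := by
      rw [← ofReal_inj, ofReal_mul, leftSquare_pi_div_two_im hn.add_one,
        rightSquare_pi_div_two_im hn.add_one]
      rw [ofReal_neg, ofReal_pow, ← hprod]
      linear_combination -(leftBoundary (π / 2) (n + 1) * rightBoundary (π / 2) (n + 1)) ^ 2 * hI
    push_cast at hlower hupper
    calc (n * (n + 2)) * (lowerCorner (π / 2) (n + 1) * upperCorner (π / 2) (n + 1))
        = ((n + 1 + 1) * lowerCorner (π / 2) (n + 1)) *
            ((n + 1 - 1) * upperCorner (π / 2) (n + 1)) := by ring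
      _ = (2 / π) ^ 2 * ((leftSquare (π / 2) (n + 1)).im * (rightSquare (π / 2) (n + 1)).im) := by
        rw [hlower, hupper]
        ring
      _ = -cornerInv (π / 2) (n + 1) ^ 2 := by
        rw [hsquares]
        field_simp
  rw [cornerInv_eq_sub hx]
  field_simp
  linear_combination -hcorners

lemma cornerInv_pi_div_two_zero : cornerInv (π / 2) 0 = π / 2 := by
  have hstep := shiftedDet_eq_cornerInv_mul (shiftedDet_pi_div_two_ne_zero 1)
  have hentry : shiftedDet (π / 2) 1 = 2 / π := by
    simpa [shiftedDet] using shiftedToeplitz_pi_div_two_of_even (0 : Fin 1) 0 rfl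
  rw [hentry, shiftedDet, det_fin_zero] at hstep
  field_simp at hstep ⊢
  linarith

lemma norm_leftSquare_pi_div_two_zero : ‖leftSquare (π / 2) 0‖ = π ^ 2 / 4 := by
  have hzero : leftBoundary (π / 2) 0 = cornerInv (π / 2) 0 := by
    simp [leftBoundary, leftSol, cornerInv]
  rw [norm_leftSquare, hzero, cornerInv_pi_div_two_zero, norm_real, Real.norm_eq_abs, sq_abs]
  ring

lemma cornerInv_pi_div_two (n : ℕ) :
    cornerInv (π / 2) n = π / 2 / Real.Wallis.W (n / 2) := by
  induction n with
  | zero => simp [cornerInv_pi_div_two_zero, Real.Wallis.W]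
  | succ n ih =>
    rcases Nat.even_or_odd' n with ⟨k, rfl | rfl⟩
    · rw [cornerInv_pi_div_two_succ_of_even (even_two_mul k), ih]
      congr 2
      omega
    · have hrec := cornerInv_pi_div_two_of_odd (odd_two_mul_add_one k)
      have hW := (Real.Wallis.W_pos k).ne'
      rw [ih, show (2 * k + 1) / 2 = k by omega] at hrec
      rw [show (2 * k + 1 + 1) / 2 = k + 1 by omega, Real.Wallis.W_succ]
      push_cast at hrec
      field_simp at hrec ⊢
      linear_combination -hrec

lemma norm_leftSquare_pi_div_two (n : ℕ) : ‖leftSquare (π / 2) n‖ =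
    (2 * (n / 2 : ℕ) + 1) * (π ^ 2 / 4 / Real.Wallis.W (n / 2)) := by
  induction n with
  | zero => simp [norm_leftSquare_pi_div_two_zero, Real.Wallis.W]
  | succ n ih =>
    rcases Nat.even_or_odd' n with ⟨k, rfl | rfl⟩
    · rw [norm_leftSquare, leftBoundary_pi_div_two_succ_of_even (even_two_mul k),
        ← norm_leftSquare, ih, show (2 * k + 1) / 2 = 2 * k / 2 by omega]
    · have hrec := norm_leftSquare_pi_div_two_of_odd (odd_two_mul_add_one k)
      have hW := (Real.Wallis.W_pos k).ne'
      rw [ih, show (2 * k + 1) / 2 = k by omega] at hrec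
      rw [show (2 * k + 1 + 1) / 2 = k + 1 by omega, Real.Wallis.W_succ]
      push_cast at hrec ⊢
      field_simp at hrec ⊢
      linear_combination -hrec

lemma shiftedDet_pi_div_two (n : ℕ) :
    shiftedDet (π / 2) n = ∏ i ∈ Finset.range n, 2 / π * Real.Wallis.W (i / 2) := by
  induction n with
  | zero => simp [shiftedDet]
  | succ n ih =>
    have hstep := shiftedDet_eq_cornerInv_mul (shiftedDet_pi_div_two_ne_zero (n + 1))
    have hW := (Real.Wallis.W_pos (n / 2)).ne'
    rw [cornerInv_pi_div_two, ih] at hstep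
    rw [Finset.prod_range_succ, hstep]
    field_simp

lemma shiftedDet_pi_div_two_pos (n : ℕ) : 0 < shiftedDet (π / 2) n := by
  rw [shiftedDet_pi_div_two]
  exact Finset.prod_pos fun i _ => mul_pos (by positivity) (Real.Wallis.W_pos _)

lemma tendsto_norm_leftSquare_pi_div_two :
    Tendsto (fun n : ℕ => ‖leftSquare (π / 2) n‖ / (n + 1)) atTop (𝓝 (π / 2)) := by
  have hhalf : Tendsto (fun n : ℕ => n / 2) atTop atTop :=
    Nat.tendsto_div_const_atTop two_ne_zero
  have hwallis : Tendsto (fun n : ℕ => π ^ 2 / 4 / Real.Wallis.W (n / 2)) atTop (𝓝 (π / 2)) := by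
    have hlimit : π ^ 2 / 4 / (π / 2) = π / 2 := by
      field_simp
      norm_num
    rw [← hlimit]
    exact tendsto_const_nhds.div (Real.Wallis.tendsto_W_nhds_pi_div_two.comp hhalf) (by positivity)
  have hratio : Tendsto (fun n : ℕ => (2 * (n / 2 : ℕ) + 1) / ((n : ℝ) + 1)) atTop (𝓝 1) := by
    refine tendsto_of_tendsto_of_tendsto_of_le_of_le (tendsto_natCast_div_add_atTop (1 : ℝ))
      tendsto_const_nhds (fun n => ?_) (fun n => ?_)
    · have : (n : ℝ) ≤ 2 * (n / 2 : ℕ) + 1 := by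
        exact_mod_cast (by omega : n ≤ 2 * (n / 2) + 1)
      dsimp only
      gcongr
    · have : 2 * ((n / 2 : ℕ) : ℝ) + 1 ≤ n + 1 := by
        exact_mod_cast (by omega : 2 * (n / 2) + 1 ≤ n + 1)
      exact div_le_one_of_le₀ this (by positivity)
  refine (one_mul (π / 2) ▸ hratio.mul hwallis).congr fun n => ?_
  rw [norm_leftSquare_pi_div_two]
  ring

end RightAngle

section Continuation

lemma ne_zero_of_hasDerivAt_mul {f u : ℝ → ℝ} {a c Λ : ℝ} (hac : a ≤ c)
    (hf : ContinuousOn f (Set.Icc a c)) (hd : ∀ t ∈ Set.Ioo a c, HasDerivAt f (u t * f t) t)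
    (hu : ∀ t ∈ Set.Ioo a c, |u t| ≤ Λ) (ha : f a ≠ 0) : f c ≠ 0 := by
  -- Monotonicity of `f² e^{2Λt}` keeps `f` away from zero.
  have hmono : MonotoneOn (fun t => f t ^ 2 * Real.exp (2 * Λ * t)) (Set.Icc a c) := by
    refine monotoneOn_of_hasDerivWithinAt_nonneg
      (f' := fun t => 2 * (u t + Λ) * f t ^ 2 * Real.exp (2 * Λ * t)) (convex_Icc a c)
      ((hf.pow 2).mul (by fun_prop)) (fun t ht => ?_) fun t ht => ?_
    · rw [interior_Icc] at ht
      refine ((((hd t ht).pow 2).mul ((hasDerivAt_id t).const_mul (2 * Λ)).exp).congr_deriv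
        ?_).hasDerivWithinAt
      simp only [Pi.pow_apply, id]
      push_cast
      ring
    · rw [interior_Icc] at ht
      have := neg_le_of_abs_le (hu t ht)
      have : 0 ≤ u t + Λ := by linarith
      positivity
  intro hc
  have hle := hmono (Set.left_mem_Icc.mpr hac) (Set.right_mem_Icc.mpr hac) hac
  have hpos : 0 < f a ^ 2 * Real.exp (2 * Λ * a) := by positivity
  simp only [hc] at hle
  linarith

lemma Icc_subset_of_isOpen {s : Set ℝ} {a b : ℝ} (hs : IsOpen s) (ha : a ∈ s)
    (hstep : ∀ c ∈ Set.Ioc a b, Set.Ico a c ⊆ s → c ∈ s) : Set.Icc a b ⊆ s := by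
  by_contra hcon
  obtain ⟨t, ht, hts⟩ := Set.not_subset.mp hcon
  obtain ⟨c, hc, hleast⟩ := (isCompact_Icc.inter_right hs.isClosed_compl).exists_isLeast
    (⟨t, ht, hts⟩ : (Set.Icc a b ∩ sᶜ).Nonempty)
  have hac : a < c := hc.1.1.lt_of_ne fun h => hc.2 (h ▸ ha)
  refine hc.2 (hstep c ⟨hac, hc.1.2⟩ fun x hx => ?_)
  by_contra hxs
  exact hx.2.not_ge (hleast ⟨⟨hx.1, hx.2.le.trans hc.1.2⟩, hxs⟩)

/-- The angles at which all quantities of order `n` are defined and `sesqRatio` is close to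
`iπ/2`. -/
def admissible (n : ℕ) : Set ℝ := {t | cornerInv t n ≠ 0 ∧ |sesqRatioRe t n| < 1}

variable {b c t : ℝ} {n : ℕ}

lemma sin_pos_of_mem_Ico (ht : t ∈ Set.Ico (π / 2) π) : 0 < Real.sin t :=
  Real.sin_pos_of_pos_of_lt_pi (by linarith [ht.1, Real.pi_pos]) ht.2

lemma sin_le_sin_of_mem_Icc (hb : b < π) (ht : t ∈ Set.Icc (π / 2) b) :
    Real.sin b ≤ Real.sin t := by
  rw [← Real.sin_pi_sub b, ← Real.sin_pi_sub t]
  exact Real.sin_le_sin_of_le_of_le_pi_div_two (by linarith [Real.pi_pos])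
    (by linarith [ht.1]) (by linarith [ht.2])

lemma cornerInv_ne_zero_iff :
    cornerInv t n ≠ 0 ↔ shiftedDet t (n + 1) ≠ 0 ∧ shiftedDet t n ≠ 0 := by
  refine ⟨fun h => ?_, fun ⟨h, h'⟩ hx => h' ?_⟩
  · have h' := shiftedDet_succ_ne_zero h
    exact ⟨h', by rw [shiftedDet_eq_cornerInv_mul h']; exact mul_ne_zero h h'⟩
  · rw [shiftedDet_eq_cornerInv_mul h, hx, zero_mul]

lemma isOpen_setOf_cornerInv_ne_zero (n : ℕ) : IsOpen {t | cornerInv t n ≠ 0} := by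
  simp only [cornerInv_ne_zero_iff]
  exact (isOpen_ne_fun (continuous_shiftedDet (n + 1)) continuous_const).inter
    (isOpen_ne_fun (continuous_shiftedDet n) continuous_const)

lemma continuousAt_sesqRatioRe (hx : cornerInv t n ≠ 0) :
    ContinuousAt (fun s => sesqRatioRe s n) t := by
  have h := shiftedDet_succ_ne_zero hx
  have hp := (hasDerivAt_phase_mul_leftBoundary h).continuousAt
  have hq := (hasDerivAt_conj_phase_mul_rightBoundary h).continuousAt
  have heq (s : ℝ) : sesqRatio s n = phase s * leftBoundary s n *
      conj (phase s * (conj (phase s) * rightBoundary s n)) / (cornerInv s n : ℂ) := by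
    rw [← mul_assoc, phase_mul_conj, one_mul, sesqRatio]
    ring
  simp only [sesqRatioRe, heq]
  refine continuous_re.continuousAt.comp (ContinuousAt.div₀ (hp.mul ?_) ?_ (mod_cast hx))
  · exact continuous_conj.continuousAt.comp (continuous_phase.continuousAt.mul hq)
  · exact continuous_ofReal.continuousAt.comp (hasDerivAt_cornerInv hx).continuousAt

lemma isOpen_admissible (n : ℕ) : IsOpen (admissible n) := by
  refine isOpen_iff_mem_nhds.mpr fun t ⟨hx, hr⟩ => ?_
  filter_upwards [(isOpen_setOf_cornerInv_ne_zero n).mem_nhds hx,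
    (continuousAt_sesqRatioRe hx).abs.eventually_lt_const hr] with s hxs hrs using ⟨hxs, hrs⟩

lemma norm_bilinRatio_le (h : t ∈ admissible n) : ‖bilinRatio t n‖ ≤ 2 := by
  have hsq := norm_bilinRatio_sq h.1
  have hr : sesqRatioRe t n ^ 2 ≤ 1 := (sq_le_one_iff_abs_le_one _).mpr h.2.le
  nlinarith [norm_nonneg (bilinRatio t n), Real.pi_lt_d2, Real.pi_pos]

lemma abs_realForm_le (h : t ∈ admissible n) (ht : t ∈ Set.Ico (π / 2) π) :
    |realForm t n| ≤ 2 / Real.sin t := by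
  have hsin := sin_pos_of_mem_Ico ht
  rw [le_div_iff₀ hsin, ← abs_of_pos hsin, ← abs_mul, realForm_mul_sin h.1, abs_neg]
  refine (abs_im_le_norm _).trans ?_
  rw [norm_mul, RCLike.norm_conj, norm_phase, one_mul]
  exact norm_bilinRatio_le h

lemma abs_logDerivDet_le (hc : c ∈ Set.Ico (π / 2) π)
    (h : Set.Icc (π / 2) c ⊆ admissible n) :
    |logDerivDet c (n + 1)| ≤ 4 / Real.sin c ^ 2 := by
  have hsin := sin_pos_of_mem_Ico hc
  have hderiv (t : ℝ) (ht : t ∈ Set.Icc (π / 2) c) :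
      ‖-(2 / π) * realForm t n ^ 2‖ ≤ 2 / π * (4 / Real.sin c ^ 2) := by
    have hg := (abs_realForm_le (h ht) ⟨ht.1, ht.2.trans_lt hc.2⟩).trans
      (div_le_div_of_nonneg_left zero_le_two hsin (sin_le_sin_of_mem_Icc hc.2 ht))
    rw [norm_mul, norm_neg, Real.norm_of_nonneg (by positivity), norm_pow, Real.norm_eq_abs]
    calc 2 / π * |realForm t n| ^ 2 ≤ 2 / π * (2 / Real.sin c) ^ 2 := by gcongr
      _ = _ := by ring
  have hmvt := (convex_Icc (π / 2) c).norm_image_sub_le_of_norm_hasDerivWithin_le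
    (fun t ht => (hasDerivAt_logDerivDet
      (shiftedDet_succ_ne_zero (h ht).1)).hasDerivWithinAt) hderiv
    (Set.left_mem_Icc.mpr hc.1) (Set.right_mem_Icc.mpr hc.1)
  rw [logDerivDet_pi_div_two, sub_zero, Real.norm_of_nonneg (sub_nonneg.mpr hc.1)] at hmvt
  calc |logDerivDet c (n + 1)| ≤ 2 / π * (4 / Real.sin c ^ 2) * (c - π / 2) := hmvt
    _ ≤ 2 / π * (4 / Real.sin c ^ 2) * (π / 2) := by gcongr; linarith [hc.2]
    _ = 4 / Real.sin c ^ 2 := by field_simp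

lemma abs_sesqRatioRe_le (hc : c ∈ Set.Ico (π / 2) π)
    (h : Set.Icc (π / 2) c ⊆ admissible n) :
    |sesqRatioRe c n| ≤ 7 / (Real.sin c ^ 2 * (n + 1)) := by
  have hsin := sin_pos_of_mem_Ico hc
  have hmem : c ∈ admissible n := h (Set.right_mem_Icc.mpr hc.1)
  have hosc : |2 / π * realForm c n * (bilinRatio c n).im| ≤ 3 / Real.sin c ^ 2 := by
    rw [abs_mul, abs_mul, abs_of_pos (by positivity : 0 < 2 / π)]
    calc 2 / π * |realForm c n| * |(bilinRatio c n).im| ≤ 2 / 3 * (2 / Real.sin c) * 2 := by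
          gcongr
          · exact Real.pi_gt_three.le
          · exact abs_realForm_le hmem hc
          · exact (abs_im_le_norm _).trans (norm_bilinRatio_le hmem)
      _ ≤ 3 / Real.sin c := by ring_nf; gcongr; norm_num
      _ ≤ 3 / Real.sin c ^ 2 := by
          gcongr
          exact pow_le_of_le_one hsin.le (Real.sin_le_one c) two_ne_zero
  have hr : (n + 1) * sesqRatioRe c n =
      logDerivDet c (n + 1) + 2 / π * realForm c n * (bilinRatio c n).im := by
    rw [logDerivDet_eq hmem.1]
    ring
  have hbound : (n + 1 : ℝ) * |sesqRatioRe c n| ≤ 7 / Real.sin c ^ 2 := by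
    rw [← abs_of_pos (n.cast_add_one_pos (α := ℝ)), ← abs_mul, hr]
    refine (abs_add_le _ _).trans ((add_le_add (abs_logDerivDet_le hc h) hosc).trans_eq ?_)
    ring
  rw [le_div_iff₀ (by positivity)] at hbound ⊢
  linarith

lemma hasDerivAt_shiftedDet_of_cornerInv_ne_zero (hx : cornerInv t n ≠ 0) :
    HasDerivAt (fun s => shiftedDet s n)
      (2 / π * (logDerivDet t (n + 1) - sesqRatioRe t n) * shiftedDet t n) t := by
  have h := shiftedDet_succ_ne_zero hx
  have hprod : (fun s => shiftedDet s n) =ᶠ[𝓝 t]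
      fun s => cornerInv s n * shiftedDet s (n + 1) := by
    filter_upwards [(continuous_shiftedDet (n + 1)).continuousAt.eventually_ne h] with s hs
    exact shiftedDet_eq_cornerInv_mul hs
  refine (((hasDerivAt_cornerInv hx).mul (hasDerivAt_shiftedDet h)).congr_of_eventuallyEq
    hprod).congr_deriv ?_
  rw [shiftedDet_eq_cornerInv_mul h]
  ring

lemma cornerInv_ne_zero_of_Ico_subset_admissible (hc : c ∈ Set.Ico (π / 2) π)
    (h : Set.Ico (π / 2) c ⊆ admissible n) : cornerInv c n ≠ 0 := by
  have hA (t : ℝ) (ht : t ∈ Set.Ioo (π / 2) c) :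
      |logDerivDet t (n + 1)| ≤ 4 / Real.sin c ^ 2 := by
    have hsin := sin_pos_of_mem_Ico hc
    refine (abs_logDerivDet_le ⟨ht.1.le, ht.2.trans hc.2⟩
      ((Set.Icc_subset_Ico_right ht.2).trans h)).trans ?_
    gcongr
    exact sin_le_sin_of_mem_Icc hc.2 ⟨ht.1.le, ht.2.le⟩
  have hmem {t : ℝ} (ht : t ∈ Set.Ioo (π / 2) c) : t ∈ admissible n := h ⟨ht.1.le, ht.2⟩
  rw [cornerInv_ne_zero_iff]
  constructor
  · refine ne_zero_of_hasDerivAt_mul (Λ := 2 / π * (4 / Real.sin c ^ 2)) hc.1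
      (continuous_shiftedDet (n + 1)).continuousOn
      (fun t ht => hasDerivAt_shiftedDet (shiftedDet_succ_ne_zero (hmem ht).1)) (fun t ht => ?_)
      (shiftedDet_pi_div_two_ne_zero _)
    rw [abs_mul, abs_of_pos (by positivity)]
    gcongr
    exact hA t ht
  · refine ne_zero_of_hasDerivAt_mul (Λ := 2 / π * (4 / Real.sin c ^ 2 + 1)) hc.1
      (continuous_shiftedDet n).continuousOn
      (fun t ht => hasDerivAt_shiftedDet_of_cornerInv_ne_zero (hmem ht).1) (fun t ht => ?_)
      (shiftedDet_pi_div_two_ne_zero _)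
    rw [abs_mul, abs_of_pos (by positivity)]
    gcongr
    exact (abs_sub _ _).trans (add_le_add (hA t ht) (hmem ht).2.le)

lemma Icc_subset_admissible (hb : b ∈ Set.Ico (π / 2) π)
    (hn : 7 / (Real.sin b ^ 2 * (n + 1)) < 1) : Set.Icc (π / 2) b ⊆ admissible n := by
  have hsinb := sin_pos_of_mem_Ico hb
  refine Icc_subset_of_isOpen (isOpen_admissible n)
    ⟨cornerInv_pi_div_two_ne_zero n, by simp [sesqRatioRe_pi_div_two]⟩ fun c hc h => ?_
  have hc' : c ∈ Set.Ico (π / 2) π := ⟨hc.1.le, hc.2.trans_lt hb.2⟩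
  have hx := cornerInv_ne_zero_of_Ico_subset_admissible hc' h
  refine ⟨hx, lt_of_le_of_lt (le_of_tendsto (x := 𝓝[<] c)
    (continuousAt_sesqRatioRe hx).abs.continuousWithinAt ?_) hn⟩
  filter_upwards [Ico_mem_nhdsLT hc.1] with t ht
  refine (abs_sesqRatioRe_le ⟨ht.1, ht.2.trans hc'.2⟩
    ((Set.Icc_subset_Ico_right ht.2).trans h)).trans ?_
  gcongr
  exact sin_le_sin_of_mem_Icc hb.2 ⟨ht.1, ht.2.le.trans hc.2⟩

end Continuation

section UniformBounds

open Asymptotics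

variable {ι E : Type*} [NormedAddCommGroup E] {l : Filter ι} {a b : ℝ}

lemma isBigO_sub_left_of_hasDerivAt [NormedSpace ℝ E] {F F' : ι → ℝ → E} {u : ι → ℝ}
    (hF : ∀ᶠ p in l ×ˢ 𝓟 (Set.Icc a b), HasDerivAt (F p.1) (F' p.1 p.2) p.2)
    (hF' : (fun p : ι × ℝ => F' p.1 p.2) =O[l ×ˢ 𝓟 (Set.Icc a b)] fun p => u p.1) :
    (fun p : ι × ℝ => F p.1 p.2 - F p.1 a) =O[l ×ˢ 𝓟 (Set.Icc a b)] fun p => u p.1 := by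
  obtain ⟨C, hC⟩ := hF'.bound
  refine IsBigO.of_bound (C * (b - a)) ?_
  rw [eventually_prod_principal_iff] at *
  filter_upwards [hF, hC] with i hd hbd t ht
  have hmvt := norm_image_sub_le_of_norm_deriv_le_segment'
    (fun x hx => (hd x hx).hasDerivWithinAt) (fun x hx => hbd x ⟨hx.1, hx.2.le⟩) t ht
  have hnonneg : 0 ≤ C * ‖u i‖ := (norm_nonneg _).trans (hbd t ht)
  calc ‖F i t - F i a‖ ≤ C * ‖u i‖ * (t - a) := hmvt
    _ ≤ C * ‖u i‖ * (b - a) := by gcongr; exact ht.2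
    _ = C * (b - a) * ‖u i‖ := by ring

lemma isBigO_one_of_continuousOn {f : ℝ → E} (hf : ContinuousOn f (Set.Icc a b)) :
    (fun p : ι × ℝ => f p.2) =O[l ×ˢ 𝓟 (Set.Icc a b)] fun _ => (1 : ℝ) := by
  obtain ⟨C, hC⟩ := isCompact_Icc.exists_bound_of_continuousOn hf
  refine IsBigO.of_bound C (eventually_prod_principal_iff.mpr ?_)
  refine Eventually.of_forall fun i t ht => ?_
  simpa using hC t ht

lemma tendsto_prodMk_principal {t : ℝ} (ht : t ∈ Set.Icc a b) :
    Tendsto (fun i => (i, t)) l (l ×ˢ 𝓟 (Set.Icc a b)) :=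
  tendsto_id.prodMk (tendsto_principal.mpr (Eventually.of_forall fun _ => ht))

/- Integration by parts: `ξ` is the derivative of `(i/ν) ξ` up to `O(1/ν)`. -/
lemma isBigO_sub_left_of_oscillating {F F' : ι → ℝ → ℝ} {ξ ξ' : ι → ℝ → ℂ} {ν : ι → ℝ}
    (hab : a ≤ b) (hν : ∀ᶠ i in l, ν i ≠ 0)
    (hF : ∀ᶠ p in l ×ˢ 𝓟 (Set.Icc a b), HasDerivAt (F p.1) (F' p.1 p.2) p.2)
    (hξ : ∀ᶠ p in l ×ˢ 𝓟 (Set.Icc a b), HasDerivAt (ξ p.1) (ξ' p.1 p.2) p.2)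
    (hξ_bdd : (fun p : ι × ℝ => ξ p.1 p.2) =O[l ×ˢ 𝓟 (Set.Icc a b)] fun _ => (1 : ℝ))
    (hξ' : (fun p : ι × ℝ => ξ' p.1 p.2 + I * ν p.1 * ξ p.1 p.2) =O[l ×ˢ 𝓟 (Set.Icc a b)]
      fun _ => (1 : ℝ))
    (hF' : (fun p : ι × ℝ => F' p.1 p.2 - (ξ p.1 p.2).re) =O[l ×ˢ 𝓟 (Set.Icc a b)]
      fun p => (ν p.1)⁻¹) :
    (fun p : ι × ℝ => F p.1 p.2 - F p.1 a) =O[l ×ˢ 𝓟 (Set.Icc a b)] fun p => (ν p.1)⁻¹ := by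
  set L := l ×ˢ 𝓟 (Set.Icc a b)
  have hmul {f : ι × ℝ → ℂ} (hf : f =O[L] fun _ => (1 : ℝ)) :
      (fun p => (I / ν p.1 * f p).re) =O[L] fun p => (ν p.1)⁻¹ := by
    have hprod : (fun p => (ν p.1)⁻¹ * ‖f p‖) =O[L] fun p => (ν p.1)⁻¹ := by
      simpa using (isBigO_refl (fun p : ι × ℝ => (ν p.1)⁻¹) L).mul hf.norm_left
    refine (IsBigO.of_bound 1 (Eventually.of_forall fun p => ?_)).trans hprod
    simpa using abs_re_le_norm (I / ν p.1 * f p)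
  have hdiff := isBigO_sub_left_of_hasDerivAt (l := l) (a := a) (b := b) (u := fun i => (ν i)⁻¹)
    (F := fun i t => F i t - (I / ν i * ξ i t).re)
    (F' := fun i t => F' i t - (ξ i t).re - (I / ν i * (ξ' i t + I * ν i * ξ i t)).re)
    (by
      filter_upwards [hF, hξ, tendsto_fst.eventually hν] with p hFp hξp hνp
      refine (hFp.sub (reCLM.hasFDerivAt.comp_hasDerivAt p.2
        (hξp.const_mul (I / (ν p.1 : ℂ))))).congr_deriv ?_
      have hν' : (ν p.1 : ℂ) ≠ 0 := mod_cast hνp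
      have hI : I / ν p.1 * (ξ' p.1 p.2 + I * ν p.1 * ξ p.1 p.2) =
          I / ν p.1 * ξ' p.1 p.2 - ξ p.1 p.2 := by
        field_simp
        linear_combination (ν p.1 * ξ p.1 p.2 : ℂ) * I_sq
      rw [hI, sub_re, reCLM_apply]
      ring)
    (hF'.sub (hmul hξ'))
  have hleft : (fun p : ι × ℝ => ξ p.1 a) =O[L] fun _ => (1 : ℝ) :=
    (hξ_bdd.comp_tendsto (tendsto_prodMk_principal (Set.left_mem_Icc.mpr hab))).comp_tendsto
      tendsto_fst
  refine ((hdiff.add (hmul hξ_bdd)).sub (hmul hleft)).congr_left fun p => ?_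
  ring

end UniformBounds

section AngularAsymptotics

open Asymptotics

/-- Convergence as the order tends to infinity, uniformly in the angle on `[π/2, b]`. -/
abbrev uniformFilter (b : ℝ) : Filter (ℕ × ℝ) := atTop ×ˢ 𝓟 (Set.Icc (π / 2) b)

variable {b t : ℝ} {n : ℕ}

lemma eventually_Icc_subset_admissible (hb : b ∈ Set.Ico (π / 2) π) :
    ∀ᶠ n in atTop, Set.Icc (π / 2) b ⊆ admissible n := by
  have hsin := sin_pos_of_mem_Ico hb
  have hlim : Tendsto (fun n : ℕ => 7 / (Real.sin b ^ 2 * ((n : ℝ) + 1))) atTop (𝓝 0) :=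
    ((tendsto_atTop_add_const_right _ _ tendsto_natCast_atTop_atTop).const_mul_atTop
      (by positivity)).const_div_atTop 7
  filter_upwards [hlim.eventually_lt_const one_pos] with n hn using Icc_subset_admissible hb hn

lemma eventually_mem_admissible (hb : b ∈ Set.Ico (π / 2) π) :
    ∀ᶠ p in uniformFilter b, p.2 ∈ admissible p.1 := by
  rw [eventually_prod_principal_iff]
  filter_upwards [eventually_Icc_subset_admissible hb] with n hn t ht using hn ht

lemma eventually_mem_Icc : ∀ᶠ p in uniformFilter b, p.2 ∈ Set.Icc (π / 2) b :=
  eventually_prod_principal_iff.mpr (Eventually.of_forall fun _ _ ht => ht)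

lemma isBigO_sesqRatioRe (hb : b ∈ Set.Ico (π / 2) π) :
    (fun p : ℕ × ℝ => sesqRatioRe p.2 p.1) =O[uniformFilter b] fun p => (p.1 : ℝ)⁻¹ := by
  have hsin := sin_pos_of_mem_Ico hb
  refine IsBigO.of_bound (7 / Real.sin b ^ 2) (eventually_prod_principal_iff.mpr ?_)
  filter_upwards [eventually_Icc_subset_admissible hb, eventually_gt_atTop 0] with n hn hpos t ht
  have : (0 : ℝ) < n := mod_cast hpos
  calc |sesqRatioRe t n| ≤ 7 / (Real.sin t ^ 2 * (n + 1)) :=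
        abs_sesqRatioRe_le ⟨ht.1, ht.2.trans_lt hb.2⟩ ((Set.Icc_subset_Icc_right ht.2).trans hn)
    _ ≤ 7 / (Real.sin b ^ 2 * n) := by
        gcongr
        · exact sin_le_sin_of_mem_Icc hb.2 ht
        · linarith
    _ = 7 / Real.sin b ^ 2 * ‖(n : ℝ)⁻¹‖ := by
        rw [Real.norm_of_nonneg (by positivity), ← div_div, div_eq_mul_inv _ (n : ℝ)]

lemma isBigO_natCast_inv_one :
    (fun p : ℕ × ℝ => (p.1 : ℝ)⁻¹) =O[uniformFilter b] fun _ => (1 : ℝ) :=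
  ((tendsto_inv_atTop_zero.comp tendsto_natCast_atTop_atTop).isBigO_one ℝ).comp_tendsto
    tendsto_fst

lemma isBigO_bilinRatio (hb : b ∈ Set.Ico (π / 2) π) :
    (fun p : ℕ × ℝ => bilinRatio p.2 p.1) =O[uniformFilter b] fun _ => (1 : ℝ) := by
  refine IsBigO.of_bound 2 ?_
  filter_upwards [eventually_mem_admissible hb] with p hp
  simpa using norm_bilinRatio_le hp

lemma isBigO_realForm (hb : b ∈ Set.Ico (π / 2) π) :
    (fun p : ℕ × ℝ => realForm p.2 p.1) =O[uniformFilter b] fun _ => (1 : ℝ) := by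
  refine IsBigO.of_bound (2 / Real.sin b) ?_
  filter_upwards [eventually_mem_admissible hb, eventually_mem_Icc] with p hp ht
  rw [norm_one, mul_one]
  refine (abs_realForm_le hp ⟨ht.1, ht.2.trans_lt hb.2⟩).trans ?_
  gcongr
  · exact sin_pos_of_mem_Ico hb
  · exact sin_le_sin_of_mem_Icc hb.2 ht

lemma isBigO_deriv_bilinRatio_add (hb : b ∈ Set.Ico (π / 2) π) :
    (fun p : ℕ × ℝ => -((4 / π * realForm p.2 p.1 * sesqRatioRe p.2 p.1 : ℝ) : ℂ) +
      ((2 / π * sesqRatioRe p.2 p.1 : ℝ) : ℂ) * bilinRatio p.2 p.1) =O[uniformFilter b]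
        fun p => (p.1 : ℝ)⁻¹ := by
  have hr := isBigO_sesqRatioRe hb
  have hreal : (fun p : ℕ × ℝ => 4 / π * realForm p.2 p.1 * sesqRatioRe p.2 p.1)
      =O[uniformFilter b] fun p => (p.1 : ℝ)⁻¹ := by
    simpa using ((isBigO_realForm hb).const_mul_left (4 / π)).mul hr
  have hcomplex : (fun p : ℕ × ℝ => ((2 / π * sesqRatioRe p.2 p.1 : ℝ) : ℂ) * bilinRatio p.2 p.1)
      =O[uniformFilter b] fun p => (p.1 : ℝ)⁻¹ := by
    simpa using (isBigO_ofReal_left.mpr (hr.const_mul_left (2 / π))).mul (isBigO_bilinRatio hb)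
  exact (isBigO_ofReal_left.mpr hreal).neg_left.add hcomplex

/- The product `h · bilinRatio²` oscillates like `e^{-2int}`. -/
lemma isBigO_sub_left_of_sub_mul_bilinRatio_sq (hb : b ∈ Set.Ico (π / 2) π) {h : ℝ → ℂ}
    (hh : ∀ t ∈ Set.Icc (π / 2) b, ContDiffAt ℝ 1 h t) {F F' : ℕ → ℝ → ℝ}
    (hF : ∀ᶠ p in uniformFilter b, HasDerivAt (F p.1) (F' p.1 p.2) p.2)
    (hF' : (fun p : ℕ × ℝ => F' p.1 p.2 - (h p.2 * bilinRatio p.2 p.1 ^ 2).re)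
      =O[uniformFilter b] fun p => (p.1 : ℝ)⁻¹) :
    (fun p : ℕ × ℝ => F p.1 p.2 - F p.1 (π / 2)) =O[uniformFilter b] fun p => (p.1 : ℝ)⁻¹ := by
  have hh_bdd := isBigO_one_of_continuousOn (l := (atTop : Filter ℕ)) (f := h)
    fun t ht => (hh t ht).continuousAt.continuousWithinAt
  have hderiv_bdd := isBigO_one_of_continuousOn (l := (atTop : Filter ℕ)) (f := deriv h)
    fun t ht => (((hh t ht).continuousAt_fderiv one_ne_zero).clm_apply
      continuousAt_const).continuousWithinAt
  have hz := isBigO_bilinRatio hb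
  have hinv : (fun p : ℕ × ℝ => (2 * (p.1 : ℝ))⁻¹) =Θ[uniformFilter b] fun p => (p.1 : ℝ)⁻¹ := by
    simpa only [_root_.mul_inv] using
      (isTheta_refl (fun p : ℕ × ℝ => (p.1 : ℝ)⁻¹) _).const_mul_left (inv_ne_zero two_ne_zero)
  set err : ℕ → ℝ → ℂ := fun n t => -((4 / π * realForm t n * sesqRatioRe t n : ℝ) : ℂ) +
    ((2 / π * sesqRatioRe t n : ℝ) : ℂ) * bilinRatio t n
  have herr := (isBigO_deriv_bilinRatio_add hb).trans isBigO_natCast_inv_one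
  refine (isBigO_sub_left_of_oscillating (ν := fun n => 2 * (n : ℝ))
    (ξ := fun n t => h t * bilinRatio t n ^ 2)
    (ξ' := fun n t => deriv h t * bilinRatio t n ^ 2 + h t *
      (2 * bilinRatio t n * (-(I * n * bilinRatio t n) + err n t)))
    hb.1 ?_ hF ?_ ?_ ?_ (hF'.trans hinv.symm.isBigO)).trans hinv.isBigO
  · filter_upwards [eventually_gt_atTop 0] with n hn
    positivity
  · filter_upwards [eventually_mem_admissible hb, eventually_mem_Icc] with p hp ht
    refine (((hh p.2 ht).differentiableAt one_ne_zero).hasDerivAt.mul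
      ((hasDerivAt_bilinRatio hp.1).pow 2)).congr_deriv ?_
    simp only [err, Pi.pow_apply]
    push_cast
    ring
  · simpa using hh_bdd.mul (hz.pow 2)
  · have hfst := hderiv_bdd.mul (hz.pow 2)
    have hsnd := (hh_bdd.mul (hz.mul herr)).const_mul_left 2
    simp only [one_pow, mul_one] at hfst hsnd
    refine (hfst.add hsnd).congr_left fun p => ?_
    simp only [err]
    push_cast
    ring

lemma realForm_eq (hx : cornerInv t n ≠ 0) (hs : Real.sin t ≠ 0) :
    realForm t n = -(conj (phase t) * bilinRatio t n).im / Real.sin t := by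
  rw [← realForm_mul_sin hx]
  field_simp

lemma realForm_sq (hx : cornerInv t n ≠ 0) (hs : Real.sin t ≠ 0) :
    realForm t n ^ 2 = (‖bilinRatio t n‖ ^ 2 -
      (conj (phase t) ^ 2 * bilinRatio t n ^ 2).re) / (2 * Real.sin t ^ 2) := by
  have hnorm : ‖bilinRatio t n‖ = ‖conj (phase t) * bilinRatio t n‖ := by
    rw [norm_mul, RCLike.norm_conj, norm_phase, one_mul]
  rw [realForm_eq hx hs, hnorm, ← mul_pow, ← normSq_eq_norm_sq, normSq_apply,
    sq (conj _ * _), mul_re (conj _ * _)]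
  field_simp
  ring

lemma realForm_mul_bilinRatio_im (hx : cornerInv t n ≠ 0) (hs : Real.sin t ≠ 0) :
    realForm t n * (bilinRatio t n).im = ((conj (phase t) * bilinRatio t n ^ 2).re -
      ‖bilinRatio t n‖ ^ 2 * Real.cos t) / (2 * Real.sin t) := by
  rw [realForm_eq hx hs, ← normSq_eq_norm_sq, normSq_apply]
  simp only [mul_re, mul_im, conj_re, conj_im, phase_re, phase_im, sq]
  field_simp
  ring

lemma contDiff_conj_phase : ContDiff ℝ 1 fun t => conj (phase t) := by
  have h : ContDiff ℝ 1 fun t : ℝ => exp (ofRealCLM t * I) :=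
    (ofRealCLM.contDiff.mul contDiff_const).cexp
  exact conjCLE.toContinuousLinearMap.contDiff.comp h

lemma contDiffAt_conj_phase_pow_mul {f : ℝ → ℝ} (hf : ContDiffAt ℝ 1 f t) (k : ℕ) :
    ContDiffAt ℝ 1 (fun s => conj (phase s) ^ k * (f s : ℂ)) t :=
  (contDiff_conj_phase.contDiffAt.pow k).mul (ofRealCLM.contDiff.contDiffAt.comp t hf)

lemma contDiffAt_inv_sin_pow (ht : t ∈ Set.Ico (π / 2) π) (k : ℕ) :
    ContDiffAt ℝ 1 (fun s => (Real.sin s ^ k)⁻¹) t :=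
  (Real.contDiff_sin.contDiffAt.pow k).inv (pow_ne_zero k (sin_pos_of_mem_Ico ht).ne')

lemma hasDerivAt_cos_div_sin (hs : Real.sin t ≠ 0) :
    HasDerivAt (fun s => Real.cos s / Real.sin s) (-(Real.sin t ^ 2)⁻¹) t := by
  refine ((Real.hasDerivAt_cos t).div (Real.hasDerivAt_sin t) hs).congr_deriv ?_
  rw [← one_div, ← Real.sin_sq_add_cos_sq t]
  ring

lemma isBigO_logDerivDet_sub (hb : b ∈ Set.Ico (π / 2) π) :
    (fun p : ℕ × ℝ => logDerivDet p.2 (p.1 + 1) - π / 4 * (Real.cos p.2 / Real.sin p.2))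
      =O[uniformFilter b] fun p => (p.1 : ℝ)⁻¹ := by
  have hmem {t : ℝ} (ht : t ∈ Set.Icc (π / 2) b) : t ∈ Set.Ico (π / 2) π :=
    ⟨ht.1, ht.2.trans_lt hb.2⟩
  have h := isBigO_sub_left_of_sub_mul_bilinRatio_sq hb
    (h := fun t => conj (phase t) ^ 2 * ((π⁻¹ * (Real.sin t ^ 2)⁻¹ : ℝ) : ℂ))
    (F := fun n t => logDerivDet t (n + 1) - π / 4 * (Real.cos t / Real.sin t))
    (F' := fun n t => -(2 / π) * realForm t n ^ 2 - π / 4 * -(Real.sin t ^ 2)⁻¹)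
    (fun t ht => contDiffAt_conj_phase_pow_mul
      (contDiffAt_const.mul (contDiffAt_inv_sin_pow (hmem ht) 2)) 2) ?_ ?_
  · simpa [logDerivDet_pi_div_two] using h
  · filter_upwards [eventually_mem_admissible hb, eventually_mem_Icc] with p hp ht
    exact (hasDerivAt_logDerivDet (shiftedDet_succ_ne_zero hp.1)).sub
      ((hasDerivAt_cos_div_sin (sin_pos_of_mem_Ico (hmem ht)).ne').const_mul _)
  · have hr := isBigO_sesqRatioRe hb
    have hbound := ((hr.trans isBigO_natCast_inv_one).mul hr).mul
      (isBigO_one_of_continuousOn (l := (atTop : Filter ℕ)) (f := fun t => (Real.sin t ^ 2)⁻¹)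
        fun t ht => (contDiffAt_inv_sin_pow (hmem ht) 2).continuousAt.continuousWithinAt)
    simp only [one_mul, mul_one] at hbound
    refine (hbound.const_mul_left (-π⁻¹)).congr' ?_ EventuallyEq.rfl
    filter_upwards [eventually_mem_admissible hb, eventually_mem_Icc] with p hp ht
    have hs := (sin_pos_of_mem_Ico (hmem ht)).ne'
    rw [mul_right_comm (conj _ ^ 2), re_mul_ofReal, realForm_sq hp.1 hs, norm_bilinRatio_sq hp.1]
    field_simp
    ring

lemma hasDerivAt_log_norm {f : ℝ → ℂ} {f' : ℂ} (hf : HasDerivAt f f' t) (h : f t ≠ 0) :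
    HasDerivAt (fun s => Real.log ‖f s‖) (f' / f t).re t := by
  have hlog (s : ℝ) : Real.log ‖f s‖ = 1 / 2 * Real.log (‖f s‖ ^ 2) := by
    rw [Real.log_pow]
    push_cast
    ring
  simp only [hlog]
  refine ((hf.norm_sq.log (by positivity)).const_mul (1 / 2)).congr_deriv ?_
  rw [Complex.inner, div_re, ← normSq_eq_norm_sq, mul_re, conj_re, conj_im]
  ring

lemma bilinRatio_ne_zero (hx : cornerInv t n ≠ 0) : bilinRatio t n ≠ 0 := by
  intro h
  have hsq := norm_bilinRatio_sq hx
  rw [h, norm_zero] at hsq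
  nlinarith [sq_nonneg (sesqRatioRe t n), Real.pi_pos]

lemma norm_leftSquare_ne_zero (hx : cornerInv t n ≠ 0) : ‖leftSquare t n‖ ≠ 0 := by
  refine left_ne_zero_of_mul (b := ‖rightSquare t n‖) ?_
  rw [norm_leftSquare_mul_norm_rightSquare hx]
  have hz := norm_ne_zero_iff.mpr (bilinRatio_ne_zero hx)
  exact mul_ne_zero (pow_ne_zero 2 hx) (pow_ne_zero 2 hz)

lemma leftSquare_div_norm (hx : cornerInv t n ≠ 0) :
    leftSquare t n / (‖leftSquare t n‖ : ℂ) =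
      bilinRatio t n * sesqRatio t n / ((‖bilinRatio t n‖ ^ 2 : ℝ) : ℂ) := by
  have hnorm := congrArg ofReal (norm_leftSquare_mul_norm_rightSquare hx)
  have hprod := leftSquare_mul_norm_rightSquare hx
  have hx' : (cornerInv t n : ℂ) ≠ 0 := mod_cast hx
  have hz : (‖bilinRatio t n‖ : ℂ) ≠ 0 := mod_cast norm_ne_zero_iff.mpr (bilinRatio_ne_zero hx)
  have hW : (‖leftSquare t n‖ : ℂ) ≠ 0 := mod_cast norm_leftSquare_ne_zero hx
  push_cast at hnorm ⊢
  rw [div_eq_div_iff hW (pow_ne_zero 2 hz)]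
  refine mul_left_cancel₀ (pow_ne_zero 2 hx') ?_
  linear_combination (-leftSquare t n) * hnorm + (‖leftSquare t n‖ : ℂ) * hprod

end AngularAsymptotics

section LimitsAtFixedAngle

open Asymptotics

variable {b t : ℝ} {n : ℕ}

lemma tendsto_sub_of_isBigO_inv {F : ℕ → ℝ → ℝ} (hb : b ∈ Set.Ico (π / 2) π)
    (hF : (fun p : ℕ × ℝ => F p.1 p.2 - F p.1 (π / 2)) =O[uniformFilter b]
      fun p => (p.1 : ℝ)⁻¹) :
    Tendsto (fun n => F n b - F n (π / 2)) atTop (𝓝 0) :=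
  (hF.comp_tendsto (tendsto_prodMk_principal (Set.right_mem_Icc.mpr hb.1))).trans_tendsto
    (tendsto_inv_atTop_zero.comp tendsto_natCast_atTop_atTop)

lemma hasDerivAt_log_sin (hs : Real.sin t ≠ 0) :
    HasDerivAt (fun s => Real.log (Real.sin s)) (Real.cos t / Real.sin t) t :=
  (Real.hasDerivAt_sin t).log hs

lemma isBigO_log_shiftedDet_sub (hb : b ∈ Set.Ico (π / 2) π) :
    (fun p : ℕ × ℝ => (Real.log (shiftedDet p.2 (p.1 + 1)) - 1 / 2 * Real.log (Real.sin p.2)) -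
      (Real.log (shiftedDet (π / 2) (p.1 + 1)) - 1 / 2 * Real.log (Real.sin (π / 2))))
      =O[uniformFilter b] fun p => (p.1 : ℝ)⁻¹ := by
  refine isBigO_sub_left_of_hasDerivAt (u := fun n : ℕ => (n : ℝ)⁻¹)
    (F := fun n t => Real.log (shiftedDet t (n + 1)) - 1 / 2 * Real.log (Real.sin t))
    (F' := fun n t => 2 / π * (logDerivDet t (n + 1) - π / 4 * (Real.cos t / Real.sin t)))
    ?_ ((isBigO_logDerivDet_sub hb).const_mul_left (2 / π))
  filter_upwards [eventually_mem_admissible hb, eventually_mem_Icc] with p hp ht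
  have hE := shiftedDet_succ_ne_zero hp.1
  have hs := (sin_pos_of_mem_Ico ⟨ht.1, ht.2.trans_lt hb.2⟩).ne'
  refine (((hasDerivAt_shiftedDet hE).log hE).sub
    ((hasDerivAt_log_sin hs).const_mul (1 / 2))).congr_deriv ?_
  field_simp
  ring

lemma shiftedDet_succ_pos (hb : π / 2 ≤ b) (h : Set.Icc (π / 2) b ⊆ admissible n) :
    0 < shiftedDet b (n + 1) := by
  by_contra! hneg
  obtain ⟨t, ht, hzero⟩ := intermediate_value_Icc' hb (continuous_shiftedDet (n + 1)).continuousOn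
    ⟨hneg, (shiftedDet_pi_div_two_pos (n + 1)).le⟩
  exact shiftedDet_succ_ne_zero (h ht).1 hzero

lemma tendsto_shiftedDet_div (hb : b ∈ Set.Ico (π / 2) π) :
    Tendsto (fun n => shiftedDet b (n + 1) / shiftedDet (π / 2) (n + 1)) atTop
      (𝓝 √(Real.sin b)) := by
  have hs := sin_pos_of_mem_Ico hb
  have hlog := tendsto_sub_of_isBigO_inv
    (F := fun n t => Real.log (shiftedDet t (n + 1)) - 1 / 2 * Real.log (Real.sin t))
    hb (isBigO_log_shiftedDet_sub hb)
  have hexp := ((Real.continuous_exp.tendsto _).comp hlog).mul_const √(Real.sin b)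
  rw [Real.exp_zero, one_mul] at hexp
  refine hexp.congr' ?_
  filter_upwards [eventually_Icc_subset_admissible hb] with n hn
  have hE := shiftedDet_succ_pos hb.1 hn
  have hE₀ := shiftedDet_pi_div_two_pos (n + 1)
  have hsqrt : 0 < √(Real.sin b) := Real.sqrt_pos.mpr hs
  rw [Function.comp_apply, Real.sin_pi_div_two, Real.log_one, mul_zero, sub_zero,
    one_div_mul_eq_div, ← Real.log_sqrt hs.le, Real.exp_sub, Real.exp_sub, Real.exp_log hE,
    Real.exp_log hE₀, Real.exp_log hsqrt]
  field_simp

lemma norm_div_self_re (w : ℂ) : ((‖w‖ : ℂ) / w).re = (w / (‖w‖ : ℂ)).re := by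
  rcases eq_or_ne w 0 with rfl | hw
  · simp
  have hnorm : ‖w‖ ≠ 0 := norm_ne_zero_iff.mpr hw
  rw [div_ofReal_re, div_re, ofReal_re, ofReal_im, normSq_eq_norm_sq]
  field_simp
  ring

lemma hasDerivAt_log_norm_leftSquare (hx : cornerInv t n ≠ 0) :
    HasDerivAt (fun s => Real.log ‖leftSquare s n‖)
      (-(4 / π * realForm t n * (sesqRatioRe t n * (bilinRatio t n).re -
        π / 2 * (bilinRatio t n).im) / ‖bilinRatio t n‖ ^ 2)) t := by
  have hW := norm_ne_zero_iff.mp (norm_leftSquare_ne_zero hx)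
  refine (hasDerivAt_log_norm (hasDerivAt_leftSquare (shiftedDet_succ_ne_zero hx))
    hW).congr_deriv ?_
  have hsplit : (-(I * (n + 1) * leftSquare t n) -
      ((4 / π * realForm t n * ‖leftSquare t n‖ : ℝ) : ℂ)) / leftSquare t n =
      ((-(n + 1) : ℝ) : ℂ) * I -
        ((4 / π * realForm t n : ℝ) : ℂ) * ((‖leftSquare t n‖ : ℂ) / leftSquare t n) := by
    field_simp
    push_cast
    ring
  rw [hsplit, sub_re, re_ofReal_mul, re_ofReal_mul, norm_div_self_re, leftSquare_div_norm hx,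
    sesqRatio_eq hx, div_ofReal_re]
  simp only [I_re, mul_re, add_re, add_im, mul_im, ofReal_re, ofReal_im, I_im]
  ring

lemma isBigO_inv_norm_bilinRatio_sq (hb : b ∈ Set.Ico (π / 2) π) :
    (fun p : ℕ × ℝ => (‖bilinRatio p.2 p.1‖ ^ 2)⁻¹) =O[uniformFilter b] fun _ => (1 : ℝ) := by
  refine IsBigO.of_bound ((π / 2) ^ 2)⁻¹ ?_
  filter_upwards [eventually_mem_admissible hb] with p hp
  rw [norm_one, mul_one, norm_bilinRatio_sq hp.1, Real.norm_of_nonneg (by positivity)]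
  gcongr
  exact le_add_of_nonneg_left (sq_nonneg _)

lemma deriv_log_norm_leftSquare_mul_sin_sub (hx : cornerInv t n ≠ 0) (hs : Real.sin t ≠ 0) :
    -(4 / π * realForm t n * (sesqRatioRe t n * (bilinRatio t n).re -
        π / 2 * (bilinRatio t n).im) / ‖bilinRatio t n‖ ^ 2) + Real.cos t / Real.sin t -
      (conj (phase t) * ((4 / π ^ 2 * (Real.sin t)⁻¹ : ℝ) : ℂ) * bilinRatio t n ^ 2).re =
    -(sesqRatioRe t n * ((4 / π * (realForm t n * (bilinRatio t n).re) + sesqRatioRe t n *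
        (conj (phase t) * ((4 / π ^ 2 * (Real.sin t)⁻¹ : ℝ) : ℂ) * bilinRatio t n ^ 2).re) *
      (‖bilinRatio t n‖ ^ 2)⁻¹)) := by
  have hnorm := norm_ne_zero_iff.mpr (bilinRatio_ne_zero hx)
  have hsq := norm_bilinRatio_sq hx
  have him := realForm_mul_bilinRatio_im hx hs
  rw [eq_div_iff (mul_ne_zero two_ne_zero hs)] at him
  rw [mul_right_comm (conj _), re_mul_ofReal]
  field_simp
  linear_combination 2 * π ^ 2 * him -
    8 * (conj (phase t) * bilinRatio t n ^ 2).re * hsq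

lemma isBigO_log_norm_leftSquare_sub (hb : b ∈ Set.Ico (π / 2) π) :
    (fun p : ℕ × ℝ => (Real.log ‖leftSquare p.2 p.1‖ + Real.log (Real.sin p.2)) -
      (Real.log ‖leftSquare (π / 2) p.1‖ + Real.log (Real.sin (π / 2))))
      =O[uniformFilter b] fun p => (p.1 : ℝ)⁻¹ := by
  have hmem {t : ℝ} (ht : t ∈ Set.Icc (π / 2) b) : t ∈ Set.Ico (π / 2) π :=
    ⟨ht.1, ht.2.trans_lt hb.2⟩
  have hosc (t : ℝ) (ht : t ∈ Set.Icc (π / 2) b) : ContDiffAt ℝ 1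
      (fun t => conj (phase t) ^ 1 * ((4 / π ^ 2 * (Real.sin t ^ 1)⁻¹ : ℝ) : ℂ)) t :=
    contDiffAt_conj_phase_pow_mul (contDiffAt_const.mul (contDiffAt_inv_sin_pow (hmem ht) 1)) 1
  simp only [pow_one] at hosc
  refine isBigO_sub_left_of_sub_mul_bilinRatio_sq hb hosc
    (F := fun n t => Real.log ‖leftSquare t n‖ + Real.log (Real.sin t))
    (F' := fun n t => -(4 / π * realForm t n * (sesqRatioRe t n * (bilinRatio t n).re -
        π / 2 * (bilinRatio t n).im) / ‖bilinRatio t n‖ ^ 2) + Real.cos t / Real.sin t) ?_ ?_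
  · filter_upwards [eventually_mem_admissible hb, eventually_mem_Icc] with p hp ht
    exact (hasDerivAt_log_norm_leftSquare hp.1).add
      (hasDerivAt_log_sin (sin_pos_of_mem_Ico (hmem ht)).ne')
  · have hr := isBigO_sesqRatioRe hb
    have hz := isBigO_bilinRatio hb
    have hre : (fun p : ℕ × ℝ => (bilinRatio p.2 p.1).re) =O[uniformFilter b]
        fun _ => (1 : ℝ) := (isBigO_of_le _ fun p => abs_re_le_norm _).trans hz
    have hosc_bdd : (fun p : ℕ × ℝ => (conj (phase p.2) * ((4 / π ^ 2 * (Real.sin p.2)⁻¹ : ℝ) : ℂ) *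
        bilinRatio p.2 p.1 ^ 2).re) =O[uniformFilter b] fun _ => (1 : ℝ) := by
      refine (isBigO_of_le _ fun p => abs_re_le_norm _).trans ?_
      simpa using (isBigO_one_of_continuousOn (l := (atTop : Filter ℕ))
        fun t ht => (hosc t ht).continuousAt.continuousWithinAt).mul (hz.pow 2)
    have hbracket := (((isBigO_realForm hb).mul hre).const_mul_left (4 / π)).add
      ((hr.trans isBigO_natCast_inv_one).mul hosc_bdd)
    have hbound := (hr.mul (hbracket.mul (isBigO_inv_norm_bilinRatio_sq hb))).neg_left
    simp only [mul_one] at hbound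
    refine hbound.congr' ?_ EventuallyEq.rfl
    filter_upwards [eventually_mem_admissible hb, eventually_mem_Icc] with p hp ht
    exact (deriv_log_norm_leftSquare_mul_sin_sub hp.1 (sin_pos_of_mem_Ico (hmem ht)).ne').symm

lemma tendsto_norm_leftSquare_div (hb : b ∈ Set.Ico (π / 2) π) :
    Tendsto (fun n : ℕ => ‖leftSquare b n‖ / (n + 1)) atTop (𝓝 (π / 2 / Real.sin b)) := by
  have hs := sin_pos_of_mem_Ico hb
  have hlog := tendsto_sub_of_isBigO_inv
    (F := fun n t => Real.log ‖leftSquare t n‖ + Real.log (Real.sin t))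
    hb (isBigO_log_norm_leftSquare_sub hb)
  have hexp := (((Real.continuous_exp.tendsto _).comp hlog).mul
    tendsto_norm_leftSquare_pi_div_two).div_const (Real.sin b)
  rw [Real.exp_zero, one_mul] at hexp
  refine hexp.congr' ?_
  filter_upwards [eventually_Icc_subset_admissible hb] with n hn
  have hpos {t : ℝ} (ht : t ∈ Set.Icc (π / 2) b) : 0 < ‖leftSquare t n‖ :=
    (norm_nonneg _).lt_of_ne' (norm_leftSquare_ne_zero (hn ht).1)
  have hW := hpos (Set.right_mem_Icc.mpr hb.1)
  have hW₀ := hpos (Set.left_mem_Icc.mpr hb.1)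
  rw [Function.comp_apply, Real.sin_pi_div_two, Real.log_one, add_zero, Real.exp_sub,
    Real.exp_add, Real.exp_log hW, Real.exp_log hW₀, Real.exp_log hs]
  field_simp

lemma tendsto_sesqRatio (hb : b ∈ Set.Ico (π / 2) π) :
    Tendsto (fun n => sesqRatio b n) atTop (𝓝 ((π / 2 : ℝ) * I)) := by
  have hr : Tendsto (fun n => sesqRatioRe b n) atTop (𝓝 0) :=
    ((isBigO_sesqRatioRe hb).comp_tendsto
      (tendsto_prodMk_principal (Set.right_mem_Icc.mpr hb.1))).trans_tendsto
        (tendsto_inv_atTop_zero.comp tendsto_natCast_atTop_atTop)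
  have hlim := ((continuous_ofReal.tendsto _).comp hr).add_const (((π / 2 : ℝ) : ℂ) * I)
  rw [ofReal_zero, zero_add] at hlim
  refine hlim.congr' ?_
  filter_upwards [eventually_Icc_subset_admissible hb] with n hn
  exact (sesqRatio_eq (hn (Set.right_mem_Icc.mpr hb.1)).1).symm

lemma tendsto_bilinRatio_mul_phase_pow (hb : b ∈ Set.Ico (π / 2) π) :
    Tendsto (fun n => bilinRatio b n * phase b ^ n) atTop (𝓝 ((π / 2 : ℝ) : ℂ)) := by
  have hrot : (fun p : ℕ × ℝ => bilinRatio p.2 p.1 * phase p.2 ^ p.1 -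
      bilinRatio (π / 2) p.1 * phase (π / 2) ^ p.1) =O[uniformFilter b]
        fun p => (p.1 : ℝ)⁻¹ := by
    refine isBigO_sub_left_of_hasDerivAt (u := fun n : ℕ => (n : ℝ)⁻¹)
      (F := fun n t => bilinRatio t n * phase t ^ n)
      (F' := fun n t => (-((4 / π * realForm t n * sesqRatioRe t n : ℝ) : ℂ) +
        ((2 / π * sesqRatioRe t n : ℝ) : ℂ) * bilinRatio t n) * phase t ^ n) ?_ ?_
    · filter_upwards [eventually_mem_admissible hb] with p hp
      have hphase := hasDerivAt_phase_zpow p.1 p.2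
      simp only [zpow_natCast] at hphase
      refine ((hasDerivAt_bilinRatio hp.1).mul hphase).congr_deriv ?_
      push_cast
      ring
    · refine (isBigO_of_le _ fun p => ?_).trans (isBigO_deriv_bilinRatio_add hb)
      rw [norm_mul, norm_pow, norm_phase, one_pow, mul_one]
  have hlim := ((hrot.comp_tendsto
    (tendsto_prodMk_principal (Set.right_mem_Icc.mpr hb.1))).trans_tendsto
      (tendsto_inv_atTop_zero.comp tendsto_natCast_atTop_atTop)).add_const ((π / 2 : ℝ) : ℂ)
  rw [zero_add] at hlim
  refine hlim.congr fun n => ?_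
  have hbase : bilinRatio (π / 2) n * phase (π / 2) ^ n = ((π / 2 : ℝ) : ℂ) := by
    rw [bilinRatio_pi_div_two, phase_pi_div_two, mul_right_comm, ← mul_pow]
    simp
  rw [Function.comp_apply, hbase, sub_add_cancel]

lemma tendsto_leftSquare_div_norm_mul_phase_pow (hb : b ∈ Set.Ico (π / 2) π) :
    Tendsto (fun n => leftSquare b n / (‖leftSquare b n‖ : ℂ) * phase b ^ n) atTop (𝓝 I) := by
  have hz := tendsto_bilinRatio_mul_phase_pow hb
  have hπ : (((π / 2 : ℝ) : ℂ)) ≠ 0 := mod_cast (by positivity : π / 2 ≠ 0)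
  have hnorm : Tendsto (fun n => ((‖bilinRatio b n‖ ^ 2 : ℝ) : ℂ)) atTop
      (𝓝 (((π / 2) ^ 2 : ℝ) : ℂ)) := by
    refine (continuous_ofReal.tendsto _).comp ?_
    have hsq := hz.norm.pow 2
    simpa [norm_phase, abs_of_pos Real.pi_pos] using hsq
  have hlim := (hz.mul (tendsto_sesqRatio hb)).div hnorm
    (by rw [ofReal_pow]; exact pow_ne_zero 2 hπ)
  have hI : ((π / 2 : ℝ) : ℂ) * ((π / 2 : ℝ) * I) / (((π / 2) ^ 2 : ℝ) : ℂ) = I := by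
    rw [ofReal_pow]
    field_simp
  rw [hI] at hlim
  refine hlim.congr' ?_
  filter_upwards [eventually_Icc_subset_admissible hb] with n hn
  rw [Pi.div_apply, leftSquare_div_norm (hn (Set.right_mem_Icc.mpr hb.1)).1]
  ring

lemma tendsto_leftSquare_im_div_norm_sub_cos (hb : b ∈ Set.Ico (π / 2) π) :
    Tendsto (fun n : ℕ => (leftSquare b n).im / ‖leftSquare b n‖ - Real.cos (n * b)) atTop
      (𝓝 0) := by
  have hlim := ((tendsto_leftSquare_div_norm_mul_phase_pow hb).sub_const I).norm
  rw [sub_self, norm_zero] at hlim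
  refine squeeze_zero_norm (fun n => ?_) hlim
  have hcos : (I * conj (phase b) ^ n).im = Real.cos (n * b) := by
    rw [conj_phase_pow, I_mul_im, phase_zpow_re]
    push_cast
    rw [neg_mul, Real.cos_neg]
  have hconj := phase_pow_mul_conj b n
  have hfactor : (leftSquare b n).im / ‖leftSquare b n‖ - Real.cos (n * b) =
      ((leftSquare b n / (‖leftSquare b n‖ : ℂ) * phase b ^ n - I) *
        conj (phase b) ^ n).im := by
    rw [← hcos, ← div_ofReal_im, ← sub_im, sub_mul, mul_assoc, hconj, mul_one]
  rw [hfactor]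
  refine (abs_im_le_norm _).trans_eq ?_
  rw [norm_mul, norm_pow, RCLike.norm_conj, norm_phase, one_pow, mul_one]

lemma tendsto_mul_sub_mul_of_bounded {x y c : ℕ → ℝ} {L : ℝ} (hx : Tendsto x atTop (𝓝 L))
    (hy : Tendsto (fun n => y n - c n) atTop (𝓝 0)) (hc : c =O[atTop] fun _ => (1 : ℝ)) :
    Tendsto (fun n => x n * y n - L * c n) atTop (𝓝 0) := by
  have hsmall : Tendsto (fun n => (x n - L) * c n) atTop (𝓝 0) := by
    simpa using ((isLittleO_one_iff ℝ).mpr (tendsto_sub_nhds_zero_iff.mpr hx)).mul_isBigO hc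
  have hsum := (hx.mul hy).add hsmall
  rw [mul_zero, add_zero] at hsum
  exact hsum.congr fun n => by ring

lemma neg_one_pow_mul_self_mul (n : ℕ) (x : ℝ) : (-1) ^ n * ((-1) ^ n * x) = x := by
  rw [← mul_assoc, ← mul_pow, neg_one_mul, neg_neg, one_pow, one_mul]

lemma tendsto_stepDet_div_of_mem_Ico (hb : b ∈ Set.Ico (π / 2) π) :
    Tendsto (fun n : ℕ => (-1) ^ n * stepDet b n / shiftedDet (π / 2) (n + 1) -
      (√(Real.sin b))⁻¹ * Real.cos (n * b)) atTop (𝓝 0) := by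
  have hs := sin_pos_of_mem_Ico hb
  have hamp := ((tendsto_norm_leftSquare_div hb).mul (tendsto_shiftedDet_div hb)).const_mul (2 / π)
  have hlim : 2 / π * (π / 2 / Real.sin b * √(Real.sin b)) = (√(Real.sin b))⁻¹ := by
    have : 0 < √(Real.sin b) := Real.sqrt_pos.mpr hs
    nth_rw 1 [← Real.sq_sqrt hs.le]
    field_simp
  rw [hlim] at hamp
  refine (tendsto_mul_sub_mul_of_bounded hamp (tendsto_leftSquare_im_div_norm_sub_cos hb)
    (IsBigO.of_bound 1 ?_)).congr' ?_
  · exact Eventually.of_forall fun n => by simpa using Real.abs_cos_le_one (n * b)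
  filter_upwards [eventually_Icc_subset_admissible hb] with n hn
  have hx := (hn (Set.right_mem_Icc.mpr hb.1)).1
  have hW := norm_leftSquare_ne_zero hx
  have hcorner : lowerCorner b n = 2 / π * (leftSquare b n).im / (n + 1) :=
    eq_div_of_mul_eq (by positivity)
      ((mul_comm _ _).trans (succ_mul_lowerCorner (shiftedDet_succ_ne_zero hx)))
  rw [stepDet_eq_lowerCorner_mul (shiftedDet_succ_ne_zero hx), hcorner, neg_one_pow_mul_self_mul]
  field_simp

lemma stepCoeff_pi_sub (θ : ℝ) (m : ℤ) : stepCoeff (π - θ) m = -((-1) ^ m * stepCoeff θ m) := by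
  rw [stepCoeff, stepCoeff]
  split_ifs with h
  · rw [h, zpow_zero]
    field_simp
    ring
  · rw [mul_sub, Real.sin_int_mul_pi_sub]
    ring

lemma stepDet_pi_sub (θ : ℝ) (N : ℕ) : stepDet (π - θ) N = (-1) ^ N * stepDet θ N := by
  have hmatrix : (of fun j k : Fin N => stepCoeff (π - θ) ((j : ℤ) - k)) =
      -of fun j k : Fin N => (-1 : ℝ) ^ (k : ℕ) *
        (of fun j k : Fin N => (-1 : ℝ) ^ (j : ℕ) *
          (of fun j k : Fin N => stepCoeff θ ((j : ℤ) - k)) j k) j k := by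
    ext j k
    have hsign : (-1 : ℝ) ^ ((j : ℤ) - k) = (-1) ^ (j : ℕ) * (-1) ^ (k : ℕ) := by
      rw [zpow_sub₀ (by norm_num), zpow_natCast, zpow_natCast, div_eq_mul_inv, ← inv_pow,
        inv_neg_one]
    simp only [of_apply, Matrix.neg_apply, stepCoeff_pi_sub, hsign]
    ring
  rw [stepDet, hmatrix, det_neg, det_mul_row, det_mul_column, Fintype.card_fin, stepDet,
    ← mul_assoc (∏ _, _), ← Finset.prod_mul_distrib]
  simp [← mul_pow]

lemma tendsto_stepDet_div (hb : b ∈ Set.Ioo 0 π) :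
    Tendsto (fun n : ℕ => (-1) ^ n * stepDet b n / shiftedDet (π / 2) (n + 1) -
      (√(Real.sin b))⁻¹ * Real.cos (n * b)) atTop (𝓝 0) := by
  rcases le_total (π / 2) b with h | h
  · exact tendsto_stepDet_div_of_mem_Ico ⟨h, hb.2⟩
  · have hrefl := tendsto_stepDet_div_of_mem_Ico (b := π - b) ⟨by linarith, by linarith [hb.1]⟩
    refine squeeze_zero_norm (fun n => le_of_eq ?_) (tendsto_zero_iff_norm_tendsto_zero.mp hrefl)
    have hflip : (-1) ^ n * stepDet (π - b) n / shiftedDet (π / 2) (n + 1) -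
        (√(Real.sin (π - b)))⁻¹ * Real.cos (n * (π - b)) = (-1) ^ n *
          ((-1) ^ n * stepDet b n / shiftedDet (π / 2) (n + 1) -
            (√(Real.sin b))⁻¹ * Real.cos (n * b)) := by
      rw [Real.sin_pi_sub, stepDet_pi_sub, mul_sub, Real.cos_nat_mul_pi_sub]
      ring
    rw [hflip, norm_mul, norm_pow, norm_neg, norm_one, one_pow, one_mul]

end LimitsAtFixedAngle

section EulerTransform

variable {K : Type*}

/-- The third difference `b n - 3 b (n + 1) + 3 b (n + 2) - b (n + 3)` of a sequence, with the sign
in which it occurs in the Euler transform of `∑ (-1)ⁿ b n`. -/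
def thirdDiff [Ring K] (b : ℕ → K) (n : ℕ) : K :=
  b n - 3 * b (n + 1) + 3 * b (n + 2) - b (n + 3)

/-- The boundary term of the alternating series `∑ (-1)ⁿ b n` after three Euler transformations:
`b n / 2 + (b n - b (n + 1)) / 4 + (b n - 2 b (n + 1) + b (n + 2)) / 8`. -/
def eulerMean [Field K] (b : ℕ → K) (n : ℕ) : K :=
  7 / 8 * b n - 1 / 2 * b (n + 1) + 1 / 8 * b (n + 2)

lemma eulerMean_add_eulerMean_succ [Field K] [CharZero K] (b : ℕ → K) (n : ℕ) :
    eulerMean b n + eulerMean b (n + 1) = b n - thirdDiff b n / 8 := by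
  simp only [eulerMean, thirdDiff]
  ring

lemma sum_neg_one_pow_mul_add_eulerMean [Field K] [CharZero K] (b : ℕ → K) (N : ℕ) :
    ∑ n ∈ Finset.range N, (-1) ^ n * b n + (-1) ^ N * eulerMean b N =
      eulerMean b 0 + ∑ n ∈ Finset.range N, (-1) ^ n * (thirdDiff b n / 8) := by
  induction N with
  | zero => simp
  | succ N ih =>
    rw [Finset.sum_range_succ, Finset.sum_range_succ, pow_succ]
    linear_combination ih - (-1) ^ N * eulerMean_add_eulerMean_succ b N

lemma tendsto_sum_neg_one_pow_mul_add_eulerMean [NormedField K] [CharZero K] {b : ℕ → K} {S : K}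
    (hS : HasSum (fun n => (-1) ^ n * (thirdDiff b n / 8)) S) :
    Tendsto (fun N => ∑ n ∈ Finset.range N, (-1) ^ n * b n + (-1) ^ N * eulerMean b N) atTop
      (𝓝 (eulerMean b 0 + S)) :=
  (hS.tendsto_sum_nat.const_add _).congr fun N => (sum_neg_one_pow_mul_add_eulerMean b N).symm

lemma tendsto_eulerMean_zero [NormedField K] {b : ℕ → K} (hb : Tendsto b atTop (𝓝 0)) :
    Tendsto (eulerMean b) atTop (𝓝 0) := by
  have hshift (k : ℕ) : Tendsto (fun n => b (n + k)) atTop (𝓝 0) :=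
    (tendsto_add_atTop_iff_nat k).mpr hb
  have hsum := ((hb.const_mul (7 / 8)).sub ((hshift 1).const_mul (1 / 2))).add
    ((hshift 2).const_mul (1 / 8))
  simp only [mul_zero, sub_zero, add_zero] at hsum
  exact hsum

lemma tsum_neg_one_pow_mul_eq_eulerMean_add [NormedField K] [CharZero K] [CompleteSpace K]
    {b : ℕ → K} {S : K} (hb : Summable fun n => ‖b n‖)
    (hS : HasSum (fun n => (-1) ^ n * (thirdDiff b n / 8)) S) :
    ∑' n, (-1) ^ n * b n = eulerMean b 0 + S := by
  have halternating : Summable fun n => (-1) ^ n * b n := .of_norm (hb.congr fun n => by simp)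
  have hboundary : Tendsto (fun N => (-1) ^ N * eulerMean b N) atTop (𝓝 0) := by
    rw [tendsto_zero_iff_norm_tendsto_zero]
    simpa using (tendsto_eulerMean_zero (tendsto_zero_iff_norm_tendsto_zero.mpr
      hb.tendsto_atTop_zero)).norm
  have hpartial := halternating.hasSum.tendsto_sum_nat.add hboundary
  rw [add_zero] at hpartial
  exact tendsto_nhds_unique hpartial (tendsto_sum_neg_one_pow_mul_add_eulerMean hS)

lemma hasDerivAt_eulerMean [NontriviallyNormedField K] {b : K → ℕ → K} {b' : ℕ → K} {s : K}
    (hb : ∀ n, HasDerivAt (fun s => b s n) (b' n) s) (n : ℕ) :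
    HasDerivAt (fun s => eulerMean (b s) n) (eulerMean b' n) s :=
  (((hb n).const_mul _).sub ((hb (n + 1)).const_mul _)).add ((hb (n + 2)).const_mul _)

lemma hasDerivAt_thirdDiff [NontriviallyNormedField K] {b : K → ℕ → K} {b' : ℕ → K} {s : K}
    (hb : ∀ n, HasDerivAt (fun s => b s n) (b' n) s) (n : ℕ) :
    HasDerivAt (fun s => thirdDiff (b s) n) (thirdDiff b' n) s :=
  (((hb n).sub ((hb (n + 1)).const_mul _)).add ((hb (n + 2)).const_mul _)).sub (hb (n + 3))

end EulerTransform

section ThirdDifferenceBound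

variable {E : Type*} [NormedAddCommGroup E] [NormedSpace ℝ E] {f f' f'' f''' : ℝ → E} {x C : ℝ}

lemma norm_sub_add_one_le_of_hasDerivAt (hf : ∀ y ≥ x, HasDerivAt f (f' y) y)
    (hbound : ∀ y ≥ x, ‖f' y‖ ≤ C) : ‖f x - f (x + 1)‖ ≤ C := by
  have hle := norm_image_sub_le_of_norm_deriv_le_segment' (f := f) (a := x) (b := x + 1)
    (fun y hy => (hf y hy.1).hasDerivWithinAt) (fun y hy => hbound y hy.1) (x + 1)
    (Set.right_mem_Icc.mpr (by linarith))
  rw [norm_sub_rev]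
  simpa using hle

lemma norm_third_difference_le_of_hasDerivAt (hf : ∀ y ≥ x, HasDerivAt f (f' y) y)
    (hf' : ∀ y ≥ x, HasDerivAt f' (f'' y) y) (hf'' : ∀ y ≥ x, HasDerivAt f'' (f''' y) y)
    (hbound : ∀ y ≥ x, ‖f''' y‖ ≤ C) :
    ‖f x - (3 : ℝ) • f (x + 1) + (3 : ℝ) • f (x + 2) - f (x + 3)‖ ≤ C := by
  have hdiff {g g' : ℝ → E} (hg : ∀ y ≥ x, HasDerivAt g (g' y) y) :
      ∀ y ≥ x, HasDerivAt (fun t => g t - g (t + 1)) (g' y - g' (y + 1)) y := fun y hy =>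
    (hg y hy).sub ((hg (y + 1) (by linarith)).comp_add_const y 1)
  have hfirst : ∀ y ≥ x, ‖f'' y - f'' (y + 1)‖ ≤ C := fun y hy =>
    norm_sub_add_one_le_of_hasDerivAt (fun t ht => hf'' t (hy.trans ht))
      fun t ht => hbound t (hy.trans ht)
  have hsecond : ∀ y ≥ x, ‖f' y - f' (y + 1) - (f' (y + 1) - f' (y + 1 + 1))‖ ≤ C := fun y hy =>
    norm_sub_add_one_le_of_hasDerivAt (fun t ht => hdiff hf' t (hy.trans ht))
      fun t ht => hfirst t (hy.trans ht)
  have hthird := norm_sub_add_one_le_of_hasDerivAt (hdiff (hdiff hf)) hsecond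
  refine le_trans (le_of_eq ?_) hthird
  rw [show x + 1 + 1 = x + 2 by ring, show x + 2 + 1 = x + 3 by ring]
  congr 1
  module

end ThirdDifferenceBound

section EtaFunction

/-- The sequence `(n + 1)⁻ˢ` of terms of the zeta series. -/
def zetaTerm (s : ℂ) (n : ℕ) : ℂ := (n + 1) ^ (-s)

lemma norm_thirdDiff_zetaTerm_le {s : ℂ} (hs : -3 ≤ s.re) (n : ℕ) :
    ‖thirdDiff (zetaTerm s) n‖ ≤ ‖s * (s + 1) * (s + 2)‖ * (n + 1 : ℝ) ^ (-s.re - 3) := by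
  have hpos {y : ℝ} (hy : y ≥ n + 1) : 0 < y := lt_of_lt_of_le (by positivity) hy
  have hpow (r : ℂ) {y : ℝ} (hy : y ≥ n + 1) :
      HasDerivAt (fun t : ℝ => (t : ℂ) ^ r) (r * (y : ℂ) ^ (r - 1)) y := by
    simpa using ((hasDerivAt_id (y : ℂ)).cpow_const (c := r)
      (Or.inl (by simpa using hpos hy))).comp_ofReal
  have hbound : ∀ y : ℝ, y ≥ n + 1 →
      ‖-s * ((-s - 1) * ((-s - 1 - 1) * (y : ℂ) ^ (-s - 1 - 1 - 1)))‖ ≤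
        ‖s * (s + 1) * (s + 2)‖ * (n + 1 : ℝ) ^ (-s.re - 3) := by
    intro y hy
    rw [show -s * ((-s - 1) * ((-s - 1 - 1) * (y : ℂ) ^ (-s - 1 - 1 - 1))) =
      -(s * (s + 1) * (s + 2) * (y : ℂ) ^ (-s - 3)) by ring_nf, norm_neg, norm_mul,
      norm_cpow_eq_rpow_re_of_pos (hpos hy)]
    gcongr
    exact Real.rpow_le_rpow_of_nonpos (by positivity) hy (by simp; linarith)
  have hdiff := norm_third_difference_le_of_hasDerivAt (fun y hy => hpow (-s) hy)
    (fun y hy => (hpow (-s - 1) hy).const_mul (-s))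
    (fun y hy => ((hpow (-s - 1 - 1) hy).const_mul (-s - 1)).const_mul (-s)) hbound
  convert! hdiff using 2
  simp only [thirdDiff, zetaTerm, real_smul]
  push_cast
  ring_nf

/-- A disc on which the Euler-transformed eta series converges uniformly. It contains both `-1` and
points of the half-plane `1 < re s`, where the series is compared with the zeta series. -/
def etaDisc : Set ℂ := Metric.ball 1 (5 / 2)

lemma isOpen_etaDisc : IsOpen etaDisc := Metric.isOpen_ball

lemma neg_one_mem_etaDisc : (-1 : ℂ) ∈ etaDisc := by
  simp only [etaDisc, Metric.mem_ball, dist_eq_norm]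
  norm_num

lemma norm_etaTerm_le {s : ℂ} (hs : s ∈ etaDisc) (n : ℕ) :
    ‖(-1) ^ n * (thirdDiff (zetaTerm s) n / 8)‖ ≤ 125 * ((n + 1 : ℕ) : ℝ) ^ (-(3 / 2) : ℝ) := by
  have hdist : ‖s - 1‖ ≤ 5 / 2 := (mem_ball_iff_norm.mp hs).le
  have hnorm (k : ℂ) : ‖s + k‖ ≤ 5 / 2 + ‖1 + k‖ :=
    calc ‖s + k‖ = ‖(s - 1) + (1 + k)‖ := by ring_nf
      _ ≤ 5 / 2 + ‖1 + k‖ := (norm_add_le _ _).trans (by gcongr)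
  have hre : -(3 / 2) ≤ s.re := by
    have := (abs_le.mp ((abs_re_le_norm (s - 1)).trans hdist)).1
    simp only [sub_re, one_re] at this
    linarith
  have hcubic : ‖s * (s + 1) * (s + 2)‖ ≤ 125 := by
    have hnorm_zero : ‖s‖ ≤ 7 / 2 := by simpa using (hnorm 0).trans (by norm_num)
    have hnorm_one : ‖s + 1‖ ≤ 9 / 2 := (hnorm 1).trans (by norm_num)
    have hnorm_two : ‖s + 2‖ ≤ 11 / 2 := (hnorm 2).trans (by norm_num)
    calc ‖s * (s + 1) * (s + 2)‖ ≤ 7 / 2 * (9 / 2) * (11 / 2) := by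
          rw [norm_mul, norm_mul]
          gcongr
      _ ≤ 125 := by norm_num
  calc ‖(-1) ^ n * (thirdDiff (zetaTerm s) n / 8)‖ ≤ ‖thirdDiff (zetaTerm s) n‖ := by
        simp only [norm_mul, norm_pow, norm_neg, norm_one, one_pow, one_mul, norm_div, norm_ofNat]
        exact div_le_self (norm_nonneg _) (by norm_num)
    _ ≤ 125 * (n + 1 : ℝ) ^ (-s.re - 3) :=
        (norm_thirdDiff_zetaTerm_le (by linarith) n).trans (by gcongr)
    _ ≤ 125 * ((n + 1 : ℕ) : ℝ) ^ (-(3 / 2) : ℝ) := by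
        push_cast
        gcongr <;> linarith [n.cast_nonneg (α := ℝ)]

lemma summable_etaTerm_bound :
    Summable fun n : ℕ => 125 * ((n + 1 : ℕ) : ℝ) ^ (-(3 / 2) : ℝ) :=
  ((summable_nat_add_iff 1).mpr (Real.summable_nat_rpow.mpr (by norm_num))).mul_left _

/-- The Dirichlet eta function `∑ (-1)ⁿ (n + 1)⁻ˢ`, continued to `etaDisc` by three Euler
transformations of its series. -/
def eulerEta (s : ℂ) : ℂ :=
  eulerMean (zetaTerm s) 0 + ∑' n, (-1) ^ n * (thirdDiff (zetaTerm s) n / 8)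

/-- The termwise derivative of `zetaTerm` in `s`. -/
def zetaTermDeriv (s : ℂ) (n : ℕ) : ℂ := -(Real.log (n + 1) : ℂ) * zetaTerm s n

lemma hasDerivAt_zetaTerm (s : ℂ) (n : ℕ) :
    HasDerivAt (fun s => zetaTerm s n) (zetaTermDeriv s n) s := by
  have hbase : (n : ℂ) + 1 ≠ 0 := by exact_mod_cast n.succ_ne_zero
  refine ((hasDerivAt_neg s).const_cpow (c := (n : ℂ) + 1) (Or.inl hbase)).congr_deriv ?_
  rw [zetaTermDeriv, zetaTerm, ofReal_log (by positivity)]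
  push_cast
  ring

lemma hasDerivAt_etaTerm (s : ℂ) (n : ℕ) :
    HasDerivAt (fun s => (-1) ^ n * (thirdDiff (zetaTerm s) n / 8))
      ((-1) ^ n * (thirdDiff (zetaTermDeriv s) n / 8)) s :=
  ((hasDerivAt_thirdDiff (hasDerivAt_zetaTerm s) n).div_const 8).const_mul _

lemma differentiableOn_tsum_etaTerm :
    DifferentiableOn ℂ (fun s => ∑' n, (-1) ^ n * (thirdDiff (zetaTerm s) n / 8)) etaDisc :=
  differentiableOn_tsum_of_summable_norm summable_etaTerm_bound
    (fun n s _ => (hasDerivAt_etaTerm s n).differentiableAt.differentiableWithinAt)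
    isOpen_etaDisc fun n _ hs => norm_etaTerm_le hs n

lemma differentiableOn_eulerEta : DifferentiableOn ℂ eulerEta etaDisc :=
  .add (fun s _ => (hasDerivAt_eulerMean (hasDerivAt_zetaTerm s)
    0).differentiableAt.differentiableWithinAt) differentiableOn_tsum_etaTerm

lemma hasSum_deriv_etaTerm {s : ℂ} (hs : s ∈ etaDisc) :
    HasSum (fun n => (-1) ^ n * (thirdDiff (zetaTermDeriv s) n / 8))
      (deriv eulerEta s - eulerMean (zetaTermDeriv s) 0) := by
  have hsum := hasSum_deriv_of_summable_norm summable_etaTerm_bound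
    (fun n s _ => (hasDerivAt_etaTerm s n).differentiableAt.differentiableWithinAt)
    isOpen_etaDisc (fun n _ hs => norm_etaTerm_le hs n) hs
  have hderiv := ((hasDerivAt_eulerMean (hasDerivAt_zetaTerm s) 0).add
    (differentiableOn_tsum_etaTerm.differentiableAt (isOpen_etaDisc.mem_nhds hs)).hasDerivAt).deriv
  rw [show deriv eulerEta s = _ from hderiv, add_sub_cancel_left]
  simpa only [(hasDerivAt_etaTerm s _).deriv] using hsum

lemma summable_norm_zetaTerm {s : ℂ} (hs : 1 < s.re) : Summable fun n => ‖zetaTerm s n‖ := by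
  refine ((summable_nat_add_iff 1).mpr (summable_one_div_nat_cpow.mpr hs)).norm.congr fun n => ?_
  rw [zetaTerm, cpow_neg, one_div]
  push_cast
  rfl

lemma eulerEta_eq_tsum {s : ℂ} (hs : 1 < s.re) (hdisc : s ∈ etaDisc) :
    eulerEta s = ∑' n, (-1) ^ n * zetaTerm s n :=
  (tsum_neg_one_pow_mul_eq_eulerMean_add (summable_norm_zetaTerm hs)
    (Summable.of_norm_bounded summable_etaTerm_bound (norm_etaTerm_le hdisc)).hasSum).symm

lemma tsum_neg_one_pow_mul_zetaTerm {s : ℂ} (hs : 1 < s.re) :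
    ∑' n, (-1) ^ n * zetaTerm s n = (1 - 2 ^ (1 - s)) * riemannZeta s := by
  have hzeta : riemannZeta s = ∑' n, zetaTerm s n := by
    rw [zeta_eq_tsum_one_div_nat_add_one_cpow hs]
    exact tsum_congr fun n => by rw [zetaTerm, cpow_neg, one_div]
  have hodd (k : ℕ) : zetaTerm s (2 * k + 1) = 2 ^ (-s) * zetaTerm s k := by
    have hfactor : ((2 * k + 1 : ℕ) : ℂ) + 1 = ((2 : ℕ) : ℂ) * ((k + 1 : ℕ) : ℂ) := by
      push_cast
      ring
    rw [zetaTerm, hfactor, natCast_mul_natCast_cpow, zetaTerm]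
    push_cast
    rfl
  have hsummable := (summable_norm_zetaTerm hs).of_norm
  have heven : Summable fun k => zetaTerm s (2 * k) :=
    hsummable.comp_injective (mul_right_injective₀ two_ne_zero)
  have hsplit : ∑' k, zetaTerm s (2 * k) + ∑' k, zetaTerm s (2 * k + 1) = riemannZeta s := by
    rw [hzeta]
    exact tsum_even_add_odd heven (by simpa only [hodd] using hsummable.mul_left _)
  have hsplit' : ∑' k, (-1) ^ (2 * k) * zetaTerm s (2 * k) +
      ∑' k, (-1) ^ (2 * k + 1) * zetaTerm s (2 * k + 1) = ∑' n, (-1) ^ n * zetaTerm s n := by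
    refine tsum_even_add_odd (f := fun n => (-1) ^ n * zetaTerm s n) ?_ ?_
    · simpa [pow_mul] using heven
    · simpa [pow_succ, pow_mul, hodd] using (hsummable.mul_left (2 ^ (-s))).neg
  simp only [hodd, pow_succ, pow_mul, pow_zero, mul_neg, mul_one, neg_mul, neg_neg, one_pow,
    one_mul, tsum_neg, tsum_mul_left, ← hzeta] at hsplit hsplit'
  rw [← hsplit', sub_eq_add_neg 1 s, cpow_add _ _ two_ne_zero, cpow_one]
  linear_combination hsplit

lemma eulerEta_eq {s : ℂ} (hs : s ∈ etaDisc) (hne : s ≠ 1) :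
    eulerEta s = (1 - 2 ^ (1 - s)) * riemannZeta s := by
  have hpow : Differentiable ℂ fun s : ℂ => (1 - 2 ^ (1 - s) : ℂ) := fun s =>
    ((differentiableAt_id.const_sub 1).const_cpow (Or.inl two_ne_zero)).const_sub 1
  have hleft : AnalyticOnNhd ℂ (fun s => (s - 1) * eulerEta s) etaDisc :=
    ((differentiable_id.sub_const 1).differentiableOn.mul
      differentiableOn_eulerEta).analyticOnNhd isOpen_etaDisc
  have hright : AnalyticOnNhd ℂ (fun s => (1 - 2 ^ (1 - s)) * riemannZeta₁ s) etaDisc :=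
    (hpow.mul differentiable_riemannZeta₁).differentiableOn.analyticOnNhd isOpen_etaDisc
  have htwo : (2 : ℂ) ∈ etaDisc := by
    simp only [etaDisc, Metric.mem_ball, dist_eq_norm]
    norm_num
  have hnear : (fun s => (s - 1) * eulerEta s) =ᶠ[𝓝 2]
      fun s => (1 - 2 ^ (1 - s)) * riemannZeta₁ s := by
    filter_upwards [isOpen_etaDisc.mem_nhds htwo,
      (isOpen_lt continuous_const continuous_re).mem_nhds (by simp : (1 : ℝ) < (2 : ℂ).re)]
      with t ht hre
    have ht_ne : t ≠ 1 := by
      rintro rfl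
      simp at hre
    rw [eulerEta_eq_tsum hre ht, tsum_neg_one_pow_mul_zetaTerm hre,
      riemannZeta_eq_inv_sub_mul ht_ne]
    field_simp [sub_ne_zero.mpr ht_ne]
  have heq : (s - 1) * eulerEta s = (1 - 2 ^ (1 - s)) * riemannZeta₁ s :=
    hleft.eqOn_of_preconnected_of_eventuallyEq hright
      (convex_ball (1 : ℂ) (5 / 2)).isPreconnected htwo hnear hs
  rw [riemannZeta_eq_inv_sub_mul hne, mul_left_comm, ← heq,
    inv_mul_cancel_left₀ (sub_ne_zero.mpr hne)]

lemma riemannZeta_neg_one : riemannZeta (-1) = -1 / 12 := by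
  have hbernoulli := riemannZeta_neg_nat_eq_bernoulli' 1
  norm_num [bernoulli'_two] at hbernoulli
  rw [hbernoulli]
  norm_num

lemma deriv_eulerEta_neg_one :
    deriv eulerEta (-1) = -(Real.log 2 : ℂ) / 3 - 3 * deriv riemannZeta (-1) := by
  have hzeta := (differentiableAt_riemannZeta (s := -1) (by norm_num)).hasDerivAt
  have hfour : (2 : ℂ) ^ (1 - (-1) : ℂ) = 4 := by
    rw [show (1 - (-1) : ℂ) = (2 : ℕ) by norm_num, cpow_natCast]
    norm_num
  have hfactor : HasDerivAt (fun s : ℂ => (1 - 2 ^ (1 - s) : ℂ)) (4 * (Real.log 2 : ℂ)) (-1) := by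
    refine ((((hasDerivAt_id (-1 : ℂ)).const_sub 1).const_cpow (c := 2)
      (Or.inl two_ne_zero)).const_sub 1).congr_deriv ?_
    rw [id, hfour, ofReal_log (by norm_num)]
    push_cast
    ring
  have hnear : eulerEta =ᶠ[𝓝 (-1)] fun s => (1 - 2 ^ (1 - s)) * riemannZeta s := by
    filter_upwards [isOpen_etaDisc.mem_nhds neg_one_mem_etaDisc,
      isOpen_ne.mem_nhds (by norm_num : (-1 : ℂ) ≠ 1)] with s hs hne using eulerEta_eq hs hne
  rw [((hfactor.mul hzeta).congr_of_eventuallyEq hnear).deriv, riemannZeta_neg_one, hfour]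
  ring

lemma im_deriv_riemannZeta_ofReal (x : ℝ) : (deriv riemannZeta x).im = 0 := by
  have hconj : conj ∘ riemannZeta ∘ conj = riemannZeta := funext fun s => by
    simp [riemannZeta_conj]
  have hderiv := congrFun (deriv_conj_conj (f := riemannZeta)) (x : ℂ)
  rw [hconj] at hderiv
  exact conj_eq_iff_im.mp (by simpa using hderiv.symm)

/-- The sequence `(n + 1) log (n + 1)`, whose regularized alternating sum carries `ζ'(-1)`. -/
def mulLog (n : ℕ) : ℝ := (n + 1) * Real.log (n + 1)

lemma tendsto_sum_neg_one_pow_mul_mulLog :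
    Tendsto (fun N => ∑ n ∈ Finset.range N, (-1) ^ n * mulLog n + (-1) ^ N * eulerMean mulLog N)
      atTop (𝓝 (Real.log 2 / 3 + 3 * (deriv riemannZeta (-1)).re)) := by
  have hterm (n : ℕ) : zetaTermDeriv (-1) n = (-mulLog n : ℝ) := by
    rw [zetaTermDeriv, zetaTerm, mulLog, neg_neg, cpow_one]
    push_cast
    ring
  have hmean : eulerMean (zetaTermDeriv (-1)) 0 = (-eulerMean mulLog 0 : ℝ) := by
    simp only [eulerMean, hterm]
    push_cast
    ring
  have hdiff (n : ℕ) : (-1) ^ n * (thirdDiff (zetaTermDeriv (-1)) n / 8) =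
      (-((-1) ^ n * (thirdDiff mulLog n / 8)) : ℝ) := by
    simp only [thirdDiff, hterm]
    push_cast
    ring
  have hsum := hasSum_deriv_etaTerm neg_one_mem_etaDisc
  simp only [hdiff, hmean, deriv_eulerEta_neg_one] at hsum
  have hreal : HasSum (fun n => (-1) ^ n * (thirdDiff mulLog n / 8))
      (Real.log 2 / 3 + 3 * (deriv riemannZeta (-1)).re - eulerMean mulLog 0) := by
    generalize Real.log 2 = ℓ at hsum ⊢
    convert! (hasSum_re hsum).neg using 1
    · simp only [ofReal_re, neg_neg]
    · simp
      ring
  simpa using tendsto_sum_neg_one_pow_mul_add_eulerMean hreal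

end EtaFunction

section WallisAsymptotics

lemma log_wallis_succ (k : ℕ) : Real.log (Real.Wallis.W (k + 1)) =
    Real.log (Real.Wallis.W k) + 2 * Real.log (2 * k + 2) - Real.log (2 * k + 1) -
      Real.log (2 * k + 3) := by
  rw [Real.Wallis.W_succ, Real.log_mul (Real.Wallis.W_pos k).ne' (by positivity),
    Real.log_mul (by positivity) (by positivity), Real.log_div (by positivity) (by positivity),
    Real.log_div (by positivity) (by positivity)]
  ring

lemma log_wallis_succ_sub (k : ℕ) :
    Real.log (Real.Wallis.W (k + 1)) - Real.log (Real.Wallis.W k) =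
      Real.log ((2 * k + 2) ^ 2 / ((2 * k + 1) * (2 * k + 3))) := by
  rw [log_wallis_succ, Real.log_div (by positivity) (by positivity),
    Real.log_mul (by positivity) (by positivity), Real.log_pow]
  push_cast
  ring

lemma tendsto_log_wallis :
    Tendsto (fun k => Real.log (Real.Wallis.W k)) atTop (𝓝 (Real.log (π / 2))) :=
  Real.Wallis.tendsto_W_nhds_pi_div_two.log (by positivity)

lemma tendsto_inv_mul_add {a : ℝ} (ha : 0 < a) (b : ℝ) :
    Tendsto (fun k : ℕ => (a * k + b)⁻¹) atTop (𝓝 0) :=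
  (tendsto_atTop_add_const_right _ _
    (tendsto_natCast_atTop_atTop.const_mul_atTop ha)).inv_tendsto_atTop

lemma log_pi_div_two_sub_log_wallis_le (k : ℕ) :
    Real.log (π / 2) - Real.log (Real.Wallis.W k) ≤ (4 * (k : ℝ) + 2)⁻¹ := by
  have hanti : Antitone fun k : ℕ => Real.log (Real.Wallis.W k) + (4 * (k : ℝ) + 2)⁻¹ := by
    refine antitone_nat_of_succ_le fun n => ?_
    have hlog := Real.log_le_sub_one_of_pos
      (by positivity : (0 : ℝ) < (2 * n + 2) ^ 2 / ((2 * n + 1) * (2 * n + 3)))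
    have htelescope : (2 * n + 2) ^ 2 / ((2 * n + 1) * (2 * n + 3)) - 1 =
        (4 * n + 2 : ℝ)⁻¹ - (4 * (n + 1) + 2 : ℝ)⁻¹ := by
      field_simp
      ring
    push_cast
    linarith [log_wallis_succ_sub n]
  have hle := hanti.le_of_tendsto (tendsto_log_wallis.add (tendsto_inv_mul_add (by norm_num) 2)) k
  linarith

lemma le_log_pi_div_two_sub_log_wallis (k : ℕ) :
    (4 * (k : ℝ) + 4)⁻¹ ≤ Real.log (π / 2) - Real.log (Real.Wallis.W k) := by
  have hmono : Monotone fun k : ℕ => Real.log (Real.Wallis.W k) + (4 * (k : ℝ) + 4)⁻¹ := by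
    refine monotone_nat_of_le_succ fun n => ?_
    have hlog := Real.one_sub_inv_le_log_of_pos
      (by positivity : (0 : ℝ) < (2 * n + 2) ^ 2 / ((2 * n + 1) * (2 * n + 3)))
    have hvalue : 1 - ((2 * n + 2) ^ 2 / ((2 * n + 1) * (2 * n + 3)) : ℝ)⁻¹ =
        (4 * (n + 1) * (n + 1) : ℝ)⁻¹ := by
      field_simp
      ring
    have htelescope : (4 * n + 4 : ℝ)⁻¹ - (4 * (n + 1) + 4 : ℝ)⁻¹ =
        (4 * (n + 1) * (n + 2) : ℝ)⁻¹ := by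
      field_simp
      ring
    have hcompare : (4 * (n + 1) * (n + 2) : ℝ)⁻¹ ≤ (4 * (n + 1) * (n + 1) : ℝ)⁻¹ := by
      gcongr
      norm_num
    push_cast
    linarith [log_wallis_succ_sub n]
  have hle := hmono.ge_of_tendsto (tendsto_log_wallis.add (tendsto_inv_mul_add (by norm_num) 4)) k
  linarith

lemma tendsto_mul_log_wallis_sub :
    Tendsto (fun k : ℕ => k * (Real.log (Real.Wallis.W k) - Real.log (π / 2))) atTop
      (𝓝 (-(1 / 4))) := by
  have hlimit (b : ℝ) : Tendsto (fun k : ℕ => -((k : ℝ) / (4 * k + b))) atTop (𝓝 (-(1 / 4))) := by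
    have hratio := (tendsto_natCast_div_add_atTop (b / 4 : ℝ)).const_mul (-(1 / 4))
    rw [mul_one] at hratio
    refine hratio.congr fun k => ?_
    rw [show (4 * k + b : ℝ) = 4 * (k + b / 4) by ring, div_mul_eq_div_div_swap]
    ring
  refine tendsto_of_tendsto_of_tendsto_of_le_of_le (hlimit 2) (hlimit 4) (fun k => ?_) (fun k => ?_)
  · have hle := mul_le_mul_of_nonneg_left (log_pi_div_two_sub_log_wallis_le k) k.cast_nonneg
    rw [← div_eq_mul_inv] at hle
    dsimp only
    linarith
  · have hle := mul_le_mul_of_nonneg_left (le_log_pi_div_two_sub_log_wallis k) k.cast_nonneg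
    rw [← div_eq_mul_inv] at hle
    dsimp only
    linarith

lemma tendsto_mul_log_add_one_sub_log :
    Tendsto (fun n : ℕ => n * (Real.log (n + 1) - Real.log n)) atTop (𝓝 1) := by
  refine ((Real.tendsto_mul_log_one_add_div_atTop 1).comp tendsto_natCast_atTop_atTop).congr' ?_
  filter_upwards [eventually_gt_atTop 0] with n hn
  have : (n : ℝ) ≠ 0 := by exact_mod_cast hn.ne'
  rw [Function.comp_apply, ← Real.log_div (by positivity) this, add_div, div_self this]

lemma tendsto_eulerMean_mulLog :
    Tendsto (fun n => eulerMean mulLog n - (mulLog n / 2 - Real.log (n + 1) / 4)) atTop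
      (𝓝 (-(1 / 4))) := by
  have hmul (k : ℕ) := (tendsto_add_atTop_iff_nat k).mpr tendsto_mul_log_add_one_sub_log
  have hlog (k : ℕ) := (tendsto_add_atTop_iff_nat k).mpr Real.tendsto_log_nat_add_one_sub_log
  have hsum := ((((hmul 1).const_mul (-(3 / 8))).add ((hmul 2).const_mul (1 / 8))).add
    ((hlog 1).const_mul (-(1 / 4)))).add ((hlog 2).const_mul (1 / 8))
  rw [show -(3 / 8) * 1 + 1 / 8 * 1 + -(1 / 4) * 0 + 1 / 8 * 0 = -(1 / 4 : ℝ) by norm_num] at hsum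
  refine hsum.congr fun n => ?_
  simp only [eulerMean, mulLog]
  push_cast
  rw [show (n + 1 + 1 : ℝ) = n + 2 by ring, show (n + 2 + 1 : ℝ) = n + 3 by ring]
  ring

/-- The product `∏_{i < k} (2 / π) Wᵢ` of normalized partial Wallis products; `shiftedDet (π / 2) n`
is the product of two of them. -/
def wallisProd (k : ℕ) : ℝ := ∏ i ∈ Finset.range k, 2 / π * Real.Wallis.W i

lemma wallisProd_pos (k : ℕ) : 0 < wallisProd k :=
  Finset.prod_pos fun i _ => mul_pos (by positivity) (Real.Wallis.W_pos i)

lemma wallisProd_succ (k : ℕ) : wallisProd (k + 1) = wallisProd k * (2 / π * Real.Wallis.W k) :=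
  Finset.prod_range_succ _ k

lemma shiftedDet_pi_div_two_eq_wallisProd_mul (n : ℕ) :
    shiftedDet (π / 2) n = wallisProd (n / 2) * wallisProd ((n + 1) / 2) := by
  rw [shiftedDet_pi_div_two]
  induction n with
  | zero => simp [wallisProd]
  | succ n ih =>
    rw [Finset.prod_range_succ, ih, show (n + 1 + 1) / 2 = n / 2 + 1 by omega, wallisProd_succ]
    ring

lemma log_wallisProd (k : ℕ) : Real.log (wallisProd k) =
    k * (Real.log (Real.Wallis.W k) - Real.log (π / 2)) + k * Real.log (2 * k + 1) +
      ∑ n ∈ Finset.range (2 * k), (-1) ^ n * mulLog n := by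
  induction k with
  | zero => simp [wallisProd]
  | succ k ih =>
    have hlog_two : Real.log (2 / π) = -Real.log (π / 2) := by rw [← Real.log_inv, inv_div]
    rw [wallisProd_succ, Real.log_mul (wallisProd_pos k).ne'
      (mul_pos (by positivity) (Real.Wallis.W_pos k)).ne', Real.log_mul (by positivity)
      (Real.Wallis.W_pos k).ne', ih, hlog_two, log_wallis_succ, show 2 * (k + 1) = 2 * k + 1 + 1
      from rfl, Finset.sum_range_succ, Finset.sum_range_succ]
    simp only [mulLog, pow_succ, pow_mul]
    push_cast
    rw [show (2 * (k + 1) + 1 : ℝ) = 2 * k + 3 by ring,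
      show (2 * k + 1 + 1 : ℝ) = 2 * k + 2 by ring]
    norm_num
    ring

lemma tendsto_log_wallisProd_add :
    Tendsto (fun k : ℕ => Real.log (wallisProd k) + Real.log (2 * k + 1) / 4) atTop
      (𝓝 (Real.log 2 / 3 + 3 * (deriv riemannZeta (-1)).re)) := by
  have hdouble : Tendsto (fun k : ℕ => 2 * k) atTop atTop := tendsto_id.const_mul_atTop' two_pos
  have hsum := (tendsto_mul_log_wallis_sub.add
    (tendsto_sum_neg_one_pow_mul_mulLog.comp hdouble)).sub (tendsto_eulerMean_mulLog.comp hdouble)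
  rw [add_sub_right_comm, sub_self, zero_add] at hsum
  refine hsum.congr fun k => ?_
  simp only [log_wallisProd, Function.comp_apply, pow_mul, mulLog]
  push_cast
  norm_num
  ring

lemma tendsto_log_two_mul_half_add_one_sub_log :
    Tendsto (fun n : ℕ => Real.log (2 * (n / 2 : ℕ) + 1) - Real.log n) atTop (𝓝 0) := by
  refine tendsto_of_tendsto_of_tendsto_of_le_of_le' tendsto_const_nhds
    Real.tendsto_log_nat_add_one_sub_log ?_ (Eventually.of_forall fun n => ?_)
  · filter_upwards [eventually_gt_atTop 0] with n hn
    have : (n : ℝ) ≤ 2 * (n / 2 : ℕ) + 1 := by exact_mod_cast (by omega : n ≤ 2 * (n / 2) + 1)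
    have : (0 : ℝ) < n := by exact_mod_cast hn
    exact sub_nonneg.mpr (by gcongr)
  · have : (2 * (n / 2 : ℕ) : ℝ) ≤ n := by exact_mod_cast (by omega : 2 * (n / 2) ≤ n)
    gcongr

lemma tendsto_log_shiftedDet_pi_div_two_add :
    Tendsto (fun n : ℕ => Real.log (shiftedDet (π / 2) n) + Real.log n / 2) atTop
      (𝓝 (2 / 3 * Real.log 2 + 6 * (deriv riemannZeta (-1)).re)) := by
  have hhalf : Tendsto (fun n : ℕ => n / 2) atTop atTop :=
    Nat.tendsto_div_const_atTop two_ne_zero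
  have hshift := tendsto_add_atTop_nat 1
  have hprod := tendsto_log_wallisProd_add.comp hhalf
  have hround := tendsto_log_two_mul_half_add_one_sub_log.div_const 4
  have hsum := (((hprod.add (hprod.comp hshift)).sub hround).sub (hround.comp hshift)).sub
    (Real.tendsto_log_nat_add_one_sub_log.div_const 4)
  convert! hsum using 2 with n
  · rw [shiftedDet_pi_div_two_eq_wallisProd_mul,
      Real.log_mul (wallisProd_pos _).ne' (wallisProd_pos _).ne']
    simp only [Function.comp_apply]
    push_cast
    ring
  · ring

lemma tendsto_sqrt_mul_shiftedDet_pi_div_two :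
    Tendsto (fun n : ℕ => √n * shiftedDet (π / 2) (n + 1)) atTop
      (𝓝 ((2 : ℝ) ^ (2 / 3 : ℝ) * Real.exp (6 * (deriv riemannZeta (-1)).re))) := by
  have hlog := (tendsto_log_shiftedDet_pi_div_two_add.comp (tendsto_add_atTop_nat 1)).sub
    (Real.tendsto_log_nat_add_one_sub_log.div_const 2)
  rw [zero_div, sub_zero] at hlog
  rw [Real.rpow_def_of_pos two_pos, ← Real.exp_add, mul_comm (Real.log 2)]
  refine ((Real.continuous_exp.tendsto _).comp hlog).congr' ?_
  filter_upwards [eventually_gt_atTop 0] with n hn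
  have hn' : (0 : ℝ) < n := by exact_mod_cast hn
  have hexponent : Real.log (shiftedDet (π / 2) (n + 1)) + Real.log (n + 1 : ℕ) / 2 -
      (Real.log (n + 1) - Real.log n) / 2 =
        Real.log √n + Real.log (shiftedDet (π / 2) (n + 1)) := by
    rw [Real.log_sqrt hn'.le]
    push_cast
    ring
  simp only [Function.comp_apply]
  rw [hexponent, Real.exp_add, Real.exp_log (Real.sqrt_pos.mpr hn'),
    Real.exp_log (shiftedDet_pi_div_two_pos _)]

lemma tendsto_sqrt_mul_stepDet {b : ℝ} (hb : b ∈ Set.Ioo 0 π) :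
    Tendsto (fun n : ℕ => √n * ((-1) ^ n * stepDet b n) -
      2 ^ (2 / 3 : ℝ) * Real.exp (6 * (deriv riemannZeta (-1)).re) *
        ((√(Real.sin b))⁻¹ * Real.cos (n * b))) atTop (𝓝 0) := by
  refine (tendsto_mul_sub_mul_of_bounded tendsto_sqrt_mul_shiftedDet_pi_div_two
    (tendsto_stepDet_div hb) (.const_mul_left (.of_bound 1 ?_) _)).congr fun n => ?_
  · exact Eventually.of_forall fun n => by simpa using Real.abs_cos_le_one (n * b)
  · have := (shiftedDet_pi_div_two_pos (n + 1)).ne'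
    field_simp

end WallisAsymptotics

section FourierCoefficients

variable {f : ℝ → ℝ} {g : ℝ → ℂ} {θ : ℝ}

lemma eqOn_const_mul_ofReal_mul {a b c : ℝ} (hf : ∀ t ∈ Set.Ioo a b, f t = c) (g : ℝ → ℂ) :
    Set.EqOn (fun t => (c : ℂ) * g t) (fun t => (f t : ℂ) * g t) (Set.Ioo a b) := fun t ht => by
  simp only [hf t ht]

lemma intervalIntegrable_ofReal_mul {a b c : ℝ} (hab : a ≤ b) (hf : ∀ t ∈ Set.Ioo a b, f t = c)
    (hg : Continuous g) :
    IntervalIntegrable (fun t => (f t : ℂ) * g t) MeasureTheory.volume a b := by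
  have hconst : IntervalIntegrable (fun t => (c : ℂ) * g t) MeasureTheory.volume a b :=
    (continuous_const.mul hg).intervalIntegrable a b
  rw [intervalIntegrable_iff_integrableOn_Ioo_of_le hab] at hconst ⊢
  exact hconst.congr_fun (eqOn_const_mul_ofReal_mul hf g) measurableSet_Ioo

lemma integral_ofReal_mul {a b c : ℝ} (hab : a ≤ b) (hf : ∀ t ∈ Set.Ioo a b, f t = c) (g : ℝ → ℂ) :
    ∫ t in a..b, (f t : ℂ) * g t = c * ∫ t in a..b, g t := by
  rw [← intervalIntegral.integral_const_mul]
  exact (intervalIntegral.integral_congr_Ioo_of_le hab (eqOn_const_mul_ofReal_mul hf g)).symm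

lemma integral_step_mul (hθ : 0 < θ) (hθ' : θ < π) (hper : ∀ t, f (t + 2 * π) = f t)
    (heven : ∀ t, f (-t) = f t) (hplus : ∀ t, 0 ≤ t → t < θ → f t = 1)
    (hminus : ∀ t, θ < t → t ≤ π → f t = -1) (hg : Continuous g) :
    ∫ t in (0 : ℝ)..2 * π, (f t : ℂ) * g t =
      (∫ t in (0 : ℝ)..θ, g t) - (∫ t in θ..2 * π - θ, g t) + ∫ t in (2 * π - θ)..2 * π, g t := by
  have hreflect (t : ℝ) : f (2 * π - t) = f t := by
    rw [← heven t, ← hper (-t), neg_add_eq_sub]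
  have hfirst : ∀ t ∈ Set.Ioo 0 θ, f t = 1 := fun t ht => hplus t ht.1.le ht.2
  have hmiddle : ∀ t ∈ Set.Ioo θ (2 * π - θ), f t = -1 := fun t ht => by
    rcases le_total t π with htπ | htπ
    · exact hminus t ht.1 htπ
    · exact hreflect t ▸ hminus _ (by linarith [ht.2]) (by linarith)
  have hlast : ∀ t ∈ Set.Ioo (2 * π - θ) (2 * π), f t = 1 := fun t ht =>
    hreflect t ▸ hplus _ (by linarith [ht.2]) (by linarith [ht.1])
  have hle : θ ≤ 2 * π - θ := by linarith
  have hle' : 2 * π - θ ≤ 2 * π := by linarith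
  have hfirst_int := intervalIntegrable_ofReal_mul hθ.le hfirst hg
  have hmiddle_int := intervalIntegrable_ofReal_mul hle hmiddle hg
  rw [← intervalIntegral.integral_add_adjacent_intervals (hfirst_int.trans hmiddle_int)
    (intervalIntegrable_ofReal_mul hle' hlast hg),
    ← intervalIntegral.integral_add_adjacent_intervals hfirst_int hmiddle_int,
    integral_ofReal_mul hθ.le hfirst, integral_ofReal_mul hle hmiddle,
    integral_ofReal_mul hle' hlast]
  push_cast
  ring

lemma integral_exp_neg_I_mul {m : ℤ} (hm : m ≠ 0) (a b : ℝ) :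
    ∫ t in a..b, exp (-I * m * t) = I / m * (exp (-(m * b * I)) - exp (-(m * a * I))) := by
  have hm' : (m : ℂ) ≠ 0 := by exact_mod_cast hm
  rw [integral_exp_mul_complex (mul_ne_zero (neg_ne_zero.mpr I_ne_zero) hm'),
    div_eq_iff (by simp [hm'])]
  field_simp
  rw [I_sq]
  ring_nf

lemma fourierCoef_eq_stepCoeff (hθ : 0 < θ) (hθ' : θ < π) (hper : ∀ t, f (t + 2 * π) = f t)
    (heven : ∀ t, f (-t) = f t) (hplus : ∀ t, 0 ≤ t → t < θ → f t = 1)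
    (hminus : ∀ t, θ < t → t ≤ π → f t = -1) (m : ℤ) :
    fourierCoef f m = stepCoeff θ m := by
  have hπ : (π : ℂ) ≠ 0 := ofReal_ne_zero.mpr Real.pi_ne_zero
  rw [fourierCoef, integral_step_mul hθ hθ' hper heven hplus hminus (by fun_prop), stepCoeff]
  split_ifs with hm
  · simp only [hm, Int.cast_zero, mul_zero, zero_mul, exp_zero, intervalIntegral.integral_const,
      real_smul, mul_one]
    push_cast
    field_simp
    ring
  · have hm' : (m : ℂ) ≠ 0 := by exact_mod_cast hm
    have hperiod : exp (-(m * (2 * π : ℝ) * I)) = 1 := by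
      rw [← exp_int_mul_two_pi_mul_I (-m)]
      push_cast
      ring_nf
    have hshift : exp (-(m * (2 * π - θ : ℝ) * I)) = exp (m * θ * I) := by
      rw [← one_mul (exp (m * θ * I)), ← hperiod, ← exp_add]
      push_cast
      ring_nf
    simp only [integral_exp_neg_I_mul hm, hperiod, hshift]
    push_cast
    rw [Complex.sin, mul_zero, zero_mul, neg_zero, exp_zero, neg_mul]
    field_simp
    ring

lemma det_ofReal_stepCoeff (θ : ℝ) (N : ℕ) :
    (of fun j k : Fin N => (stepCoeff θ ((j : ℤ) - k) : ℂ)).det = stepDet θ N :=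
  (RingHom.map_det ofRealHom _).symm

end FourierCoefficients

lemma rpow_neg_one_div_two {x : ℝ} (hx : 0 ≤ x) : x ^ (-1 / 2 : ℝ) = (√x)⁻¹ := by
  rw [neg_div, Real.rpow_neg hx, ← Real.sqrt_eq_rpow]

lemma stepDet_sub_isLittleO {b : ℝ} (hb : b ∈ Set.Ioo 0 π) :
    (fun n : ℕ => stepDet b n - (-1) ^ n * (n : ℝ) ^ (-1 / 2 : ℝ) *
      ((2 : ℝ) ^ (1 / 6 : ℝ) * Real.exp (6 * (deriv riemannZeta (-1)).re)) *
        (2 * Real.sin b) ^ (-1 / 2 : ℝ) * (2 * Real.cos (n * b)))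
      =o[atTop] fun n : ℕ => (n : ℝ) ^ (-1 / 2 : ℝ) := by
  have hsin := Real.sin_pos_of_mem_Ioo hb
  have hpow : (2 : ℝ) ^ (2 / 3 : ℝ) = 2 ^ (1 / 6 : ℝ) * 2 ^ (-1 / 2 : ℝ) * 2 := by
    rw [← Real.rpow_add two_pos, ← Real.rpow_add_one two_ne_zero]
    norm_num
  have hlimit := (Asymptotics.isLittleO_one_iff ℝ).mpr (tendsto_sqrt_mul_stepDet hb)
  have hsign : (fun n : ℕ => (-1 : ℝ) ^ n * (n : ℝ) ^ (-1 / 2 : ℝ)) =O[atTop]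
      fun n => (n : ℝ) ^ (-1 / 2 : ℝ) := .of_bound 1 (Eventually.of_forall fun n => by simp)
  refine (hsign.mul_isLittleO hlimit).congr' ?_ (.of_eq (by simp))
  filter_upwards [eventually_gt_atTop 0] with n hn
  have hsqrt : √(n : ℝ) ≠ 0 := by positivity
  rw [Real.mul_rpow two_pos.le hsin.le, rpow_neg_one_div_two n.cast_nonneg,
    rpow_neg_one_div_two hsin.le, hpow, mul_sub]
  congr 1
  · linear_combination (norm := (field_simp; ring)) neg_one_pow_mul_self_mul n (stepDet b n)
  · ring

lemma two_cpow_mul_exp_deriv_riemannZeta :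
    (2 : ℂ) ^ ((1 : ℂ) / 6) * exp (6 * deriv riemannZeta (-1)) =
      ((2 : ℝ) ^ (1 / 6 : ℝ) * Real.exp (6 * (deriv riemannZeta (-1)).re) : ℝ) := by
  have hzeta : deriv riemannZeta (-1) = (deriv riemannZeta (-1)).re :=
    Complex.ext rfl (by simpa using im_deriv_riemannZeta_ofReal (-1))
  rw [hzeta]
  push_cast [ofReal_cpow zero_le_two]
  rfl

end StepToeplitz

/-- Let `0 < θ_1 < π` and let `f` be the even, 2π-periodic function equal to `+1` on
`[0, θ_1)` and `−1` on `(θ_1, π]`.  Then, as `N → ∞`,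
`det(f_{j−k})_{j,k=0}^{N−1}
  = (−1)^N N^{−1/2} 2^{1/6} e^{6ζ′(−1)} (2 sin θ_1)^{−1/2} · 2cos(Nθ_1) + o(N^{−1/2})`. -/
theorem XX_sigmaZ_string_asymptotics (θ1 : ℝ) (hθ1 : 0 < θ1) (hθ1' : θ1 < Real.pi)
    (f : ℝ → ℝ) (hper : ∀ t, f (t + 2 * Real.pi) = f t) (heven : ∀ t, f (-t) = f t)
    (hplus : ∀ t, 0 ≤ t → t < θ1 → f t = 1)
    (hminus : ∀ t, θ1 < t → t ≤ Real.pi → f t = -1) :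
    (fun N : ℕ =>
        Matrix.det (Matrix.of fun j k : Fin N => fourierCoef f ((j : ℤ) - (k : ℤ)))
      - (-1 : ℂ) ^ N * (((N : ℝ) ^ (-(1 : ℝ) / 2) : ℝ) : ℂ)
          * ((2 : ℂ) ^ ((1 : ℂ) / 6) * Complex.exp (6 * deriv riemannZeta (-1)))
          * (((2 * Real.sin θ1) ^ (-(1 : ℝ) / 2) : ℝ) : ℂ)
          * ((2 * Real.cos ((N : ℝ) * θ1) : ℝ) : ℂ))
      =o[Filter.atTop] (fun N : ℕ => ((N : ℝ) ^ (-(1 : ℝ) / 2) : ℝ)) := by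
  have hreal := StepToeplitz.stepDet_sub_isLittleO ⟨hθ1, hθ1'⟩
  refine (Complex.isLittleO_ofReal_left.mpr hreal).congr_left fun N => ?_
  simp only [StepToeplitz.fourierCoef_eq_stepCoeff hθ1 hθ1' hper heven hplus hminus,
    StepToeplitz.det_ofReal_stepCoeff, StepToeplitz.two_cpow_mul_exp_deriv_riemannZeta]
  push_cast
  ring

end
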